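/- Let R be a commutative ring. The assignments sending a compactly generated localizing subcategory Loc(S) of D(R) to the union of the Zariski closed sets V(I) over all finitely generated ideals I with R/I ∈ Loc(S), and sending a Hochster open set U ⊆ Spec R to Loc({K(I) : I a finitely generated ideal with V(I) ⊆ U}), are mutually inverse, inclusion-preserving bijections between the set of compactly generated localizing subcategories of D(R) and the set of Hochster open subsets of Spec R. -/

import Mathlib

open CategoryTheory CategoryTheory.Limits CategoryTheory.Pretriangulated ZeroObject

universe w w' v u

section TriangulatedDefs

variable {T : Type u} [Category.{v} T] [Preadditive T] [HasZeroObject T]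
  [HasShift T ℤ] [∀ n : ℤ, (shiftFunctor T n).Additive] [Pretriangulated T]

/-- A localizing subcategory of a (pre)triangulated category, encoded as a set of
objects: it is closed under isomorphisms, contains the zero object, is stable
under shifts, closed under cones of distinguished triangles (hence a full
triangulated subcategory), and closed under arbitrary small coproducts
(phrased via colimit cofans, so that no global existence of coproducts
is needed). -/
structure IsLocalizingSub (S : Set T) : Prop where
  zero_mem : (0 : T) ∈ S
  mem_of_iso : ∀ {x y : T}, (x ≅ y) → x ∈ S → y ∈ S
  shift_mem : ∀ (n : ℤ) {x : T}, x ∈ S → x⟦n⟧ ∈ S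
  cone_mem : ∀ (Tr : Triangle T), Tr ∈ distinguishedTriangles →
    Tr.obj₁ ∈ S → Tr.obj₂ ∈ S → Tr.obj₃ ∈ S
  coprod_mem : ∀ {ι : Type w} (f : ι → T) (c : Cofan f), IsColimit c →
    (∀ i, f i ∈ S) → c.pt ∈ S

/-- A colocalizing subcategory: as `IsLocalizingSub` but with products instead
of coproducts. -/
structure IsColocalizingSub (S : Set T) : Prop where
  zero_mem : (0 : T) ∈ S
  mem_of_iso : ∀ {x y : T}, (x ≅ y) → x ∈ S → y ∈ S
  shift_mem : ∀ (n : ℤ) {x : T}, x ∈ S → x⟦n⟧ ∈ S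
  cone_mem : ∀ (Tr : Triangle T), Tr ∈ distinguishedTriangles →
    Tr.obj₁ ∈ S → Tr.obj₂ ∈ S → Tr.obj₃ ∈ S
  prod_mem : ∀ {ι : Type w} (f : ι → T) (c : Fan f), IsLimit c →
    (∀ i, f i ∈ S) → c.pt ∈ S

/-- `Loc S`: the smallest localizing subcategory containing the set of
objects `S` (the intersection of all localizing subcategories containing it). -/
def Loc (S : Set T) : Set T :=
  ⋂₀ {L : Set T | IsLocalizingSub.{w} L ∧ S ⊆ L}

/-- The right orthogonal of a set of objects. -/
def rightOrth (C : Set T) : Set T :=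
  {x : T | ∀ ⦃c : T⦄, c ∈ C → ∀ (g : c ⟶ x), g = 0}

end TriangulatedDefs

section CompactDefs

variable {T : Type u} [Category.{v} T] [Preadditive T]

/-- The canonical comparison map `⨁ᵢ Hom(x, fᵢ) →+ Hom(x, ∐ f)` associated to a
cofan `c` on a family `f`. -/
noncomputable def cofanHomComparison {ι : Type w} (x : T) (f : ι → T) (c : Cofan f) :
    (Π₀ i, (x ⟶ f i)) →+ (x ⟶ c.pt) :=
  letI := Classical.decEq ι
  DFinsupp.sumAddHom (fun i => AddMonoidHom.mk' (fun φ => φ ≫ c.inj i)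
    (fun φ ψ => Preadditive.add_comp _ _ _ φ ψ (c.inj i)))

/-- An object `x` is compact if `Hom(x, -)` commutes with arbitrary small
coproducts, i.e. for every colimit cofan on a family `f`, the canonical map
`⨁ᵢ Hom(x, fᵢ) → Hom(x, ∐ f)` is bijective. -/
def IsCompactObj (x : T) : Prop :=
  ∀ ⦃ι : Type w⦄ (f : ι → T) (c : Cofan f), IsColimit c →
    Function.Bijective (cofanHomComparison x f c)

end CompactDefs

section DR

variable (R : Type u) [CommRing R] [HasDerivedCategory.{w'} (ModuleCat.{u} R)]

/-- The `R`-module `M`, regarded as an object of the derived category `D(R)`,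
as a complex concentrated in degree `0`. -/
noncomputable def smod (M : ModuleCat.{u} R) : DerivedCategory (ModuleCat.{u} R) :=
  (DerivedCategory.singleFunctor (ModuleCat.{u} R) 0).obj M

end DR
section Statement0

variable (R : Type u) [CommRing R] [HasDerivedCategory.{w'} (ModuleCat.{u} R)]

/-- The Koszul complex `K(f₁) ⊗ ⋯ ⊗ K(fₙ)` of a finite list of elements of `R`,
realized inductively via iterated mapping cones: tensoring a complex `K` with the
two-term Koszul complex `K(f) = (R →f R)` is the mapping cone of multiplication
by `f` on `K`.  (For the empty list this is `R` in degree `0`.) -/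
noncomputable def koszulCx : List R → CochainComplex (ModuleCat.{u} R) ℤ
  | [] => (CochainComplex.singleFunctor (ModuleCat.{u} R) 0).obj (ModuleCat.of R R)
  | f :: l => CochainComplex.mappingCone (f • 𝟙 (koszulCx l))

/-- The Koszul complex of a list of elements, as an object of `D(R)`. -/
noncomputable def koszulD (l : List R) : DerivedCategory (ModuleCat.{u} R) :=
  DerivedCategory.Q.obj (koszulCx R l)

/-- A compactly generated localizing subcategory of `D(R)`: one of the form
`Loc S` for a set `S` of compact objects. -/
def IsCGLoc (L : Set (DerivedCategory (ModuleCat.{u} R))) : Prop :=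
  ∃ S : Set (DerivedCategory (ModuleCat.{u} R)),
    (∀ x ∈ S, IsCompactObj.{u} x) ∧ L = Loc.{u} S

/-- A Hochster open subset of `Spec R`: a union of Zariski closed sets `V(I)`
with `I` finitely generated. -/
def IsHochsterOpen (U : Set (PrimeSpectrum R)) : Prop :=
  ∃ 𝒮 : Set (Ideal R), (∀ I ∈ 𝒮, I.FG) ∧
    U = ⋃ I ∈ 𝒮, PrimeSpectrum.zeroLocus (I : Set R)

/-- The map sending a localizing subcategory `L` to the union of the Zariski
closed sets `V(I)` over all finitely generated ideals `I` with `R/I ∈ L`. -/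
def locToHochster (L : Set (DerivedCategory (ModuleCat.{u} R))) :
    Set (PrimeSpectrum R) :=
  ⋃ I ∈ {I : Ideal R | I.FG ∧ smod R (ModuleCat.of R (R ⧸ I)) ∈ L},
    PrimeSpectrum.zeroLocus (I : Set R)

/-- The map sending a Hochster open set `U` to the localizing subcategory
generated by the Koszul complexes `K(I)` of the finitely generated ideals `I`
(given by finite lists of generators) with `V(I) ⊆ U`. -/
def hochsterToLoc (U : Set (PrimeSpectrum R)) :
    Set (DerivedCategory (ModuleCat.{u} R)) :=
  Loc.{u} {x | ∃ l : List R,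
    PrimeSpectrum.zeroLocus ((Ideal.span {r | r ∈ l} : Ideal R) : Set R) ⊆ U ∧
    x = koszulD R l}

end Statement0

section Helpers
open scoped DirectSum

section Cproj
variable {T : Type u} [Category.{v} T] [HasZeroMorphisms T]
open Classical in
noncomputable def cproj {ι : Type w} {f : ι → T} {c : Cofan f} (hc : IsColimit c) (j : ι) :
    c.pt ⟶ f j :=
  Cofan.IsColimit.desc hc (fun i => if h : i = j then eqToHom (by rw [h]) else 0)

lemma inj_cproj {ι : Type w} {f : ι → T} {c : Cofan f} (hc : IsColimit c) (j : ι) :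
    c.inj j ≫ cproj hc j = 𝟙 _ := by
  simp [cproj, Cofan.IsColimit.fac]

lemma inj_cproj_ne {ι : Type w} {f : ι → T} {c : Cofan f} (hc : IsColimit c) {i j : ι}
    (h : i ≠ j) : c.inj i ≫ cproj hc j = 0 := by
  simp [cproj, Cofan.IsColimit.fac, h]
end Cproj

section Csum
variable {T : Type u} [Category.{v} T] [Preadditive T]
noncomputable def csum {ι : Type w} {f : ι → T} {c : Cofan f} (hc : IsColimit c) (s : Finset ι) :
    c.pt ⟶ c.pt := ∑ i ∈ s, cproj hc i ≫ c.inj i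

lemma inj_csum {ι : Type w} {f : ι → T} {c : Cofan f} (hc : IsColimit c) (s : Finset ι)
    {i : ι} (hi : i ∈ s) : c.inj i ≫ csum hc s = c.inj i := by
  classical
  rw [csum, Preadditive.comp_sum, Finset.sum_eq_single i]
  · rw [← Category.assoc, inj_cproj, Category.id_comp]
  · intro j _ hj
    rw [← Category.assoc, inj_cproj_ne hc hj.symm, zero_comp]
  · exact fun h => (h hi).elim
end Csum

section
variable {R : Type u} [CommRing R]

lemma minj {M N : ModuleCat.{u} R} (f : M ⟶ N) [Mono f] : Function.Injective f :=
  (ModuleCat.mono_iff_injective f).1 inferInstance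

lemma msurj {M N : ModuleCat.{u} R} (f : M ⟶ N) [Epi f] : Function.Surjective f :=
  (ModuleCat.epi_iff_surjective f).1 inferInstance

lemma miso_inj {M N : ModuleCat.{u} R} (e : M ≅ N) : Function.Injective e.hom :=
  e.toLinearEquiv.injective

lemma mod_span {ι : Type w} [DecidableEq ι] (Z : ι → ModuleCat.{v} R) (c : Cofan Z) (hc : IsColimit c)
    (x : c.pt) : ∃ s : Finset ι, csum hc s x = x := by
  have key : ∀ y : c.pt, y ∈ (⨆ i, LinearMap.range (c.inj i).hom) := by
    set N := (⨆ i, LinearMap.range (c.inj i).hom)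
    have : ModuleCat.ofHom N.mkQ = 0 := by
      refine Cofan.IsColimit.hom_ext hc _ _ (fun i => ?_)
      ext y
      simp only [comp_zero, ModuleCat.hom_comp, ModuleCat.hom_ofHom, LinearMap.comp_apply]
      rw [Submodule.mkQ_apply]
      exact (Submodule.Quotient.mk_eq_zero N).2
        ((le_iSup (fun i => LinearMap.range (c.inj i).hom) i) ⟨y, rfl⟩)
    intro y
    have h2 := congrArg (fun φ => φ.hom y) this
    simpa using h2
  refine Submodule.iSup_induction _ (motive := fun x => ∃ s : Finset ι, ∀ t, s ⊆ t → csum hc t x = x) (key x) ?_ ?_ ?_ |>.imp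
    (fun s hs => hs s subset_rfl)
  · rintro i _ ⟨y, rfl⟩
    refine ⟨{i}, fun t ht => ?_⟩
    have := inj_csum hc t (ht (Finset.mem_singleton_self i))
    exact congrArg (fun φ => φ.hom y) this
  · exact ⟨∅, fun t _ => by simp⟩
  · rintro a b ⟨s, hs⟩ ⟨t, ht⟩
    refine ⟨s ∪ t, fun r hr => ?_⟩
    rw [map_add, hs r (Finset.union_subset_left hr), ht r (Finset.union_subset_right hr)]

lemma cx_span {ι : Type u} (X : ι → CochainComplex (ModuleCat.{u} R) ℤ) (c : Cofan X)
    (hc : IsColimit c) (n : ℤ) (z : c.pt.homology n) :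
    ∃ s : Finset ι, HomologicalComplex.homologyMap (csum hc s) n z = z := by
  classical
  obtain ⟨y, rfl⟩ := msurj (c.pt.homologyπ n) z
  let F := HomologicalComplex.eval (ModuleCat.{u} R) (ComplexShape.up ℤ) n
  let c' : Cofan (fun i => F.obj (X i)) := Cofan.mk (F.obj c.pt) (fun i => F.map (c.inj i))
  have hc' : IsColimit c' := isColimitCofanMkObjOfIsColimit F X _ (by
    exact IsColimit.ofIsoColimit hc (Cofan.ext (Iso.refl _) (by simp)))
  obtain ⟨s, hs⟩ := mod_span _ c' hc' (c.pt.iCycles n y)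
  have e : (csum hc s).f n = csum hc' s := by
    have : (csum hc s).f n = F.map (csum hc s) := rfl
    rw [this, csum, csum, Functor.map_sum]
    refine Finset.sum_congr rfl (fun i _ => ?_)
    rw [F.map_comp]
    congr 1
    refine Cofan.IsColimit.hom_ext hc' _ _ (fun j => ?_)
    change F.map (c.inj j) ≫ _ = _
    rw [← F.map_comp]
    by_cases h : j = i
    · subst h
      rw [inj_cproj, inj_cproj, F.map_id]
    · rw [inj_cproj_ne _ h, inj_cproj_ne _ h, F.map_zero]
  refine ⟨s, ?_⟩
  have h1 : HomologicalComplex.cyclesMap (csum hc s) n y = y := by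
    apply minj (c.pt.iCycles n)
    rw [← ModuleCat.comp_apply, HomologicalComplex.cyclesMap_i, ModuleCat.comp_apply, e]
    exact hs
  rw [← ModuleCat.comp_apply, HomologicalComplex.homologyπ_naturality, ModuleCat.comp_apply, h1]

variable [HasDerivedCategory.{w'} (ModuleCat.{u} R)]

lemma Q_span {ι : Type u} (X : ι → CochainComplex (ModuleCat.{u} R) ℤ) (c : Cofan X)
    (hc : IsColimit c) (n : ℤ)
    (z : (DerivedCategory.homologyFunctor (ModuleCat.{u} R) n).obj (DerivedCategory.Q.obj c.pt)) :
    ∃ s : Finset ι, (DerivedCategory.homologyFunctor (ModuleCat.{u} R) n).map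
      (DerivedCategory.Q.map (csum hc s)) z = z := by
  obtain ⟨s, hs⟩ := cx_span X c hc n (((DerivedCategory.homologyFunctorFactors (ModuleCat.{u} R) n).hom.app c.pt).hom z)
  refine ⟨s, ?_⟩
  apply miso_inj
    ((DerivedCategory.homologyFunctorFactors (ModuleCat.{u} R) n).app c.pt)
  rw [Iso.app_hom, ← ModuleCat.comp_apply]
  erw [DerivedCategory.homologyFunctorFactors_hom_naturality]
  exact hs
end


section
variable {R : Type u} [CommRing R] [HasDerivedCategory.{w'} (ModuleCat.{u} R)]

/-- homology functor of D(R) -/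
noncomputable abbrev HH (R : Type u) [CommRing R] [HasDerivedCategory.{w'} (ModuleCat.{u} R)] (n : ℤ) :
    DerivedCategory (ModuleCat.{u} R) ⥤ ModuleCat.{u} R :=
  DerivedCategory.homologyFunctor (ModuleCat.{u} R) n

lemma HH_comp {X Y Z : DerivedCategory (ModuleCat.{u} R)} (f : X ⟶ Y) (g : Y ⟶ Z) (n : ℤ)
    (x : (HH R n).obj X) : (HH R n).map (f ≫ g) x = (HH R n).map g ((HH R n).map f x) := by
  rw [Functor.map_comp, ModuleCat.comp_apply]

lemma HH_id {X : DerivedCategory (ModuleCat.{u} R)} (n : ℤ)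
    (x : (HH R n).obj X) : (HH R n).map (𝟙 X) x = x := by
  rw [CategoryTheory.Functor.map_id, ModuleCat.id_apply]

lemma HH_zero {X Y : DerivedCategory (ModuleCat.{u} R)} (n : ℤ)
    (x : (HH R n).obj X) : (HH R n).map (0 : X ⟶ Y) x = 0 := by
  rw [Functor.map_zero]; rfl

lemma HH_sum {X Y : DerivedCategory (ModuleCat.{u} R)} {ι : Type*} (s : Finset ι)
    (f : ι → (X ⟶ Y)) (n : ℤ)
    (x : (HH R n).obj X) : (HH R n).map (∑ i ∈ s, f i) x = ∑ i ∈ s, (HH R n).map (f i) x := by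
  rw [Functor.map_sum]
  classical
  induction s using Finset.induction_on with
  | empty => rfl
  | insert a s ha ih => rw [Finset.sum_insert ha, Finset.sum_insert ha, ← ih]; rfl

lemma isIso_of_HH {X Y : DerivedCategory (ModuleCat.{u} R)} (f : X ⟶ Y)
    (h : ∀ n, Function.Bijective ((HH R n).map f)) : IsIso f := by
  rw [DerivedCategory.isIso_iff]
  intro n
  exact (ConcreteCategory.isIso_iff_bijective _).2 (h n)

lemma HH_bij {X Y : DerivedCategory (ModuleCat.{u} R)} (f : X ⟶ Y) [IsIso f] (n : ℤ) :
    Function.Bijective ((HH R n).map f) :=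
  (ConcreteCategory.isIso_iff_bijective _).1 inferInstance

structure HSpan {ι : Type w} {f : ι → DerivedCategory (ModuleCat.{u} R)} (c : Cofan f)
    (pr : ∀ i, c.pt ⟶ f i) : Prop where
  inj_pr : ∀ i, c.inj i ≫ pr i = 𝟙 _
  inj_pr_ne : ∀ i j, i ≠ j → c.inj i ≫ pr j = 0
  span : ∀ n (z : (HH R n).obj c.pt), ∃ s : Finset ι,
    z = ∑ i ∈ s, (HH R n).map (c.inj i) ((HH R n).map (pr i) z)

lemma HSpan.isIso {ι : Type w} {f f' : ι → DerivedCategory (ModuleCat.{u} R)} {c : Cofan f}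
    {pr : ∀ i, c.pt ⟶ f i} (h : HSpan c pr) {c' : Cofan f'} {pr' : ∀ i, c'.pt ⟶ f' i}
    (h' : HSpan c' pr') (σ : c.pt ⟶ c'.pt) (s : ∀ i, f i ⟶ f' i) [∀ i, IsIso (s i)]
    (hσ : ∀ i, c.inj i ≫ σ = s i ≫ c'.inj i) : IsIso σ := by
  apply isIso_of_HH
  intro n
  have hpr : ∀ i (z : (HH R n).obj c.pt),
      (HH R n).map (pr' i) ((HH R n).map σ z) = (HH R n).map (s i) ((HH R n).map (pr i) z) := by
    intro i z
    obtain ⟨S, hS⟩ := h.span n z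
    by_cases hi : i ∈ S
    · conv_lhs => rw [hS]
      rw [map_sum, map_sum, Finset.sum_eq_single i]
      · rw [← HH_comp, ← HH_comp, ← Category.assoc, hσ, Category.assoc, h'.inj_pr, Category.comp_id]
      · intro j _ hj
        rw [← HH_comp, ← HH_comp, ← Category.assoc, hσ, Category.assoc, h'.inj_pr_ne _ _ hj, comp_zero, HH_zero]
      · exact fun hh => (hh hi).elim
    · conv_lhs => rw [hS]
      conv_rhs => rw [hS]
      simp only [map_sum]
      rw [Finset.sum_eq_zero, Finset.sum_eq_zero]
      · intro j hj
        have : j ≠ i := fun e => hi (e ▸ hj)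
        rw [← HH_comp (c.inj j), h.inj_pr_ne _ _ this, HH_zero, map_zero]
      · intro j hj
        have : j ≠ i := fun e => hi (e ▸ hj)
        rw [← HH_comp, ← HH_comp, ← Category.assoc, hσ, Category.assoc, h'.inj_pr_ne _ _ this, comp_zero, HH_zero]
  constructor
  · rw [injective_iff_map_eq_zero]
    intro z hz
    obtain ⟨S, hS⟩ := h.span n z
    rw [hS]
    apply Finset.sum_eq_zero
    intro i _
    have := hpr i z
    rw [hz, map_zero] at this
    have h0 := (HH_bij (s i) n).1 (this.symm.trans (map_zero _).symm)
    rw [h0, map_zero]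
  · intro y
    obtain ⟨S, hS⟩ := h'.span n y
    choose t ht using fun i => (HH_bij (s i) n).2 ((HH R n).map (pr' i) y)
    refine ⟨∑ i ∈ S, (HH R n).map (c.inj i) (t i), ?_⟩
    rw [map_sum]
    conv_rhs => rw [hS]
    refine Finset.sum_congr rfl (fun i _ => ?_)
    rw [← HH_comp, hσ, HH_comp, ht]

noncomputable abbrev Qcofan {ι : Type u} {X : ι → CochainComplex (ModuleCat.{u} R) ℤ} (c : Cofan X) :
    Cofan (fun i => DerivedCategory.Q.obj (X i)) :=
  Cofan.mk (DerivedCategory.Q.obj c.pt) (fun i => DerivedCategory.Q.map (c.inj i))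

lemma Q_HSpan {ι : Type u} {X : ι → CochainComplex (ModuleCat.{u} R) ℤ} {c : Cofan X}
    (hc : IsColimit c) : HSpan (Qcofan c) (fun i => DerivedCategory.Q.map (cproj hc i)) where
  inj_pr i := by
    change DerivedCategory.Q.map (c.inj i) ≫ _ = _
    rw [← Functor.map_comp, inj_cproj, CategoryTheory.Functor.map_id]
  inj_pr_ne i j h := by
    change DerivedCategory.Q.map (c.inj i) ≫ _ = _
    rw [← Functor.map_comp, inj_cproj_ne _ h, Functor.map_zero]
  span n z := by
    obtain ⟨s, hs⟩ := Q_span X c hc n z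
    refine ⟨s, ?_⟩
    conv_lhs => rw [← hs]
    rw [csum, Functor.map_sum, HH_sum]
    refine Finset.sum_congr rfl (fun i _ => ?_)
    rw [Functor.map_comp, HH_comp]
    rfl

lemma Q_exists_desc {ι : Type u} {X : ι → CochainComplex (ModuleCat.{u} R) ℤ} {c : Cofan X}
    (hc : IsColimit c) {Y : DerivedCategory (ModuleCat.{u} R)}
    (g : ∀ i, DerivedCategory.Q.obj (X i) ⟶ Y) :
    ∃ φ : DerivedCategory.Q.obj c.pt ⟶ Y, ∀ i, DerivedCategory.Q.map (c.inj i) ≫ φ = g i := by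
  let e := DerivedCategory.Q.objObjPreimageIso Y
  choose X' s hs t ht using fun i => DerivedCategory.right_fac (g i ≫ e.inv)
  let hc' := colimit.isColimit (Discrete.functor X')
  let c' : Cofan X' := colimit.cocone (Discrete.functor X')
  let σ : c'.pt ⟶ c.pt := Cofan.IsColimit.desc hc' (fun i => s i ≫ c.inj i)
  let τ : c'.pt ⟶ _ := Cofan.IsColimit.desc hc' t
  have hσ : ∀ i, c'.inj i ≫ σ = s i ≫ c.inj i := fun i => Cofan.IsColimit.fac hc' _ i
  have hτ : ∀ i, c'.inj i ≫ τ = t i := fun i => Cofan.IsColimit.fac hc' _ i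
  have : IsIso (DerivedCategory.Q.map σ) :=
    HSpan.isIso (Q_HSpan hc') (Q_HSpan hc) (DerivedCategory.Q.map σ)
      (fun i => DerivedCategory.Q.map (s i)) (fun i => by
        change DerivedCategory.Q.map (c'.inj i) ≫ _ = _ ≫ DerivedCategory.Q.map (c.inj i)
        rw [← Functor.map_comp, ← Functor.map_comp, hσ])
  refine ⟨inv (DerivedCategory.Q.map σ) ≫ DerivedCategory.Q.map τ ≫ e.hom, fun i => ?_⟩
  rw [← cancel_epi (DerivedCategory.Q.map (s i)), ← Functor.map_comp_assoc, ← hσ,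
    Functor.map_comp_assoc, IsIso.hom_inv_id_assoc, ← Functor.map_comp_assoc, hτ]
  rw [← cancel_mono e.inv, Category.assoc, Category.assoc, ht i]
  simp

lemma Q_uniq {ι : Type u} {X : ι → CochainComplex (ModuleCat.{u} R) ℤ} {c : Cofan X}
    (hc : IsColimit c) {Y : DerivedCategory (ModuleCat.{u} R)}
    (φ : DerivedCategory.Q.obj c.pt ⟶ Y) (h : ∀ i, DerivedCategory.Q.map (c.inj i) ≫ φ = 0) :
    φ = 0 := by
  obtain ⟨F, p, q, hT⟩ := distinguished_cocone_triangle₁ φ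
  have hex : ∀ i, ∃ l : DerivedCategory.Q.obj (X i) ⟶ F, DerivedCategory.Q.map (c.inj i) = l ≫ p :=
    fun i => Triangle.coyoneda_exact₂ _ hT _ (h i)
  choose l hl using hex
  obtain ⟨σ, hσ⟩ := Q_exists_desc hc l
  have : IsIso (σ ≫ p) := HSpan.isIso (Q_HSpan hc) (Q_HSpan hc) (σ ≫ p) (fun i => 𝟙 _) (fun i => by
    change DerivedCategory.Q.map (c.inj i) ≫ _ = _ ≫ DerivedCategory.Q.map (c.inj i)
    rw [Category.id_comp]
    exact (Category.assoc _ _ _).symm.trans ((congrArg (· ≫ p) (hσ i)).trans (hl i).symm))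
  have h0 : p ≫ φ = 0 := comp_distTriang_mor_zero₁₂ _ hT
  have h1 : σ ≫ p ≫ φ = 0 := by rw [h0, comp_zero]
  exact (cancel_epi (σ ≫ p)).1 ((Category.assoc _ _ _).trans (h1.trans comp_zero.symm))

noncomputable def QcofanIsColimit {ι : Type u} {X : ι → CochainComplex (ModuleCat.{u} R) ℤ} {c : Cofan X}
    (hc : IsColimit c) : IsColimit (Qcofan c) :=
  mkCofanColimit _ (fun s => (Q_exists_desc hc s.inj).choose)
    (fun s => (Q_exists_desc hc s.inj).choose_spec)
    (fun s m hm => by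
      rw [← sub_eq_zero]
      apply Q_uniq hc
      intro i
      rw [Preadditive.comp_sub, (Q_exists_desc hc s.inj).choose_spec, sub_eq_zero]
      exact hm i)

instance DR_hasCoproducts (ι : Type u) :
    HasColimitsOfShape (Discrete ι) (DerivedCategory (ModuleCat.{u} R)) where
  has_colimit F := by
    let X : ι → CochainComplex (ModuleCat.{u} R) ℤ := fun i => DerivedCategory.Q.objPreimage (F.obj ⟨i⟩)
    have h1 : HasColimit (Discrete.functor (fun i => DerivedCategory.Q.obj (X i))) :=
      ⟨⟨_, QcofanIsColimit (colimit.isColimit (Discrete.functor X))⟩⟩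
    have e : Discrete.functor (fun i => DerivedCategory.Q.obj (X i)) ≅ F :=
      Discrete.natIso (fun i => DerivedCategory.Q.objObjPreimageIso (F.obj i))
    exact hasColimit_of_iso e.symm

/-- homology of an arbitrary coproduct in D(R) -/
lemma D_HSpan {ι : Type u} {f : ι → DerivedCategory (ModuleCat.{u} R)} {c : Cofan f}
    (hc : IsColimit c) : HSpan c (fun i => cproj hc i) where
  inj_pr := inj_cproj hc
  inj_pr_ne _ _ h := inj_cproj_ne hc h
  span n z := by
    let X : ι → CochainComplex (ModuleCat.{u} R) ℤ := fun i => DerivedCategory.Q.objPreimage (f i)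
    let e : ∀ i, DerivedCategory.Q.obj (X i) ≅ f i := fun i => DerivedCategory.Q.objObjPreimageIso (f i)
    let d := colimit.cocone (Discrete.functor X)
    let hd : IsColimit (Qcofan d) := QcofanIsColimit (colimit.isColimit (Discrete.functor X))
    let a : c.pt ⟶ (Qcofan d).pt := Cofan.IsColimit.desc hc (fun i => (e i).inv ≫ (Qcofan d).inj i)
    let b : (Qcofan d).pt ⟶ c.pt := Cofan.IsColimit.desc hd (fun i => (e i).hom ≫ c.inj i)
    have ha : ∀ i, c.inj i ≫ a = (e i).inv ≫ (Qcofan d).inj i := fun i => Cofan.IsColimit.fac hc _ i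
    have hb : ∀ i, (Qcofan d).inj i ≫ b = (e i).hom ≫ c.inj i := fun i => Cofan.IsColimit.fac hd _ i
    have hab : a ≫ b = 𝟙 _ := Cofan.IsColimit.hom_ext hc _ _ (fun i => by
      rw [← Category.assoc, ha, Category.assoc, hb, Iso.inv_hom_id_assoc, Category.comp_id])
    obtain ⟨S, hS⟩ := (Q_HSpan (colimit.isColimit (Discrete.functor X))).span n ((HH R n).map a z)
    refine ⟨S, ?_⟩
    have := congrArg ((HH R n).map b) hS
    rw [← HH_comp, hab, HH_id] at this
    conv_lhs => rw [this]
    rw [map_sum]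
    refine Finset.sum_congr rfl (fun i _ => ?_)
    rw [← HH_comp, ← HH_comp, ← HH_comp, ← HH_comp]
    suffices hh : a ≫ DerivedCategory.Q.map (cproj (colimit.isColimit (Discrete.functor X)) i) ≫
        (Qcofan d).inj i ≫ b = cproj hc i ≫ c.inj i by
      rw [← hh]
    rw [hb]
    refine Cofan.IsColimit.hom_ext hc _ _ (fun j => ?_)
    rw [← Category.assoc, ha, Category.assoc]
    have hi := (Q_HSpan (R := R) (colimit.isColimit (Discrete.functor X))).inj_pr i
    by_cases h : j = i
    · subst h
      rw [reassoc_of% hi]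
      rw [Iso.inv_hom_id_assoc, reassoc_of% (inj_cproj hc j)]
    · have hi := (Q_HSpan (R := R) (colimit.isColimit (Discrete.functor X))).inj_pr_ne j i h
      rw [reassoc_of% hi, reassoc_of% (inj_cproj_ne hc h), zero_comp, comp_zero, zero_comp]

end


section Exact
variable {T : Type u} [Category.{v} T] [Preadditive T] [HasZeroObject T]
  [HasShift T ℤ] [∀ n : ℤ, (shiftFunctor T n).Additive] [Pretriangulated T]
  {x y z : T} {f : x ⟶ y} {g : y ⟶ z} {h : z ⟶ x⟦(1:ℤ)⟧}
  (hT : Triangle.mk f g h ∈ distinguishedTriangles) {W : T}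
include hT
lemma tz12 : f ≫ g = 0 := comp_distTriang_mor_zero₁₂ _ hT
lemma tz23 : g ≫ h = 0 := comp_distTriang_mor_zero₂₃ _ hT
lemma tz31 : h ≫ f⟦(1:ℤ)⟧' = 0 := comp_distTriang_mor_zero₃₁ _ hT
lemma yon2 (v : y ⟶ W) (hv : f ≫ v = 0) : ∃ k : z ⟶ W, v = g ≫ k :=
  Triangle.yoneda_exact₂ _ hT v hv
lemma yon3 (v : z ⟶ W) (hv : g ≫ v = 0) : ∃ k : x⟦(1:ℤ)⟧ ⟶ W, v = h ≫ k :=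
  Triangle.yoneda_exact₃ _ hT v hv
lemma yon1 (v : x⟦(1:ℤ)⟧ ⟶ W) (hv : h ≫ v = 0) : ∃ k : y⟦(1:ℤ)⟧ ⟶ W, v = f⟦(1:ℤ)⟧' ≫ k := by
  obtain ⟨k, hk⟩ : ∃ k : y⟦(1:ℤ)⟧ ⟶ W, v = (-(f⟦(1:ℤ)⟧')) ≫ k :=
    Triangle.yoneda_exact₃ _ (rot_of_distTriang _ hT) v hv
  exact ⟨-k, by rw [hk]; simp⟩
lemma coy2 (a : W ⟶ y) (ha : a ≫ g = 0) : ∃ k : W ⟶ x, a = k ≫ f :=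
  Triangle.coyoneda_exact₂ _ hT a ha
lemma coy3 (a : W ⟶ z) (ha : a ≫ h = 0) : ∃ k : W ⟶ y, a = k ≫ g :=
  Triangle.coyoneda_exact₃ _ hT a ha
lemma coy1 (a : W ⟶ x⟦(1:ℤ)⟧) (ha : a ≫ f⟦(1:ℤ)⟧' = 0) : ∃ k : W ⟶ z, a = k ≫ h :=
  Triangle.coyoneda_exact₁ _ hT a ha
end Exact

section
variable {T : Type u} [Category.{v} T] [Preadditive T] [HasZeroObject T]
  [HasShift T ℤ] [∀ n : ℤ, (shiftFunctor T n).Additive] [Pretriangulated T]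

noncomputable def shiftCofan {ι : Type w} {f : ι → T} (c : Cofan f) (n : ℤ) :
    Cofan (fun i => (f i)⟦n⟧) := Cofan.mk (c.pt⟦n⟧) (fun i => (c.inj i)⟦n⟧')

noncomputable def shiftCofanIsColimit {ι : Type w} {f : ι → T} {c : Cofan f} (hc : IsColimit c) (n : ℤ) :
    IsColimit (shiftCofan c n) :=
  isColimitCofanMkObjOfIsColimit (shiftFunctor T n) f _
    (IsColimit.ofIsoColimit hc (Cofan.ext (Iso.refl _) (by simp)))

lemma coprod_triangle' {ι : Type w} {x y z : ι → T} (f : ∀ i, x i ⟶ y i) (g : ∀ i, y i ⟶ z i)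
    (h : ∀ i, z i ⟶ (x i)⟦(1:ℤ)⟧) (hT : ∀ i, Triangle.mk (f i) (g i) (h i) ∈ distinguishedTriangles)
    {cx : Cofan x} {cy : Cofan y} (hx : IsColimit cx) (hy : IsColimit cy)
    (F : cx.pt ⟶ cy.pt) (hF : ∀ i, cx.inj i ≫ F = f i ≫ cy.inj i) {Z : T} (G : cy.pt ⟶ Z)
    (H : Z ⟶ cx.pt⟦(1:ℤ)⟧) (hZ : Triangle.mk F G H ∈ distinguishedTriangles) :
    ∃ ζ : ∀ i, z i ⟶ Z, Nonempty (IsColimit (Cofan.mk Z ζ)) ∧ (∀ i, g i ≫ ζ i = cy.inj i ≫ G) ∧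
      ∀ i, h i ≫ (cx.inj i)⟦(1:ℤ)⟧' = ζ i ≫ H := by
  have hex : ∀ i, ∃ ζ : z i ⟶ Z, g i ≫ ζ = cy.inj i ≫ G ∧ h i ≫ (cx.inj i)⟦(1:ℤ)⟧' = ζ ≫ H := fun i =>
    complete_distinguished_triangle_morphism _ _ (hT i) hZ (cx.inj i) (cy.inj i) (hF i).symm
  choose ζ hζ1 hζ2 using hex
  have hFG : F ≫ G = 0 := comp_distTriang_mor_zero₁₂ _ hZ
  have hHF : H ≫ F⟦(1:ℤ)⟧' = 0 := comp_distTriang_mor_zero₃₁ _ hZ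
  have ex : ∀ {W : T} (w : ∀ i, z i ⟶ W), ∃ ω : Z ⟶ W, ∀ i, ζ i ≫ ω = w i := by
    intro W w
    obtain ⟨v, hv⟩ : ∃ v : cy.pt ⟶ W, ∀ i, cy.inj i ≫ v = g i ≫ w i :=
      ⟨Cofan.IsColimit.desc hy (fun i => g i ≫ w i), fun i => Cofan.IsColimit.fac hy _ i⟩
    obtain ⟨ω, hω⟩ : ∃ ω : Z ⟶ W, v = G ≫ ω := yon2 hZ v (by
      refine Cofan.IsColimit.hom_ext hx _ _ (fun i => ?_)
      change cx.inj i ≫ F ≫ v = _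
      have h0 : f i ≫ g i = 0 := comp_distTriang_mor_zero₁₂ _ (hT i)
      rw [reassoc_of% (hF i), hv, reassoc_of% h0, zero_comp, comp_zero])
    have hk : ∀ i, ∃ k : (x i)⟦(1:ℤ)⟧ ⟶ W, ζ i ≫ ω - w i = h i ≫ k := fun i =>
      yon3 (hT i) (ζ i ≫ ω - w i) (by
        change g i ≫ _ = 0
        rw [Preadditive.comp_sub, reassoc_of% (hζ1 i), ← hω, hv, sub_self])
    choose k hk using hk
    obtain ⟨K, hK⟩ : ∃ K : cx.pt⟦(1:ℤ)⟧ ⟶ W, ∀ i, (cx.inj i)⟦(1:ℤ)⟧' ≫ K = k i :=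
      ⟨Cofan.IsColimit.desc (shiftCofanIsColimit hx 1) k,
        fun i => Cofan.IsColimit.fac (shiftCofanIsColimit hx 1) _ i⟩
    refine ⟨ω - H ≫ K, fun i => ?_⟩
    rw [Preadditive.comp_sub, ← reassoc_of% (hζ2 i), hK, ← hk]
    abel
  have un : ∀ {W : T} (ω : Z ⟶ W), (∀ i, ζ i ≫ ω = 0) → ω = 0 := by
    intro W ω hω
    have hG : G ≫ ω = 0 := Cofan.IsColimit.hom_ext hy _ _ (fun i => by
      rw [← Category.assoc, ← hζ1, Category.assoc, hω, comp_zero, comp_zero])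
    obtain ⟨κ, hκ⟩ : ∃ κ : cx.pt⟦(1:ℤ)⟧ ⟶ W, ω = H ≫ κ := yon3 hZ ω hG
    have hl : ∀ i, ∃ l : (y i)⟦(1:ℤ)⟧ ⟶ W, (cx.inj i)⟦(1:ℤ)⟧' ≫ κ = (f i)⟦(1:ℤ)⟧' ≫ l := fun i =>
      yon1 (hT i) ((cx.inj i)⟦(1:ℤ)⟧' ≫ κ) (by
        change h i ≫ _ = 0
        rw [reassoc_of% (hζ2 i), ← hκ, hω])
    choose l hl using hl
    obtain ⟨Λ, hΛ⟩ : ∃ K : cy.pt⟦(1:ℤ)⟧ ⟶ W, ∀ i, (cy.inj i)⟦(1:ℤ)⟧' ≫ K = l i :=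
      ⟨Cofan.IsColimit.desc (shiftCofanIsColimit hy 1) l,
        fun i => Cofan.IsColimit.fac (shiftCofanIsColimit hy 1) _ i⟩
    have : κ = F⟦(1:ℤ)⟧' ≫ Λ := by
      refine Cofan.IsColimit.hom_ext (shiftCofanIsColimit hx 1) _ _ (fun i => ?_)
      change (cx.inj i)⟦(1:ℤ)⟧' ≫ κ = (cx.inj i)⟦(1:ℤ)⟧' ≫ _
      rw [hl, ← Category.assoc ((cx.inj i)⟦(1:ℤ)⟧'), ← Functor.map_comp, hF,
        Functor.map_comp, Category.assoc, hΛ]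
    rw [hκ, this, reassoc_of% hHF, zero_comp]
  refine ⟨ζ, ⟨mkCofanColimit _ (fun s => (ex s.inj).choose)
    (fun s => (ex s.inj).choose_spec) (fun s m hm => ?_)⟩, hζ1, hζ2⟩
  rw [← sub_eq_zero]
  apply un
  intro i
  rw [Preadditive.comp_sub, (ex s.inj).choose_spec, sub_eq_zero]
  exact hm i

lemma coprod_triangle {ι : Type w} {x y z : ι → T} (f : ∀ i, x i ⟶ y i) (g : ∀ i, y i ⟶ z i)
    (h : ∀ i, z i ⟶ (x i)⟦(1:ℤ)⟧) (hT : ∀ i, Triangle.mk (f i) (g i) (h i) ∈ distinguishedTriangles)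
    {cx : Cofan x} {cy : Cofan y} (hx : IsColimit cx) (hy : IsColimit cy)
    (F : cx.pt ⟶ cy.pt) (hF : ∀ i, cx.inj i ≫ F = f i ≫ cy.inj i) {Z : T} (G : cy.pt ⟶ Z)
    (H : Z ⟶ cx.pt⟦(1:ℤ)⟧) (hZ : Triangle.mk F G H ∈ distinguishedTriangles) :
    ∃ c : Cofan z, Nonempty (IsColimit c) ∧ c.pt = Z := by
  obtain ⟨ζ, h, -⟩ := coprod_triangle' f g h hT hx hy F hF G H hZ
  exact ⟨_, h, rfl⟩

namespace IsLocalizingSub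
variable {L : Set T} (hL : IsLocalizingSub.{w} L)
include hL

lemma mem₁ {x y z : T} {f : x ⟶ y} {g : y ⟶ z} {h : z ⟶ x⟦(1:ℤ)⟧}
    (hT : Triangle.mk f g h ∈ distinguishedTriangles) (hy : y ∈ L) (hz : z ∈ L) : x ∈ L := by
  have := hL.cone_mem _ (rot_of_distTriang _ hT) hy hz
  have h2 : (x⟦(1:ℤ)⟧)⟦(-1:ℤ)⟧ ∈ L := hL.shift_mem (-1) this
  exact hL.mem_of_iso ((shiftEquiv T (1:ℤ)).unitIso.app x).symm h2

lemma mem₂ {x y z : T} {f : x ⟶ y} {g : y ⟶ z} {h : z ⟶ x⟦(1:ℤ)⟧}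
    (hT : Triangle.mk f g h ∈ distinguishedTriangles) (hx : x ∈ L) (hz : z ∈ L) : y ∈ L :=
  hL.mem₁ (rot_of_distTriang _ hT) hz (hL.shift_mem 1 hx)

lemma mem₃ {x y z : T} {f : x ⟶ y} {g : y ⟶ z} {h : z ⟶ x⟦(1:ℤ)⟧}
    (hT : Triangle.mk f g h ∈ distinguishedTriangles) (hx : x ∈ L) (hy : y ∈ L) : z ∈ L :=
  hL.cone_mem _ hT hx hy

lemma of_shift (n : ℤ) {x : T} (h : x⟦n⟧ ∈ L) : x ∈ L :=
  hL.mem_of_iso ((shiftEquiv T n).unitIso.app x).symm (hL.shift_mem (-n) h)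

lemma isTriangulated : ObjectProperty.IsTriangulated (fun x => x ∈ L) where
  exists_zero := ⟨0, isZero_zero _, hL.zero_mem⟩
  isStableUnderShiftBy n := ⟨fun x hx => hL.shift_mem n hx⟩
  toIsTriangulatedClosed₂ := ⟨fun T hT h1 h3 =>
    ObjectProperty.le_isoClosure _ _ (hL.mem₂ (f := T.mor₁) (g := T.mor₂) (h := T.mor₃) hT h1 h3)⟩

lemma trW_iff_cone {x y z : T} {f : x ⟶ y} {g : y ⟶ z} {h : z ⟶ x⟦(1:ℤ)⟧}
    (hT : Triangle.mk f g h ∈ distinguishedTriangles) :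
    ObjectProperty.trW (fun x => x ∈ L) f ↔ z ∈ L := by
  haveI : ObjectProperty.IsClosedUnderIsomorphisms (fun x => x ∈ L) := ⟨fun e h => hL.mem_of_iso e h⟩
  exact ObjectProperty.trW_iff_of_distinguished _ _ hT
end IsLocalizingSub

lemma isLocalizingSub_Loc (S : Set T) : IsLocalizingSub.{w} (Loc.{w} S) where
  zero_mem := fun _ hL => hL.1.zero_mem
  mem_of_iso e h := fun L hL => hL.1.mem_of_iso e (h L hL)
  shift_mem n _ h := fun L hL => hL.1.shift_mem n (h L hL)
  cone_mem Tr hTr h1 h2 := fun L hL => hL.1.cone_mem Tr hTr (h1 L hL) (h2 L hL)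
  coprod_mem f c hc h := fun L hL => hL.1.coprod_mem f c hc (fun i => h i L hL)

lemma subset_Loc (S : Set T) : S ⊆ Loc.{w} S := fun _ hx _ hL => hL.2 hx

lemma Loc_le {S L : Set T} (hL : IsLocalizingSub.{w} L) (h : S ⊆ L) : Loc.{w} S ⊆ L :=
  fun _ hx => hx L ⟨hL, h⟩

lemma Loc_mono {S S' : Set T} (h : S ⊆ S') : Loc.{w} S ⊆ Loc.{w} S' :=
  Loc_le (isLocalizingSub_Loc S') (h.trans (subset_Loc S'))
end


section
variable {T : Type u} [Category.{v} T] [Preadditive T] [HasZeroObject T]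
  [HasShift T ℤ] [∀ n : ℤ, (shiftFunctor T n).Additive] [Pretriangulated T] [IsTriangulated T]

/-- `f` has cone in `L`. -/
def CIn (L : Set T) {x y : T} (f : x ⟶ y) : Prop :=
  ∃ (z : T) (g : y ⟶ z) (h : z ⟶ x⟦(1:ℤ)⟧), Triangle.mk f g h ∈ distinguishedTriangles ∧ z ∈ L

section
variable {L : Set T} (hL : IsLocalizingSub.{w} L)
include hL
lemma IsLocalizingSub.cone_of_CIn {x y z : T} {f : x ⟶ y} (hf : CIn L f) {g : y ⟶ z} {h : z ⟶ x⟦(1:ℤ)⟧}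
    (hT : Triangle.mk f g h ∈ distinguishedTriangles) : z ∈ L := by
  obtain ⟨z', g', h', hT', hz'⟩ := hf
  exact (hL.trW_iff_cone hT).1 ((hL.trW_iff_cone hT').2 hz')

lemma IsLocalizingSub.CIn_id (x : T) : CIn L (𝟙 x) := ⟨0, 0, 0, contractible_distinguished x, hL.zero_mem⟩

lemma IsLocalizingSub.CIn_iso {x y : T} (f : x ⟶ y) [IsIso f] : CIn L f := by
  obtain ⟨z, g, h, hT⟩ := distinguished_cocone_triangle f
  refine ⟨z, g, h, hT, ?_⟩
  have hg : g = 0 := by rw [← cancel_epi f, tz12 hT, comp_zero]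
  have hh : h = 0 := by
    rw [← cancel_mono (f⟦(1:ℤ)⟧'), tz31 hT, zero_comp]
  obtain ⟨k, hk⟩ := yon3 hT (𝟙 z) (by rw [hg, zero_comp])
  rw [hh, zero_comp] at hk
  exact hL.mem_of_iso ((isZero_zero T).iso ((IsZero.iff_id_eq_zero z).2 hk)) hL.zero_mem

lemma IsLocalizingSub.CIn_comp {x y z : T} {f : x ⟶ y} {g : y ⟶ z} (hf : CIn L f) (hg : CIn L g) :
    CIn L (f ≫ g) := by
  obtain ⟨a, a1, a2, hA, ha⟩ := hf
  obtain ⟨b, b1, b2, hB, hb⟩ := hg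
  obtain ⟨c, c1, c2, hC⟩ := distinguished_cocone_triangle (f ≫ g)
  exact ⟨c, c1, c2, hC, hL.mem₂ (Triangulated.someOctahedron rfl hA hB hC).mem ha hb⟩

lemma IsLocalizingSub.CIn_left {x y z : T} {f : x ⟶ y} {g : y ⟶ z} (hfg : CIn L (f ≫ g)) (hg : CIn L g) :
    CIn L f := by
  obtain ⟨a, a1, a2, hA⟩ := distinguished_cocone_triangle f
  obtain ⟨b, b1, b2, hB, hb⟩ := hg
  obtain ⟨c, c1, c2, hC, hc⟩ := hfg
  exact ⟨a, a1, a2, hA, hL.mem₁ (Triangulated.someOctahedron rfl hA hB hC).mem hc hb⟩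

lemma IsLocalizingSub.CIn_right {x y z : T} {f : x ⟶ y} {g : y ⟶ z} (hfg : CIn L (f ≫ g)) (hf : CIn L f) :
    CIn L g := by
  obtain ⟨a, a1, a2, hA, ha⟩ := hf
  obtain ⟨b, b1, b2, hB⟩ := distinguished_cocone_triangle g
  obtain ⟨c, c1, c2, hC, hc⟩ := hfg
  exact ⟨b, b1, b2, hB, hL.mem₃ (Triangulated.someOctahedron rfl hA hB hC).mem ha hc⟩

lemma IsLocalizingSub.CIn_coprod {ι : Type w} {x y : ι → T} {f : ∀ i, x i ⟶ y i} (hf : ∀ i, CIn L (f i))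
    {cx : Cofan x} {cy : Cofan y} (hx : IsColimit cx) (hy : IsColimit cy)
    (F : cx.pt ⟶ cy.pt) (hF : ∀ i, cx.inj i ≫ F = f i ≫ cy.inj i) : CIn L F := by
  choose z g h hT hz using hf
  obtain ⟨Z, G, H, hZ⟩ := distinguished_cocone_triangle F
  obtain ⟨c, ⟨hc⟩, rfl⟩ := coprod_triangle f g h hT hx hy F hF G H hZ
  exact ⟨_, G, H, hZ, hL.coprod_mem _ c hc hz⟩
end

/-- cone of `1 - s` on a constant tower -/
lemma const_tower_cone {x : T} {c : Cofan (fun _ : ULift.{w} ℕ => x)} (hc : IsColimit c)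
    (s : c.pt ⟶ c.pt) (hs : ∀ i, c.inj i ≫ s = c.inj ⟨i.down + 1⟩)
    {Z : T} {g : c.pt ⟶ Z} {h : Z ⟶ c.pt⟦(1:ℤ)⟧}
    (hT : Triangle.mk (𝟙 _ - s) g h ∈ distinguishedTriangles) : Nonempty (Z ≅ x) := by
  obtain ⟨p, hp⟩ : ∃ p : c.pt ⟶ x, ∀ i, c.inj i ≫ p = 𝟙 x :=
    ⟨Cofan.IsColimit.desc hc (fun _ => 𝟙 x), fun i => Cofan.IsColimit.fac hc _ i⟩
  obtain ⟨q, hq⟩ : ∃ q : c.pt ⟶ c.pt, ∀ i, c.inj i ≫ q = - ∑ j ∈ Finset.range i.down, c.inj ⟨j⟩ :=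
    ⟨Cofan.IsColimit.desc hc (fun i => - ∑ j ∈ Finset.range i.down, c.inj ⟨j⟩),
      fun i => Cofan.IsColimit.fac hc _ i⟩
  have h1 : (𝟙 _ - s) ≫ q = 𝟙 _ := Cofan.IsColimit.hom_ext hc _ _ (fun i => by
    rw [Preadditive.sub_comp, Preadditive.comp_sub, Category.id_comp, ← Category.assoc, hs, hq, hq,
      Category.comp_id, Finset.sum_range_succ]
    simp)
  have hh : h = 0 := by
    have h2 := tz31 hT
    have h3 : h ≫ (((𝟙 _ - s) ≫ q)⟦(1:ℤ)⟧') = 0 := by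
      rw [Functor.map_comp, reassoc_of% h2, zero_comp]
    rw [h1] at h3
    simpa using h3
  obtain ⟨r, hr⟩ := yon2 hT p (Cofan.IsColimit.hom_ext hc _ _ (fun i => by
    rw [Preadditive.sub_comp, Preadditive.comp_sub, Category.id_comp, ← Category.assoc, hs, hp, hp,
      sub_self, comp_zero]))
  have hz := tz12 hT
  have e : ∀ n : ℕ, c.inj ⟨n⟩ ≫ g = c.inj ⟨0⟩ ≫ g := by
    intro n
    induction n with
    | zero => rfl
    | succ n ih =>
      have : c.inj ⟨n⟩ ≫ (𝟙 _ - s) ≫ g = 0 := by rw [hz, comp_zero]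
      rw [Preadditive.sub_comp, Preadditive.comp_sub, Category.id_comp, ← Category.assoc, hs,
        sub_eq_zero] at this
      rw [← ih, this]
  refine ⟨⟨r, c.inj ⟨0⟩ ≫ g, ?_, ?_⟩⟩
  · have : g ≫ (r ≫ c.inj ⟨0⟩ ≫ g - 𝟙 Z) = 0 := by
      rw [Preadditive.comp_sub, ← Category.assoc, ← hr, Category.comp_id, sub_eq_zero]
      refine Cofan.IsColimit.hom_ext hc _ _ (fun i => ?_)
      rw [← Category.assoc, hp, Category.id_comp, ← e i.down]
    obtain ⟨k, hk⟩ := yon3 hT _ this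
    rw [hh, zero_comp, sub_eq_zero] at hk
    exact hk
  · rw [Category.assoc, ← hr, hp]
end

section
variable {R : Type u} [CommRing R] [HasDerivedCategory.{w'} (ModuleCat.{u} R)]

noncomputable def trn (X : ℕ → DerivedCategory (ModuleCat.{u} R)) (t : ∀ n, X n ⟶ X (n+1)) (n : ℕ) :
    ∀ m, X n ⟶ X (n + m)
  | 0 => 𝟙 _
  | m+1 => trn X t n m ≫ t (n+m)

noncomputable def tr0 (X : ℕ → DerivedCategory (ModuleCat.{u} R)) (t : ∀ n, X n ⟶ X (n+1)) :
    ∀ m, X 0 ⟶ X m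
  | 0 => 𝟙 _
  | m+1 => tr0 X t m ≫ t m

lemma tower_iso (X : ℕ → DerivedCategory (ModuleCat.{u} R)) (t : ∀ n, X n ⟶ X (n+1))
    (hv : ∀ n k (z : (HH R k).obj (X n)), ∃ m, (HH R k).map (trn X t n m) z = 0)
    {c : Cofan (fun i : ULift.{u} ℕ => X i.down)} (hc : IsColimit c) (s : c.pt ⟶ c.pt)
    (hs : ∀ i, c.inj i ≫ s = t i.down ≫ c.inj ⟨i.down+1⟩) : IsIso (𝟙 _ - s) := by
  apply isIso_of_HH
  intro k
  have hsub : ∀ z, (HH R k).map (𝟙 _ - s) z = z - (HH R k).map s z := by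
    intro z
    rw [Functor.map_sub, CategoryTheory.Functor.map_id]; rfl
  have hsp := D_HSpan hc
  constructor
  · rw [injective_iff_map_eq_zero]
    intro z hz
    rw [hsub, sub_eq_zero] at hz
    have h0 : s ≫ cproj hc ⟨0⟩ = 0 := Cofan.IsColimit.hom_ext hc _ _ (fun i => by
      rw [← Category.assoc, hs, Category.assoc, inj_cproj_ne hc (by simp), comp_zero, comp_zero])
    have h1 : ∀ n : ℕ, s ≫ cproj hc ⟨n+1⟩ = cproj hc ⟨n⟩ ≫ t n := fun n =>
      Cofan.IsColimit.hom_ext hc _ _ (fun i => by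
        rw [← Category.assoc, hs, Category.assoc]
        by_cases hi : i = ⟨n⟩
        · subst hi
          rw [inj_cproj, reassoc_of% (inj_cproj hc ⟨n⟩), Category.comp_id]
        · rw [reassoc_of% (inj_cproj_ne hc hi), inj_cproj_ne hc, comp_zero, zero_comp]
          intro h
          apply hi
          cases i
          simpa using h)
    have h2 : ∀ n : ℕ, (HH R k).map (cproj hc ⟨n⟩) z = 0 := by
      intro n
      induction n with
      | zero => rw [hz, ← HH_comp, h0, HH_zero]
      | succ n ih => rw [hz, ← HH_comp, h1, HH_comp, ih, map_zero]
    obtain ⟨S, hS⟩ := hsp.span k z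
    rw [hS]
    refine Finset.sum_eq_zero (fun i _ => ?_)
    rw [h2 i.down, map_zero]
  · intro z
    obtain ⟨S, hS⟩ := hsp.span k z
    have key : ∀ i (y : (HH R k).obj (X i.down)), ∃ v, (HH R k).map (𝟙 _ - s) v = (HH R k).map (c.inj i) y := by
      intro i y
      have : ∀ m, ∃ v, (HH R k).map (𝟙 _ - s) v = (HH R k).map (c.inj i) y -
          (HH R k).map (c.inj ⟨i.down + m⟩) ((HH R k).map (trn X t i.down m) y) := by
        intro m
        induction m with
        | zero =>
          refine ⟨0, ?_⟩
          rw [map_zero]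
          symm
          rw [sub_eq_zero]
          change _ = (HH R k).map (c.inj i) ((HH R k).map (𝟙 _) y)
          rw [HH_id]
        | succ m ih =>
          obtain ⟨v, hv⟩ := ih
          refine ⟨v + (HH R k).map (c.inj ⟨i.down + m⟩) ((HH R k).map (trn X t i.down m) y), ?_⟩
          rw [map_add, hv, hsub, ← HH_comp (c.inj _) s, hs]
          have : trn X t i.down (m+1) = trn X t i.down m ≫ t _ := rfl
          rw [this, HH_comp, HH_comp]
          rw [sub_add_sub_cancel]
          rfl
      obtain ⟨m, hm⟩ := hv _ _ y
      obtain ⟨v, hv⟩ := this m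
      exact ⟨v, by rw [hv, hm, map_zero, sub_zero]⟩
    choose v hv using key
    refine ⟨∑ i ∈ S, v i ((HH R k).map (cproj hc i) z), ?_⟩
    rw [map_sum]
    conv_rhs => rw [hS]
    exact Finset.sum_congr rfl (fun i _ => hv _ _)

lemma tower_mem {L : Set (DerivedCategory (ModuleCat.{u} R))} (hL : IsLocalizingSub.{u} L)
    (X : ℕ → DerivedCategory (ModuleCat.{u} R)) (t : ∀ n, X n ⟶ X (n+1))
    (hv : ∀ n k (z : (HH R k).obj (X n)), ∃ m, (HH R k).map (trn X t n m) z = 0)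
    (ht : ∀ n, CIn L (t n)) : X 0 ∈ L := by
  let c : Cofan (fun i : ULift.{u} ℕ => X i.down) := colimit.cocone (Discrete.functor _)
  let hc : IsColimit c := colimit.isColimit _
  let c' : Cofan (fun i : ULift.{u} ℕ => X 0) := colimit.cocone (Discrete.functor _)
  let hc' : IsColimit c' := colimit.isColimit _
  obtain ⟨s, hs⟩ : ∃ s : c.pt ⟶ c.pt, ∀ i, c.inj i ≫ s = t i.down ≫ c.inj ⟨i.down+1⟩ :=
    ⟨Cofan.IsColimit.desc hc (fun i => t i.down ≫ c.inj ⟨i.down+1⟩), fun i => Cofan.IsColimit.fac hc _ i⟩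
  obtain ⟨s', hs'⟩ : ∃ s : c'.pt ⟶ c'.pt, ∀ i, c'.inj i ≫ s = c'.inj ⟨i.down+1⟩ :=
    ⟨Cofan.IsColimit.desc hc' (fun i => c'.inj ⟨i.down+1⟩), fun i => Cofan.IsColimit.fac hc' _ i⟩
  obtain ⟨r, hr⟩ : ∃ s : c'.pt ⟶ c.pt, ∀ i, c'.inj i ≫ s = tr0 X t i.down ≫ c.inj i :=
    ⟨Cofan.IsColimit.desc hc' (fun i => tr0 X t i.down ≫ c.inj i), fun i => Cofan.IsColimit.fac hc' _ i⟩
  have := tower_iso X t hv hc s hs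
  have h0 : ∀ m, CIn L (tr0 X t m) := by
    intro m
    induction m with
    | zero => exact hL.CIn_id _
    | succ m ih => exact hL.CIn_comp ih (ht m)
  have hrC : CIn L r := hL.CIn_coprod (f := fun i => tr0 X t i.down) (fun i => h0 _) hc' hc r hr
  have comm : (𝟙 _ - s') ≫ r = r ≫ (𝟙 _ - s) := by
    rw [Preadditive.sub_comp, Preadditive.comp_sub, Category.id_comp, Category.comp_id]
    congr 1
    refine Cofan.IsColimit.hom_ext hc' _ _ (fun i => ?_)
    rw [← Category.assoc, ← Category.assoc, hs', hr, hr, Category.assoc, hs]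
    simp [tr0]
  have h1 : CIn L (𝟙 _ - s') := by
    refine hL.CIn_left (g := r) ?_ hrC
    rw [comm]
    exact hL.CIn_comp hrC (hL.CIn_iso _)
  obtain ⟨Z, g, h, hT, hZ⟩ := h1
  obtain ⟨e⟩ := const_tower_cone hc' s' hs' hT
  exact hL.mem_of_iso e hZ

end


section
variable {R : Type u} [CommRing R] [HasDerivedCategory.{w'} (ModuleCat.{u} R)]
variable {L : Set (DerivedCategory (ModuleCat.{u} R))} (hL : IsLocalizingSub.{u} L)
include hL

lemma lemS (K : ℕ → Set (DerivedCategory (ModuleCat.{u} R))) (n0 : ℤ → ℕ)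
    (step : ∀ n X, X ∈ K n → ∃ Y ∈ K (n+1), ∃ t : X ⟶ Y, CIn L t ∧
      ∀ k, n0 k ≤ n → ∀ z : (HH R k).obj X, (HH R k).map t z = 0)
    (X : DerivedCategory (ModuleCat.{u} R)) (hX : X ∈ K 0) : X ∈ L := by
  choose! Y hY t ht hz using step
  let S : ∀ n, {X // X ∈ K n} := fun n => Nat.rec ⟨X, hX⟩ (fun n x => ⟨Y n x.1, hY n x.1 x.2⟩) n
  have := tower_mem hL (fun n => (S n).1) (fun n => t n (S n).1) ?_ (fun n => ht n _ (S n).2)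
  · exact this
  · intro n k z
    refine ⟨n0 k + 1, ?_⟩
    rw [trn, HH_comp]
    exact hz _ _ (S _).2 k (by omega) _

lemma CIn_of_fiber {e x y : DerivedCategory (ModuleCat.{u} R)} {f : e ⟶ x} {g : x ⟶ y} {h : y ⟶ e⟦(1:ℤ)⟧}
    (hT : Triangle.mk f g h ∈ distinguishedTriangles) (he : e ∈ L) : CIn L g :=
  ⟨_, _, _, rot_of_distTriang _ hT, hL.shift_mem 1 he⟩

lemma IsLocalizingSub.retract {x c : DerivedCategory (ModuleCat.{u} R)} (i : x ⟶ c) (p : c ⟶ x) (h : i ≫ p = 𝟙 x)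
    (hc : c ∈ L) : x ∈ L := by
  refine lemS hL (fun _ => {x | ∃ c ∈ L, ∃ (i : x ⟶ c) (p : c ⟶ x), i ≫ p = 𝟙 x}) (fun _ => 0) ?_ x ⟨c, hc, i, p, h⟩
  rintro n x ⟨c, hc, i, p, h⟩
  obtain ⟨z, q, r, hT⟩ := distinguished_cocone_triangle p
  have hq : q = 0 := by
    rw [← Category.id_comp q, ← h, Category.assoc, tz12 hT, comp_zero]
  refine ⟨z, ⟨c⟦(1:ℤ)⟧, hL.shift_mem 1 hc, r, ?_⟩, q, CIn_of_fiber hL hT hc, ?_⟩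
  · obtain ⟨k, hk⟩ := coy1 hT (𝟙 _ - p⟦(1:ℤ)⟧' ≫ i⟦(1:ℤ)⟧') (by
      rw [Preadditive.sub_comp, Category.assoc, ← Functor.map_comp, h]; simp)
    refine ⟨k, ?_⟩
    have h1 : r ≫ (𝟙 _ - p⟦(1:ℤ)⟧' ≫ i⟦(1:ℤ)⟧') = r := by
      rw [Preadditive.comp_sub, reassoc_of% (tz31 hT)]; simp
    have h2 : (r ≫ k - 𝟙 z) ≫ r = 0 := by
      rw [Preadditive.sub_comp, Category.assoc, ← hk, h1]; simp
    obtain ⟨k', hk'⟩ := coy3 hT _ h2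
    rwa [hq, comp_zero, sub_eq_zero] at hk'
  · intro k _ z
    rw [hq]; exact HH_zero k z
end


section
variable {R : Type u} [CommRing R] [HasDerivedCategory.{w'} (ModuleCat.{u} R)]
variable {L : Set (DerivedCategory (ModuleCat.{u} R))} (hL : IsLocalizingSub.{u} L)
include hL

lemma IsLocalizingSub.CIn_third {x y z x' y' z' : DerivedCategory (ModuleCat.{u} R)}
    {f : x ⟶ y} {g : y ⟶ z} {h : z ⟶ x⟦(1:ℤ)⟧} {f' : x' ⟶ y'} {g' : y' ⟶ z'} {h' : z' ⟶ x'⟦(1:ℤ)⟧}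
    (hT : Triangle.mk f g h ∈ distinguishedTriangles) (hT' : Triangle.mk f' g' h' ∈ distinguishedTriangles)
    (a : x ⟶ x') (b : y ⟶ y') (c : z ⟶ z') (h1 : f ≫ b = a ≫ f') (h2 : g ≫ c = b ≫ g')
    (h3 : h ≫ a⟦(1:ℤ)⟧' = c ≫ h') (ha : CIn L a) (hb : CIn L b) : CIn L c := by
  let P : ObjectProperty (DerivedCategory (ModuleCat.{u} R)) := fun x => x ∈ L
  haveI : P.IsTriangulated := hL.isTriangulated
  obtain ⟨Z, u, v, hZ⟩ := distinguished_cocone_triangle c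
  refine ⟨Z, u, v, hZ, ?_⟩
  let φ : Triangle.mk f g h ⟶ Triangle.mk f' g' h' := ⟨a, b, c, h1, h2, h3⟩
  let F := P.trW.Q
  have i1 : IsIso (F.map a) := Localization.inverts P.trW.Q P.trW a (by
    obtain ⟨z, g, h, hT, hz⟩ := ha; exact ⟨z, g, h, hT, hz⟩)
  have i2 : IsIso (F.map b) := Localization.inverts P.trW.Q P.trW b (by
    obtain ⟨z, g, h, hT, hz⟩ := hb; exact ⟨z, g, h, hT, hz⟩)
  have i3 : IsIso (F.map c) := isIso₃_of_isIso₁₂ (F.mapTriangle.map φ) (F.map_distinguished _ hT)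
    (F.map_distinguished _ hT') i1 i2
  have i4 : IsZero (F.obj Z) := (Triangle.isZero₃_iff_isIso₁ _ (F.map_distinguished _ hZ)).2 i3
  have i5 : F.map (𝟙 Z) = F.map 0 := i4.eq_of_src _ _
  rw [MorphismProperty.map_eq_iff_postcomp F P.trW] at i5
  obtain ⟨W, s, ⟨V, p, q, hV, hm⟩, hs⟩ := i5
  rw [Category.id_comp, zero_comp] at hs
  subst hs
  have hq : CIn L (0 : Z ⟶ W) := ⟨V, p, q, hV, hm⟩
  obtain ⟨k, hk⟩ := coy1 hV (𝟙 (Z⟦(1:ℤ)⟧)) (by simp)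
  exact hL.of_shift 1 (hL.retract k q hk.symm hm)

lemma IsLocalizingSub.CIn_shift {x y : DerivedCategory (ModuleCat.{u} R)} {f : x ⟶ y} (hf : CIn L f) (n : ℤ) :
    CIn L (f⟦n⟧') := by
  let P : ObjectProperty (DerivedCategory (ModuleCat.{u} R)) := fun x => x ∈ L
  haveI : P.IsTriangulated := hL.isTriangulated
  have : P.trW f := by obtain ⟨z, g, h, hT, hz⟩ := hf; exact ⟨z, g, h, hT, hz⟩
  obtain ⟨z, g, h, hT, hz⟩ := this.shift n
  exact ⟨z, g, h, hT, hz⟩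
omit hL

/-- localization of `L` away from `g`-torsion -/
def locG (g : R) (L : Set (DerivedCategory (ModuleCat.{u} R))) : Set (DerivedCategory (ModuleCat.{u} R)) :=
  {X | ∀ (c : Cofan (fun _ : ULift.{u} ℕ => X)) (_ : IsColimit c) (s : c.pt ⟶ c.pt),
    (∀ i, c.inj i ≫ s = g • c.inj ⟨i.down+1⟩) → CIn L (𝟙 _ - s)}

lemma exists_cof (X : DerivedCategory (ModuleCat.{u} R)) (g : R) :
    ∃ (c : Cofan (fun _ : ULift.{u} ℕ => X)) (_ : IsColimit c) (s : c.pt ⟶ c.pt),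
    (∀ i, c.inj i ≫ s = g • c.inj ⟨i.down+1⟩) := by
  obtain ⟨c, hc⟩ : ∃ c : Cofan (fun _ : ULift.{u} ℕ => X), Nonempty (IsColimit c) :=
    ⟨_, ⟨coproductIsCoproduct _⟩⟩
  exact ⟨c, hc.some, Cofan.IsColimit.desc hc.some (fun i => g • c.inj ⟨i.down+1⟩),
    fun i => Cofan.IsColimit.fac hc.some _ i⟩

include hL
lemma locG_of {X : DerivedCategory (ModuleCat.{u} R)} {g : R} {c : Cofan (fun _ : ULift.{u} ℕ => X)}
    (hc : IsColimit c) (s : c.pt ⟶ c.pt) (hs : ∀ i, c.inj i ≫ s = g • c.inj ⟨i.down+1⟩)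
    (h : CIn L (𝟙 _ - s)) : X ∈ locG g L := by
  intro c' hc' s' hs'
  obtain ⟨u, hu⟩ : ∃ u : c'.pt ⟶ c.pt, ∀ i, c'.inj i ≫ u = c.inj i :=
    ⟨Cofan.IsColimit.desc hc' (fun i => c.inj i), fun i => Cofan.IsColimit.fac hc' _ i⟩
  obtain ⟨v, hv⟩ : ∃ u : c.pt ⟶ c'.pt, ∀ i, c.inj i ≫ u = c'.inj i :=
    ⟨Cofan.IsColimit.desc hc (fun i => c'.inj i), fun i => Cofan.IsColimit.fac hc _ i⟩
  have huv : u ≫ v = 𝟙 _ := Cofan.IsColimit.hom_ext hc' _ _ (fun i => by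
    rw [reassoc_of% (hu i), hv, Category.comp_id])
  have hvu : v ≫ u = 𝟙 _ := Cofan.IsColimit.hom_ext hc _ _ (fun i => by
    rw [reassoc_of% (hv i), hu, Category.comp_id])
  haveI : IsIso u := ⟨v, huv, hvu⟩
  haveI : IsIso v := ⟨u, hvu, huv⟩
  have e : 𝟙 _ - s' = u ≫ (𝟙 _ - s) ≫ v := Cofan.IsColimit.hom_ext hc' _ _ (fun i => by
    rw [reassoc_of% (hu i), Preadditive.sub_comp, Preadditive.comp_sub, Preadditive.comp_sub,
      Category.id_comp, hv, reassoc_of% (hs i), hs', Linear.smul_comp, hv, Category.comp_id])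
  rw [e]
  exact hL.CIn_comp (hL.CIn_iso u) (hL.CIn_comp h (hL.CIn_iso v))

lemma le_locG (g : R) : L ⊆ locG g L := by
  intro X hX c hc s hs
  obtain ⟨z, a, b, hT⟩ := distinguished_cocone_triangle (𝟙 c.pt - s)
  have := hL.coprod_mem _ c hc (fun _ => hX)
  exact ⟨z, a, b, hT, hL.mem₃ hT this this⟩

lemma locG_cone {g : R} {x y z : DerivedCategory (ModuleCat.{u} R)}
    {f : x ⟶ y} {k : y ⟶ z} {h : z ⟶ x⟦(1:ℤ)⟧}
    (hT : Triangle.mk f k h ∈ distinguishedTriangles) (hx : x ∈ locG g L) (hy : y ∈ locG g L) :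
    z ∈ locG g L := by
  obtain ⟨cx, hcx, sx, hsx⟩ := exists_cof x g
  obtain ⟨cy, hcy, sy, hsy⟩ := exists_cof y g
  obtain ⟨F, hF⟩ : ∃ F : cx.pt ⟶ cy.pt, ∀ i, cx.inj i ≫ F = f ≫ cy.inj i :=
    ⟨Cofan.IsColimit.desc hcx (fun i => f ≫ cy.inj i), fun i => Cofan.IsColimit.fac hcx _ i⟩
  obtain ⟨Z, G, H, hZ⟩ := distinguished_cocone_triangle F
  obtain ⟨ζ, ⟨hc⟩, h1, h2⟩ := coprod_triangle' (fun _ => f) (fun _ => k) (fun _ => h) (fun _ => hT) hcx hcy F hF G H hZ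
  obtain ⟨s, hs⟩ : ∃ s : Z ⟶ Z, ∀ i, ζ i ≫ s = g • ζ ⟨i.down+1⟩ :=
    ⟨Cofan.IsColimit.desc hc (fun i => g • ζ ⟨i.down+1⟩), fun i => Cofan.IsColimit.fac hc _ i⟩
  refine locG_of hL hc s hs ?_
  have e1 : F ≫ sy = sx ≫ F := Cofan.IsColimit.hom_ext hcx _ _ (fun i => by
    rw [reassoc_of% (hF i), hsy, reassoc_of% (hsx i), Linear.smul_comp, hF, Linear.comp_smul])
  have e2 : G ≫ s = sy ≫ G := Cofan.IsColimit.hom_ext hcy _ _ (fun i => by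
    rw [← reassoc_of% (h1 i), hs, reassoc_of% (hsy i), Linear.smul_comp, ← h1, Linear.comp_smul])
  have e3 : H ≫ sx⟦(1:ℤ)⟧' = s ≫ H := Cofan.IsColimit.hom_ext hc _ _ (fun i => by
    change ζ i ≫ _ = ζ i ≫ _
    rw [← reassoc_of% (h2 i), reassoc_of% (hs i), Linear.smul_comp, ← h2, ← Functor.map_comp, hsx,
      Functor.map_smul, Linear.comp_smul])
  refine hL.CIn_third hZ hZ (𝟙 _ - sx) (𝟙 _ - sy) (𝟙 Z - s) ?_ ?_ ?_ (hx cx hcx sx hsx) (hy cy hcy sy hsy)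
  · simp [e1]
  · simp [e2]
  · simp [e3]

lemma locG_isLoc (g : R) : IsLocalizingSub.{u} (locG g L) where
  zero_mem := le_locG hL g hL.zero_mem
  mem_of_iso := by
    intro x y e hx
    have : Triangle.mk (0 : 0 ⟶ x) e.hom 0 ∈ distinguishedTriangles :=
      isomorphic_distinguished _ (contractible_distinguished₁ x) _
        (Triangle.isoMk _ _ (Iso.refl _) (Iso.refl _) e.symm
          (by change (0 : 0 ⟶ x) ≫ 𝟙 x = 𝟙 _ ≫ 0; simp)
          (by change e.hom ≫ e.inv = 𝟙 x ≫ 𝟙 x; simp)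
          (by change (0 : y ⟶ _) ≫ _ = e.inv ≫ 0; simp))
    exact locG_cone hL this (le_locG hL g hL.zero_mem) hx
  shift_mem := by
    intro n x hx
    obtain ⟨cx, hcx, sx, hsx⟩ := exists_cof x g
    refine locG_of hL (shiftCofanIsColimit hcx n) (sx⟦n⟧') (fun i => ?_) ?_
    · change (cx.inj i)⟦n⟧' ≫ _ = g • (cx.inj _)⟦n⟧'
      rw [← Functor.map_comp, hsx, Functor.map_smul]
    · have := hL.CIn_shift (hx cx hcx sx hsx) n
      rwa [Functor.map_sub, CategoryTheory.Functor.map_id] at this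
  cone_mem := fun T hT h1 h2 => locG_cone hL (f := T.mor₁) (k := T.mor₂) (h := T.mor₃) hT h1 h2
  coprod_mem := by
    intro ι f c hc hf
    obtain ⟨C, hC, S, hS⟩ := exists_cof c.pt g
    choose cf hcf s hs using fun i => exists_cof (f i) g
    have hj : ∀ i, ∃ j : (cf i).pt ⟶ C.pt, ∀ n, (cf i).inj n ≫ j = c.inj i ≫ C.inj n := fun i =>
      ⟨Cofan.IsColimit.desc (hcf i) (fun n => c.inj i ≫ C.inj n), fun n => Cofan.IsColimit.fac (hcf i) _ n⟩
    choose j hj using hj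
    have ex : ∀ (W : DerivedCategory (ModuleCat.{u} R)) (v : ∀ i, (cf i).pt ⟶ W), ∃ V : C.pt ⟶ W, ∀ i, j i ≫ V = v i := by
      intro W v
      refine ⟨Cofan.IsColimit.desc hC (fun n => Cofan.IsColimit.desc hc (fun i => (cf i).inj n ≫ v i)), fun i => ?_⟩
      refine Cofan.IsColimit.hom_ext (hcf i) _ _ (fun n => ?_)
      rw [reassoc_of% (hj i n), Cofan.IsColimit.fac hC, Cofan.IsColimit.fac hc]
    have un : ∀ (W : DerivedCategory (ModuleCat.{u} R)) (v v' : C.pt ⟶ W), (∀ i, j i ≫ v = j i ≫ v') → v = v' := by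
      intro W v v' h
      refine Cofan.IsColimit.hom_ext hC _ _ (fun n => Cofan.IsColimit.hom_ext hc _ _ (fun i => ?_))
      rw [← reassoc_of% (hj i n), ← reassoc_of% (hj i n), h]
    choose ds hds using ex
    have hcol : IsColimit (Cofan.mk C.pt j) := Cofan.IsColimit.mk _ (fun t => ds _ (fun i => t.inj i))
      (fun t i => hds _ _ i) (fun t m hm => un _ _ _ (fun i => by
        rw [hds]; exact hm i))
    refine locG_of hL hC S hS ?_
    refine hL.CIn_coprod (fun i => hf i (cf i) (hcf i) (s i) (hs i)) hcol hcol (𝟙 _ - S) (fun i => ?_)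
    change j i ≫ _ = _ ≫ j i
    refine Cofan.IsColimit.hom_ext (hcf i) _ _ (fun n => ?_)
    rw [reassoc_of% (hj i n), Preadditive.sub_comp, Preadditive.comp_sub, Preadditive.comp_sub,
      Category.comp_id, Preadditive.comp_sub, hS, reassoc_of% (hs i n), Category.id_comp, hj,
      Linear.smul_comp, hj, Linear.comp_smul]
end


section
variable {R : Type u} [CommRing R] [HasDerivedCategory.{w'} (ModuleCat.{u} R)]

omit [HasDerivedCategory.{w'} (ModuleCat.{u} R)] in
lemma cxH_smul {K K' : CochainComplex (ModuleCat.{u} R) ℤ} (f : K ⟶ K') (r : R) (n : ℤ) :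
    HomologicalComplex.homologyMap (r • f) n = r • HomologicalComplex.homologyMap f n := by
  have : (HomologicalComplex.shortComplexFunctor (ModuleCat.{u} R) (ComplexShape.up ℤ) n).map (r • f) =
    r • (HomologicalComplex.shortComplexFunctor (ModuleCat.{u} R) (ComplexShape.up ℤ) n).map f := by
    ext <;> rfl
  unfold HomologicalComplex.homologyMap
  rw [this]
  exact ShortComplex.homologyMap_smul ((HomologicalComplex.shortComplexFunctor (ModuleCat.{u} R) (ComplexShape.up ℤ) n).map f) r

omit [HasDerivedCategory.{w'} (ModuleCat.{u} R)] in
lemma conj_smul {C : Type*} [Category C] [Preadditive C] [Linear R C] {A A' B B' : C} (r : R) (e : A ≅ A') (e' : B ≅ B')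
    {f g : A ⟶ B} {f' g' : A' ⟶ B'} (h1 : f ≫ e'.hom = e.hom ≫ f') (h2 : g ≫ e'.hom = e.hom ≫ g')
    (h3 : f' = r • g') : f = r • g := by
  rw [← cancel_mono e'.hom, h1, h3, Linear.comp_smul, ← h2, Linear.smul_comp]

lemma QHH_smul {K K' : CochainComplex (ModuleCat.{u} R) ℤ} (f : K ⟶ K') (r : R) (n : ℤ) :
    (HH R n).map (DerivedCategory.Q.map (r • f)) = r • (HH R n).map (DerivedCategory.Q.map f) := by
  have h1 := (DerivedCategory.homologyFunctorFactors (ModuleCat.{u} R) n).hom.naturality (r • f)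
  have h2 := (DerivedCategory.homologyFunctorFactors (ModuleCat.{u} R) n).hom.naturality f
  have h3 := cxH_smul f r n
  exact conj_smul r ((DerivedCategory.homologyFunctorFactors (ModuleCat.{u} R) n).app K)
    ((DerivedCategory.homologyFunctorFactors (ModuleCat.{u} R) n).app K') h1 h2 h3

lemma HH_smul' {X Y : DerivedCategory (ModuleCat.{u} R)} (f : X ⟶ Y) (r : R) (n : ℤ) :
    (HH R n).map (r • f) = r • (HH R n).map f := by
  have : ∀ X : DerivedCategory (ModuleCat.{u} R), (HH R n).map (r • 𝟙 X) = r • 𝟙 _ := by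
    intro X
    let K := DerivedCategory.Q.objPreimage X
    let e : DerivedCategory.Q.obj K ≅ X := DerivedCategory.Q.objObjPreimageIso X
    have h := QHH_smul (𝟙 K) r n
    rw [Functor.map_smul, CategoryTheory.Functor.map_id, CategoryTheory.Functor.map_id] at h
    have h2 : r • 𝟙 X = e.inv ≫ (r • 𝟙 _) ≫ e.hom := by simp
    rw [h2, Functor.map_comp, Functor.map_comp, h]
    rw [Linear.smul_comp, Linear.comp_smul, Category.id_comp, ← Functor.map_comp, e.inv_hom_id,
      CategoryTheory.Functor.map_id]
  have h2 : r • f = (r • 𝟙 X) ≫ f := by simp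
  rw [h2, Functor.map_comp, this, Linear.smul_comp, Category.id_comp]

lemma HH_smul {X Y : DerivedCategory (ModuleCat.{u} R)} (f : X ⟶ Y) (r : R) (n : ℤ) (z : (HH R n).obj X) :
    (HH R n).map (r • f) z = r • (HH R n).map f z := by
  rw [HH_smul']; rfl

lemma trn_const (X : DerivedCategory (ModuleCat.{u} R)) (g : R) (n m : ℕ) :
    trn (fun _ => X) (fun _ => g • 𝟙 X) n m = g ^ m • 𝟙 X := by
  induction m with
  | zero => simp [trn]
  | succ m ih => rw [trn, ih, pow_succ, Linear.comp_smul, Category.comp_id, smul_smul, mul_comm]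

/-- homology is `g`-power torsion -/
def Tors (g : R) (X : DerivedCategory (ModuleCat.{u} R)) : Prop :=
  ∀ k (z : (HH R k).obj X), ∃ n : ℕ, g ^ n • z = 0

lemma Tors.isIso {g : R} {X : DerivedCategory (ModuleCat.{u} R)} (h : Tors g X)
    {c : Cofan (fun _ : ULift.{u} ℕ => X)} (hc : IsColimit c) (s : c.pt ⟶ c.pt)
    (hs : ∀ i, c.inj i ≫ s = g • c.inj ⟨i.down+1⟩) : IsIso (𝟙 _ - s) := by
  refine tower_iso (fun _ => X) (fun _ => g • 𝟙 X) ?_ hc s (fun i => by rw [hs]; simp)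
  intro n k z
  obtain ⟨m, hm⟩ := h k z
  refine ⟨m, ?_⟩
  rw [trn_const, HH_smul, HH_id, hm]

lemma Tors.mem_locG {g : R} {X : DerivedCategory (ModuleCat.{u} R)} (h : Tors g X)
    {L : Set (DerivedCategory (ModuleCat.{u} R))} (hL : IsLocalizingSub.{u} L) : X ∈ locG g L := by
  intro c hc s hs
  haveI := h.isIso hc s hs
  exact hL.CIn_iso _

lemma Tors.hom_zero {g : R} {X : DerivedCategory (ModuleCat.{u} R)} (h : Tors g X)
    {Y : DerivedCategory (ModuleCat.{u} R)} (hY : IsIso (g • 𝟙 Y)) (v : X ⟶ Y) : v = 0 := by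
  obtain ⟨c, hc, s, hs⟩ := exists_cof X g
  haveI := h.isIso hc s hs
  let iv := inv (g • 𝟙 Y)
  have hiv : iv ≫ (g • 𝟙 Y) = 𝟙 Y := IsIso.inv_hom_id _
  let p : ℕ → (Y ⟶ Y) := fun n => Nat.rec (𝟙 Y) (fun _ q => q ≫ iv) n
  have hp : ∀ n, g • p (n+1) = p n := by
    intro n
    have : g • p (n+1) = p n ≫ iv ≫ (g • 𝟙 Y) := by
      change g • (p n ≫ iv) = _
      rw [Linear.comp_smul, Category.comp_id, Linear.comp_smul]
    rw [this, hiv, Category.comp_id]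
  obtain ⟨V, hV⟩ : ∃ V : c.pt ⟶ Y, ∀ i, c.inj i ≫ V = v ≫ p i.down :=
    ⟨Cofan.IsColimit.desc hc (fun i => v ≫ p i.down), fun i => Cofan.IsColimit.fac hc _ i⟩
  have h0 : (𝟙 _ - s) ≫ V = 0 := Cofan.IsColimit.hom_ext hc _ _ (fun i => by
    rw [Preadditive.sub_comp, Preadditive.comp_sub, Category.id_comp, hV, reassoc_of% (hs i), Linear.smul_comp, hV,
      ← Linear.comp_smul, hp, sub_self, comp_zero])
  have h1 : V = 0 := by
    rw [← cancel_epi (𝟙 _ - s), h0, comp_zero]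
  have h2 := hV ⟨0⟩
  rw [h1, comp_zero] at h2
  change 0 = v ≫ 𝟙 Y at h2
  rw [Category.comp_id] at h2
  exact h2.symm

variable {L : Set (DerivedCategory (ModuleCat.{u} R))} (hL : IsLocalizingSub.{u} L)
include hL

lemma mem_of_locG {g : R} {X : DerivedCategory (ModuleCat.{u} R)} (h1 : CIn L (g • 𝟙 X)) (h2 : X ∈ locG g L) :
    X ∈ L := by
  obtain ⟨c, hc, s, hs⟩ := exists_cof X g
  obtain ⟨S, hS⟩ : ∃ S : c.pt ⟶ c.pt, ∀ i, c.inj i ≫ S = c.inj ⟨i.down+1⟩ :=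
    ⟨Cofan.IsColimit.desc hc (fun i => c.inj ⟨i.down+1⟩), fun i => Cofan.IsColimit.fac hc _ i⟩
  obtain ⟨Φ, hΦ⟩ : ∃ S : c.pt ⟶ c.pt, ∀ i, c.inj i ≫ S = (g^i.down • 𝟙 X) ≫ c.inj i :=
    ⟨Cofan.IsColimit.desc hc (fun i => (g^i.down • 𝟙 X) ≫ c.inj i), fun i => Cofan.IsColimit.fac hc _ i⟩
  have hp : ∀ n : ℕ, CIn L (g ^ n • 𝟙 X) := by
    intro n
    induction n with
    | zero => simpa using hL.CIn_id X
    | succ n ih =>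
      have := hL.CIn_comp ih h1
      rwa [Linear.comp_smul, Category.comp_id, smul_smul, mul_comm, ← pow_succ] at this
  have hC : CIn L Φ := hL.CIn_coprod (fun i : ULift.{u} ℕ => hp i.down) hc hc Φ hΦ
  have e : (𝟙 _ - S) ≫ Φ = Φ ≫ (𝟙 _ - s) := Cofan.IsColimit.hom_ext hc _ _ (fun i => by
    rw [Preadditive.sub_comp, Preadditive.comp_sub, Category.id_comp, reassoc_of% (hS i), hΦ, hΦ,
      reassoc_of% (hΦ i), Preadditive.comp_sub, Category.comp_id, hs]
    simp [smul_smul, pow_succ, mul_comm])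
  obtain ⟨z, p, q, hT, hz⟩ := hL.CIn_left (e ▸ hL.CIn_comp hC (h2 c hc s hs)) hC
  obtain ⟨e⟩ := const_tower_cone hc S hS hT
  exact hL.mem_of_iso e hz
end


section
variable {R : Type u} [CommRing R] [HasDerivedCategory.{w'} (ModuleCat.{u} R)]

/-- homology vanishes in degree k -/
def HZ (X : DerivedCategory (ModuleCat.{u} R)) (k : ℤ) : Prop := ∀ z : (HH R k).obj X, z = 0

lemma HH_shift_iso (X : DerivedCategory (ModuleCat.{u} R)) (n a a' : ℤ) (h : n + a = a') :
    Nonempty ((HH R a).obj (X⟦n⟧) ≅ (HH R a').obj X) :=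
  ⟨((DerivedCategory.homologyFunctor (ModuleCat.{u} R) 0).shiftIso n a a' h).app X⟩

omit [HasDerivedCategory.{w'} (ModuleCat.{u} R)] in
lemma mzero_iso {M N : ModuleCat.{u} R} (e : M ≅ N) (h : ∀ z : N, z = 0) (z : M) : z = 0 :=
  miso_inj e ((h _).trans (map_zero e.hom.hom).symm)

lemma HZ.shift {X : DerivedCategory (ModuleCat.{u} R)} {n a a' : ℤ} (hX : HZ X a') (h : n + a = a') :
    HZ (X⟦n⟧) a := by
  obtain ⟨e⟩ := HH_shift_iso X n a a' h
  exact mzero_iso e hX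

lemma HZ.iso {X Y : DerivedCategory (ModuleCat.{u} R)} {a : ℤ} (hX : HZ X a) (e : X ≅ Y) : HZ Y a :=
  mzero_iso ((HH R a).mapIso e.symm) hX

omit [HasDerivedCategory.{w'} (ModuleCat.{u} R)] in
lemma mzero_of_isZero {M : ModuleCat.{u} R} (h : IsZero M) (z : M) : z = 0 := by
  have := ModuleCat.subsingleton_of_isZero h
  exact Subsingleton.elim _ _

lemma HZ_of_isZero {X : DerivedCategory (ModuleCat.{u} R)} {a : ℤ} (h : IsZero ((HH R a).obj X)) : HZ X a :=
  fun z => mzero_of_isZero h z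

lemma HZ.isZero {X : DerivedCategory (ModuleCat.{u} R)} {a : ℤ} (h : HZ X a) : IsZero ((HH R a).obj X) := by
  have : Subsingleton ((HH R a).obj X) := ⟨fun x y => (h x).trans (h y).symm⟩
  exact ModuleCat.isZero_of_subsingleton _

variable {x y z : DerivedCategory (ModuleCat.{u} R)} {f : x ⟶ y} {g : y ⟶ z} {h : z ⟶ x⟦(1:ℤ)⟧}
    (hT : Triangle.mk f g h ∈ distinguishedTriangles)
include hT

lemma HH_ex2 (k : ℤ) (w : (HH R k).obj y) (hw : (HH R k).map g w = 0) : ∃ v, (HH R k).map f v = w := by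
  have := DerivedCategory.HomologySequence.exact₂ _ hT k
  rw [ShortComplex.moduleCat_exact_iff] at this
  exact this w hw

lemma HH_ex (k l : ℤ) (hkl : k + 1 = l) : ∃ δ : (HH R k).obj z ⟶ (HH R l).obj x,
    (∀ w, δ w = 0 → ∃ v, (HH R k).map g v = w) ∧
    (∀ w, (HH R l).map f w = 0 → ∃ v, δ v = w) ∧
    (∀ w, δ ((HH R k).map g w) = 0) ∧ (∀ w, (HH R l).map f (δ w) = 0) := by
  have h3 := DerivedCategory.HomologySequence.exact₃ _ hT k l hkl
  have h1 := DerivedCategory.HomologySequence.exact₁ _ hT k l hkl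
  rw [ShortComplex.moduleCat_exact_iff] at h1 h3
  refine ⟨DerivedCategory.HomologySequence.δ (Triangle.mk f g h) k l hkl, h3, h1, fun w => ?_, fun w => ?_⟩
  · have := DerivedCategory.HomologySequence.comp_δ _ hT k l hkl
    exact congrArg (fun t => t.hom w) this
  · have := DerivedCategory.HomologySequence.δ_comp _ hT k l hkl
    exact congrArg (fun t => t.hom w) this

lemma HZ.mid {k : ℤ} (hx : HZ x k) (hz : HZ z k) : HZ y k := by
  intro w
  obtain ⟨v, rfl⟩ := HH_ex2 hT k w (hz _)
  rw [hx v, map_zero]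

lemma HZ.right {k l : ℤ} (hkl : k + 1 = l) (hx : HZ x l) (hy : HZ y k) : HZ z k := by
  intro w
  obtain ⟨δ, h1, -⟩ := HH_ex hT k l hkl
  obtain ⟨v, rfl⟩ := h1 w (hx _)
  rw [hy v, map_zero]

lemma HZ.left {k l : ℤ} (hkl : k + 1 = l) (hy : HZ y l) (hz : HZ z k) : HZ x l := by
  intro w
  obtain ⟨δ, -, h1, -⟩ := HH_ex hT k l hkl
  obtain ⟨v, rfl⟩ := h1 w (hy _)
  rw [hz v, map_zero]
end

section
variable {R : Type u} [CommRing R] [HasDerivedCategory.{w'} (ModuleCat.{u} R)]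
variable {L : Set (DerivedCategory (ModuleCat.{u} R))} (hL : IsLocalizingSub.{u} L)
include hL

lemma bddClass (P : Set (DerivedCategory (ModuleCat.{u} R))) (b : ℤ) (hb : ∀ X ∈ P, ∀ k, b < k → HZ X k)
    (step : ∀ X ∈ P, ∃ Y ∈ P, ∃ N ∈ L, ∃ (f : Y ⟶ N) (g : N ⟶ X) (h : X ⟶ Y⟦(1:ℤ)⟧),
      Triangle.mk f g h ∈ distinguishedTriangles) {X} (hX : X ∈ P) : X ∈ L := by
  have key : X⟦((0:ℕ):ℤ)⟧ ∈ L := by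
    refine lemS hL (fun n => {Z | ∃ X ∈ P, Nonempty (Z ≅ X⟦(n:ℤ)⟧)}) (fun k => (b - k + 1).toNat) ?_ _
      ⟨X, hX, ⟨Iso.refl _⟩⟩
    rintro n Z ⟨X, hX, ⟨e⟩⟩
    obtain ⟨Y, hY, N, hN, f, g, h, hT⟩ := step X hX
    refine ⟨(Y⟦(1:ℤ)⟧)⟦(n:ℤ)⟧, ⟨Y, hY, ⟨?_⟩⟩, e.hom ≫ h⟦(n:ℤ)⟧', ?_, ?_⟩
    · exact ((shiftFunctorAdd' _ (1:ℤ) (n:ℤ) ((n+1:ℕ):ℤ) (by push_cast; ring)).app Y).symm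
    · exact hL.CIn_comp (hL.CIn_iso _) (hL.CIn_shift (CIn_of_fiber hL (rot_of_distTriang _ hT) hN) n)
    · intro k hk z
      have : HZ Z k := (((hb X hX (n+k) (by omega)).shift rfl).iso e.symm)
      rw [this z, map_zero]
  exact hL.of_shift _ key
end


section
variable {R : Type u} [CommRing R] [HasDerivedCategory.{w'} (ModuleCat.{u} R)]

lemma HSpan.mem {L : Set (DerivedCategory (ModuleCat.{u} R))} (hL : IsLocalizingSub.{u} L)
    {ι : Type u} {f : ι → DerivedCategory (ModuleCat.{u} R)} {c : Cofan f}
    {pr : ∀ i, c.pt ⟶ f i} (h : HSpan c pr) (hf : ∀ i, f i ∈ L) : c.pt ∈ L := by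
  let c' : Cofan f := colimit.cocone (Discrete.functor f)
  let hc' : IsColimit c' := colimit.isColimit _
  let σ : c'.pt ⟶ c.pt := Cofan.IsColimit.desc hc' (fun i => c.inj i)
  have : IsIso σ := (D_HSpan hc').isIso h σ (fun i => 𝟙 _) (fun i => by
    rw [Category.id_comp]; exact Cofan.IsColimit.fac hc' _ i)
  exact hL.mem_of_iso (asIso σ) (hL.coprod_mem f c' hc' hf)

/-- the map on smod -/
noncomputable def sM {M N : Type u} [AddCommGroup M] [Module R M] [AddCommGroup N] [Module R N] (f : M →ₗ[R] N) :
    smod R (ModuleCat.of R M) ⟶ smod R (ModuleCat.of R N) :=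
  (DerivedCategory.singleFunctor (ModuleCat.{u} R) 0).map (ModuleCat.ofHom f)

section
variable {M N P : Type u} [AddCommGroup M] [Module R M] [AddCommGroup N] [Module R N] [AddCommGroup P] [Module R P]

lemma sM_comp (f : M →ₗ[R] N) (g : N →ₗ[R] P) : sM f ≫ sM g = sM (g ∘ₗ f) := by
  exact (Functor.map_comp (DerivedCategory.singleFunctor (ModuleCat.{u} R) 0) (ModuleCat.ofHom f) (ModuleCat.ofHom g)).symm

lemma sM_id : sM (LinearMap.id : M →ₗ[R] M) = 𝟙 _ := by
  exact CategoryTheory.Functor.map_id _ _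

lemma sM_zero : sM (0 : M →ₗ[R] N) = 0 :=
  Functor.map_zero _ _ _

lemma sM_smul (r : R) (f : M →ₗ[R] N) : sM (r • f) = r • sM f :=
  CategoryTheory.Functor.map_smul (DerivedCategory.singleFunctor (ModuleCat.{u} R) 0) r (ModuleCat.ofHom f)

lemma smod_iso (e : M ≃ₗ[R] N) {L : Set (DerivedCategory (ModuleCat.{u} R))} (hL : IsLocalizingSub.{u} L)
    (h : smod R (ModuleCat.of R M) ∈ L) : smod R (ModuleCat.of R N) ∈ L :=
  hL.mem_of_iso ((DerivedCategory.singleFunctor (ModuleCat.{u} R) 0).mapIso e.toModuleIso) h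

lemma smod_triangle (f : M →ₗ[R] N) (g : N →ₗ[R] P) (hf : Function.Injective f) (hg : Function.Surjective g)
    (hfg : Function.Exact f g) : ∃ h, Triangle.mk (sM f) (sM g) h ∈ distinguishedTriangles := by
  let S : ShortComplex (ModuleCat.{u} R) := ShortComplex.mk (ModuleCat.ofHom f) (ModuleCat.ofHom g) (by
    ext x; exact hfg.apply_apply_eq_zero x)
  have hS : S.ShortExact := 
    { exact := by
        rw [ShortComplex.moduleCat_exact_iff]
        exact fun x hx => (hfg x).1 hx
      mono_f := (ModuleCat.mono_iff_injective _).2 hf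
      epi_g := (ModuleCat.epi_iff_surjective _).2 hg }
  exact ⟨_, hS.singleTriangle_distinguished⟩
variable (R M) in
/-- degree zero homology -/
noncomputable def H0e : (HH R 0).obj (smod R (ModuleCat.of R M)) ≅ ModuleCat.of R M :=
  (DerivedCategory.singleFunctorCompHomologyFunctorIso (ModuleCat.{u} R) 0).app _

lemma H0e_nat (f : M →ₗ[R] N) (z) : (H0e R N).hom ((HH R 0).map (sM f) z) = f ((H0e R M).hom z) := by
  have := (DerivedCategory.singleFunctorCompHomologyFunctorIso (ModuleCat.{u} R) 0).hom.naturality (ModuleCat.ofHom f)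
  exact congrArg (fun t => t.hom z) this

variable (R M) in
lemma smod_HZ {k : ℤ} (hk : k ≠ 0) : HZ (smod R (ModuleCat.of R M)) k := by
  apply HZ_of_isZero
  rcases lt_or_gt_of_ne hk with h | h
  · exact DerivedCategory.isZero_of_isGE ((DerivedCategory.singleFunctor (ModuleCat.{u} R) 0).obj _) 0 k h
  · exact DerivedCategory.isZero_of_isLE ((DerivedCategory.singleFunctor (ModuleCat.{u} R) 0).obj _) 0 k h
end

variable {ι : Type u} [DecidableEq ι] (M : ι → Type u) [∀ i, AddCommGroup (M i)] [∀ i, Module R (M i)]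

omit [HasDerivedCategory.{w'} (ModuleCat.{u} R)] in
lemma ds_sum (x : ⨁ i, M i) : ∃ s : Finset ι, x = ∑ i ∈ s, DirectSum.lof R ι M i (DirectSum.component R ι M i x) := by
  classical
  exact ⟨DFinsupp.support x, (DirectSum.sum_support_of x).symm⟩

lemma smod_HSpan : HSpan (Cofan.mk (smod R (ModuleCat.of R (⨁ i, M i))) (fun i => sM (DirectSum.lof R ι M i)))
    (fun i => sM (DirectSum.component R ι M i)) where
  inj_pr i := by
    change sM _ ≫ sM _ = _
    rw [sM_comp, ← sM_id]
    congr 1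
    ext x
    exact DirectSum.component.lof_self (R := R) (ι := ι) (M := M) i x
  inj_pr_ne i j hij := by
    change sM _ ≫ sM _ = _
    rw [sM_comp, ← sM_zero]
    congr 1
    ext x
    change DirectSum.component R ι M j (DirectSum.lof R ι M i x) = _
    rw [DirectSum.component.of, dif_neg hij]; rfl
  span n z := by
    by_cases h : n = 0
    · subst h
      obtain ⟨s, hs⟩ := ds_sum (R := R) M ((H0e R _).hom z)
      refine ⟨s, ?_⟩
      apply miso_inj (H0e R _)
      rw [map_sum]
      refine hs.trans ?_
      refine Finset.sum_congr rfl (fun i _ => ?_)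
      have h1 := H0e_nat (DirectSum.component R ι M i) z
      have h2 := H0e_nat (DirectSum.lof R ι M i) ((HH R 0).map (sM (DirectSum.component R ι M i)) z)
      rw [h1] at h2
      exact h2.symm
    · exact ⟨∅, smod_HZ R _ h z⟩

lemma smod_sum {L : Set (DerivedCategory (ModuleCat.{u} R))} (hL : IsLocalizingSub.{u} L)
    (h : ∀ i, smod R (ModuleCat.of R (M i)) ∈ L) : smod R (ModuleCat.of R (⨁ i, M i)) ∈ L :=
  (smod_HSpan M).mem hL h
end
section
variable {R : Type u} [CommRing R] [HasDerivedCategory.{w'} (ModuleCat.{u} R)]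
variable {L : Set (DerivedCategory (ModuleCat.{u} R))} (hL : IsLocalizingSub.{u} L)
include hL

lemma smod_class (P : ModuleCat.{u} R → Prop) (step : ∀ M : ModuleCat.{u} R, P M →
    ∃ (N : Type u) (_ : AddCommGroup N) (_ : Module R N) (g : N →ₗ[R] M), Function.Surjective g ∧
      smod R (ModuleCat.of R N) ∈ L ∧ P (ModuleCat.of R (LinearMap.ker g))) (M : ModuleCat.{u} R) (hM : P M) :
    smod R M ∈ L := by
  refine bddClass hL {X | ∃ M, P M ∧ X = smod R M} 0 ?_ ?_ ⟨M, hM, rfl⟩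
  · rintro X ⟨M, hM, rfl⟩ k hk
    exact smod_HZ R M (by omega)
  · rintro X ⟨M, hM, rfl⟩
    obtain ⟨N, _, _, g, hg, hN, hK⟩ := step M hM
    obtain ⟨h, hT⟩ := smod_triangle (LinearMap.ker g).subtype g (Submodule.subtype_injective _) hg
      (LinearMap.exact_subtype_ker_map g)
    exact ⟨_, ⟨_, hK, rfl⟩, _, hN, _, _, h, hT⟩

lemma smod_fam (F : Set (Ideal R)) (hne : F.Nonempty) (hF : ∀ I ∈ F, ∀ J ∈ F, ∃ K ∈ F, K ≤ I ∧ K ≤ J)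
    (hFL : ∀ I ∈ F, smod R (ModuleCat.of R (R ⧸ I)) ∈ L) (M : ModuleCat.{u} R)
    (hM : ∀ m : M, ∃ I ∈ F, ∀ r ∈ I, r • m = 0) : smod R M ∈ L := by
  classical
  refine smod_class hL (fun M => ∀ m : M, ∃ I ∈ F, ∀ r ∈ I, r • m = 0) ?_ M hM
  intro M hM
  choose I hI hk using hM
  let g : (⨁ m : M, R ⧸ I m) →ₗ[R] M := DirectSum.toModule R M M (fun m =>
    Submodule.liftQ (I m) (LinearMap.toSpanSingleton R M m) (fun r hr => hk m r hr))
  refine ⟨_, _, _, g, ?_, smod_sum _ hL (fun m => hFL _ (hI m)), ?_⟩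
  · intro m
    refine ⟨DirectSum.lof R M (fun m => R ⧸ I m) m (Submodule.Quotient.mk 1), ?_⟩
    simp only [g, DirectSum.toModule_lof]
    erw [Submodule.liftQ_apply]
    simp
  · rintro ⟨x, hx⟩
    have key : ∃ J ∈ F, ∀ r ∈ J, r • x = 0 := by
      clear hx
      induction x using DirectSum.induction_on with
      | zero => obtain ⟨J, hJ⟩ := hne; exact ⟨J, hJ, fun r _ => smul_zero _⟩
      | of m y =>
        refine ⟨I m, hI m, fun r hr => ?_⟩
        have h1 := (DirectSum.lof R M (fun m => R ⧸ I m) m).map_smul r y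
        have h2 : r • y = 0 := by
          obtain ⟨y, rfl⟩ := Ideal.Quotient.mk_surjective y
          rw [← Ideal.Quotient.mk_eq_mk, ← Submodule.Quotient.mk_smul, Submodule.Quotient.mk_eq_zero]
          exact Ideal.mul_mem_right _ _ hr
        rw [h2, map_zero] at h1
        exact h1.symm
      | add x y hx hy =>
        obtain ⟨A, hA, h1⟩ := hx
        obtain ⟨B, hB, h2⟩ := hy
        obtain ⟨K, hK, h3, h4⟩ := hF A hA B hB
        exact ⟨K, hK, fun r hr => by rw [smul_add, h1 r (h3 hr), h2 r (h4 hr), add_zero]⟩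
    obtain ⟨J, hJ, h⟩ := key
    exact ⟨J, hJ, fun r hr => Subtype.ext (h r hr)⟩

lemma smod_killed (J : Ideal R) (hJ : smod R (ModuleCat.of R (R ⧸ J)) ∈ L) (M : ModuleCat.{u} R)
    (hM : ∀ m : M, ∀ r ∈ J, r • m = 0) : smod R M ∈ L :=
  smod_fam hL {J} ⟨J, rfl⟩ (by rintro _ rfl _ rfl; exact ⟨_, rfl, le_rfl, le_rfl⟩) (by rintro _ rfl; exact hJ) M
    (fun m => ⟨J, rfl, hM m⟩)

lemma smod_quot_le {I J : Ideal R} (hJ : smod R (ModuleCat.of R (R ⧸ J)) ∈ L) (h : J ≤ I) :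
    smod R (ModuleCat.of R (R ⧸ I)) ∈ L := by
  refine smod_killed hL J hJ _ (fun (m : R ⧸ I) r hr => ?_)
  obtain ⟨m, rfl⟩ := Ideal.Quotient.mk_surjective m
  rw [← Ideal.Quotient.mk_eq_mk, ← Submodule.Quotient.mk_smul]
  exact (Submodule.Quotient.mk_eq_zero _).2 (Ideal.mul_mem_right _ _ (h hr))

lemma smod_quot_mul {I J : Ideal R} (hI : smod R (ModuleCat.of R (R ⧸ I)) ∈ L) (hJ : smod R (ModuleCat.of R (R ⧸ J)) ∈ L) :
    smod R (ModuleCat.of R (R ⧸ (I * J))) ∈ L := by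
  let g : (R ⧸ (I * J)) →ₗ[R] (R ⧸ I) := Submodule.mapQ _ _ LinearMap.id (by
    exact (Ideal.mul_le_inf (I := I) (J := J)).trans inf_le_left)
  have hg : Function.Surjective g := by
    intro x
    obtain ⟨x, rfl⟩ := Ideal.Quotient.mk_surjective x
    exact ⟨Submodule.Quotient.mk x, rfl⟩
  obtain ⟨h, hT⟩ := smod_triangle (LinearMap.ker g).subtype g (Submodule.subtype_injective _) hg
      (LinearMap.exact_subtype_ker_map g)
  refine hL.mem₂ hT ?_ hI
  refine smod_killed hL J hJ _ ?_
  rintro ⟨x, hx⟩ r hr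
  apply Subtype.ext
  obtain ⟨x, rfl⟩ := Ideal.Quotient.mk_surjective x
  have hx' : x ∈ I := (Submodule.Quotient.mk_eq_zero I).1 hx
  change r • (Submodule.Quotient.mk x : R ⧸ (I*J)) = 0
  rw [← Submodule.Quotient.mk_smul]
  refine (Submodule.Quotient.mk_eq_zero _).2 ?_
  have h3 := Ideal.mul_mem_mul hx' hr
  rwa [mul_comm x r] at h3

lemma smod_quot_top : smod R (ModuleCat.of R (R ⧸ (⊤ : Ideal R))) ∈ L := by
  refine hL.mem_of_iso (IsZero.iso (isZero_zero _) ?_) hL.zero_mem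
  exact Functor.map_isZero _ (ModuleCat.isZero_of_subsingleton _)

lemma smod_quot_pow {I : Ideal R} (hI : smod R (ModuleCat.of R (R ⧸ I)) ∈ L) (n : ℕ) :
    smod R (ModuleCat.of R (R ⧸ (I ^ n))) ∈ L := by
  induction n with
  | zero => rw [pow_zero, Ideal.one_eq_top]; exact smod_quot_top hL
  | succ n ih => rw [pow_succ]; exact smod_quot_mul hL ih hI

lemma smod_quot_rad {I J : Ideal R} (hJ : smod R (ModuleCat.of R (R ⧸ J)) ∈ L) (hfg : J.FG) (h : J ≤ I.radical) :
    smod R (ModuleCat.of R (R ⧸ I)) ∈ L := by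
  obtain ⟨n, hn⟩ := Ideal.exists_pow_le_of_le_radical_of_fg h hfg
  exact smod_quot_le hL (smod_quot_pow hL hJ n) hn

/-- each element is killed by some I with R/I in L -/
lemma smod_loc (M : ModuleCat.{u} R) (hM : ∀ m : M, ∃ I : Ideal R, smod R (ModuleCat.of R (R ⧸ I)) ∈ L ∧
    ∀ r ∈ I, r • m = 0) : smod R M ∈ L := by
  refine smod_fam hL {I | smod R (ModuleCat.of R (R ⧸ I)) ∈ L} ⟨⊤, smod_quot_top hL⟩ ?_ (fun _ h => h) M hM
  exact fun I hI J hJ => ⟨I * J, smod_quot_mul hL hI hJ, Ideal.mul_le_inf.trans inf_le_left, Ideal.mul_le_inf.trans inf_le_right⟩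
end


section
variable {R : Type u} [CommRing R] [HasDerivedCategory.{w'} (ModuleCat.{u} R)]

/-- elements of homology killed by ideals I with R/I in L -/
def TorsL (L : Set (DerivedCategory (ModuleCat.{u} R))) (X : DerivedCategory (ModuleCat.{u} R)) : Prop :=
  ∀ k (z : (HH R k).obj X), ∃ I : Ideal R, smod R (ModuleCat.of R (R ⧸ I)) ∈ L ∧ ∀ r ∈ I, r • z = 0

lemma HH_smul_elt {X Y : DerivedCategory (ModuleCat.{u} R)} (f : X ⟶ Y) (k : ℤ) (r : R) (z : (HH R k).obj X) :
    (HH R k).map f (r • z) = r • (HH R k).map f z := map_smul ((HH R k).map f).hom r z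

variable {L : Set (DerivedCategory (ModuleCat.{u} R))} (hL : IsLocalizingSub.{u} L)
include hL

lemma mem_of_allzero {X : DerivedCategory (ModuleCat.{u} R)} (h : ∀ k, HZ X k) : X ∈ L := by
  have : IsIso (0 : (0 : DerivedCategory (ModuleCat.{u} R)) ⟶ X) := by
    apply isIso_of_HH
    intro n
    have h0 : HZ (0 : DerivedCategory (ModuleCat.{u} R)) n :=
      HZ_of_isZero (Functor.map_isZero _ (isZero_zero _))
    exact ⟨fun a b _ => (h0 a).trans (h0 b).symm, fun y => ⟨0, (HH_zero n 0).trans (h n y).symm⟩⟩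
  exact hL.mem_of_iso (asIso (0 : (0 : DerivedCategory (ModuleCat.{u} R)) ⟶ X)) hL.zero_mem

lemma bdd_mem_aux (n : ℕ) : ∀ (X : DerivedCategory (ModuleCat.{u} R)) (a : ℤ) (_ : ∀ k, k < a → HZ X k)
    (_ : ∀ k, a + n ≤ k → HZ X k) (_ : TorsL L X), X ∈ L := by
  induction n with
  | zero =>
    intro X a h1 h2 _
    refine mem_of_allzero hL (fun k => ?_)
    rcases lt_or_ge k a with h | h
    · exact h1 k h
    · exact h2 k (by simpa using h)
  | succ n ih =>
    intro X a h1 h2 hX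
    obtain ⟨A, B, hA, hB, f, g, h, hT⟩ := DerivedCategory.TStructure.t.exists_triangle X a (a+1) rfl
    have hA' : ∀ k, a < k → HZ A k := fun k hk => HZ_of_isZero ((DerivedCategory.isLE_iff A a).1 ⟨hA⟩ k hk)
    have hB' : ∀ k, k < a + 1 → HZ B k := fun k hk => HZ_of_isZero ((DerivedCategory.isGE_iff B (a+1)).1 ⟨hB⟩ k hk)
    have hA2 : ∀ k, k < a → HZ A k := fun k hk => HZ.left hT (k := k-1) (by omega) (h1 k hk) (hB' _ (by omega))
    refine hL.mem₂ hT ?_ ?_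
    · haveI : A.IsLE a := ⟨hA⟩
      haveI : A.IsGE a := (DerivedCategory.isGE_iff A a).2 (fun i hi => (hA2 i hi).isZero)
      obtain ⟨Y, ⟨e⟩⟩ := DerivedCategory.exists_iso_singleFunctor_obj_of_isGE_of_isLE A a
      let e1 : A⟦a⟧ ≅ smod R Y := (shiftFunctor _ a).mapIso e ≪≫
        ((DerivedCategory.singleFunctors (ModuleCat.{u} R)).shiftIso a 0 a (by simp)).app Y
      apply hL.of_shift a
      refine hL.mem_of_iso e1.symm (smod_loc hL Y ?_)
      obtain ⟨e2⟩ := HH_shift_iso A a 0 a (by simp)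
      let e3 : Y ≅ (HH R a).obj A := (H0e R Y).symm ≪≫ (HH R 0).mapIso e1.symm ≪≫ e2
      intro y
      obtain ⟨I, hI, hk⟩ := hX a ((HH R a).map f (e3.hom y))
      refine ⟨I, hI, fun r hr => ?_⟩
      apply miso_inj e3
      rw [map_zero]
      change e3.hom.hom (r • y) = 0
      rw [map_smul]
      obtain ⟨δ, -, h5, -⟩ := HH_ex hT (a-1) a (by omega)
      obtain ⟨v, hv⟩ := h5 (r • e3.hom y) (by rw [HH_smul_elt]; exact hk r hr)
      rw [hB' (a-1) (by omega) v, map_zero] at hv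
      exact hv.symm
    · refine ih B (a+1) hB' ?_ ?_
      · intro k hk
        exact HZ.right hT (rfl : k + 1 = k + 1) (hA' _ (by omega)) (h2 k (by push_cast; omega))
      · intro k z
        rcases lt_or_ge k (a+1) with hk | hk
        · exact ⟨⊤, smod_quot_top hL, fun r _ => by rw [hB' k hk z, smul_zero]⟩
        · obtain ⟨δ, h5, -⟩ := HH_ex hT k (k+1) rfl
          obtain ⟨v, rfl⟩ := h5 z (hA' _ (by omega) _)
          obtain ⟨I, hI, hk⟩ := hX k v
          refine ⟨I, hI, fun r hr => ?_⟩
          rw [← HH_smul_elt, hk r hr, map_zero]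

/-- bounded homology -/
lemma bdd_mem {X : DerivedCategory (ModuleCat.{u} R)} (a b : ℤ) (h1 : ∀ k, k < a → HZ X k)
    (h2 : ∀ k, b < k → HZ X k) (h : TorsL L X) : X ∈ L :=
  bdd_mem_aux hL (b + 1 - a).toNat X a h1 (fun k hk => h2 k (by omega)) h

/-- β2 -/
lemma beta2 {J : Ideal R} {g : R} (h1 : smod R (ModuleCat.of R (R ⧸ (J ⊔ Ideal.span {g}))) ∈ L)
    (h2 : smod R (ModuleCat.of R (R ⧸ J)) ∈ locG g L) : smod R (ModuleCat.of R (R ⧸ J)) ∈ L := by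
  refine mem_of_locG hL ?_ h2
  obtain ⟨Z, q, h, hT⟩ := distinguished_cocone_triangle (g • 𝟙 (smod R (ModuleCat.of R (R ⧸ J))))
  refine ⟨Z, q, h, hT, ?_⟩
  have hZ : ∀ k, k < -1 ∨ 0 < k → HZ Z k := fun k hk => 
    HZ.right hT (rfl : k + 1 = k + 1) (smod_HZ R _ (by omega)) (smod_HZ R _ (by omega))
  refine bdd_mem hL (-1) 0 (fun k hk => hZ k (Or.inl hk)) (fun k hk => hZ k (Or.inr hk)) ?_
  have hJ : ∀ (r : R) (hr : r ∈ J) k (z : (HH R k).obj (smod R (ModuleCat.of R (R ⧸ J)))), r • z = 0 := by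
    intro r hr k z
    have h3 : r • 𝟙 (smod R (ModuleCat.of R (R ⧸ J))) = 0 := by
      rw [← sM_id, ← sM_smul, ← sM_zero]
      congr 1
      ext x
      exact (Submodule.Quotient.mk_eq_zero _).2 (Ideal.mul_mem_right _ _ hr)
    have h4 := HH_smul (𝟙 (smod R (ModuleCat.of R (R ⧸ J)))) r k z
    rw [h3, HH_zero, HH_id] at h4
    exact h4.symm
  have hk : ∀ (r : R) (hr : r ∈ J ⊔ Ideal.span {g}), (∀ k (z : (HH R k).obj (smod R (ModuleCat.of R (R ⧸ J)))), ∃ v, r • z = g • v) := by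
    intro r hr k z
    obtain ⟨a, ha, b, hb, rfl⟩ := Submodule.mem_sup.1 hr
    obtain ⟨c, rfl⟩ := Ideal.mem_span_singleton.1 hb
    exact ⟨c • z, by rw [add_smul, hJ a ha, zero_add, mul_smul]⟩
  intro k z
  refine ⟨(J ⊔ Ideal.span {g}) ^ 2, smod_quot_pow hL h1 2, ?_⟩
  suffices h : ∀ r ∈ J ⊔ Ideal.span {g}, ∀ s ∈ J ⊔ Ideal.span {g}, (r * s) • z = 0 by
    intro r hr
    rw [pow_two] at hr
    induction hr using Submodule.mul_induction_on' with
    | mem_mul_mem r hr s hs => exact h r hr s hs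
    | add x _ y _ hx hy => rw [add_smul, hx, hy, add_zero]
  intro r hr s hs
  obtain ⟨δ, h3, h4, h5, h6⟩ := HH_ex hT k (k+1) rfl
  have hs0 : δ (s • z) = 0 := by
    have e1 : δ (s • z) = s • δ z := map_smul δ.hom s z
    have e2 : g • δ z = 0 := by
      have := h6 z
      rwa [HH_smul, HH_id] at this
    obtain ⟨a, ha, b, hb, rfl⟩ := Submodule.mem_sup.1 hs
    obtain ⟨c, rfl⟩ := Ideal.mem_span_singleton.1 hb
    rw [e1, add_smul, hJ a ha, zero_add, mul_comm, mul_smul, e2, smul_zero]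
  obtain ⟨v, hv⟩ := h3 _ hs0
  rw [mul_smul, ← hv, ← HH_smul_elt]
  obtain ⟨v', hv'⟩ := hk r hr k v
  rw [hv', ← HH_id k v', ← HH_smul, ← HH_comp, tz12 hT, HH_zero]
end


section
variable {R : Type u} [CommRing R]

/-- matrix complexes -/
structure MC (R : Type u) [CommRing R] where
  E : Type
  fin : Fintype E
  dec : DecidableEq E
  m : E → ℕ
  d : Matrix E E R
  hd : ∀ x y, d x y ≠ 0 → m x = m y + 1
  hdd : ∀ x y, ∑ z, d x z * d z y = 0

attribute [instance] MC.fin MC.dec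

namespace MC
/-- degree i part -/
abbrev deg (C : MC R) (i : ℤ) : Type := {e : C.E // (C.m e : ℤ) = i}

/-- matrix map -/
noncomputable def mm {C C' : MC R} (A : Matrix C'.E C.E R) (N : Type u) [AddCommGroup N] [Module R N] (i j : ℤ) :
    (C.deg i → N) →ₗ[R] (C'.deg j → N) where
  toFun v x := ∑ y, A x.1 y.1 • v y
  map_add' v w := by ext x; simp [Finset.sum_add_distrib]
  map_smul' r v := by ext x; simp [Finset.smul_sum, smul_comm r]

variable (N N' : Type u) [AddCommGroup N] [Module R N] [AddCommGroup N'] [Module R N']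

/-- homogeneous -/
def IsDeg {C C' : MC R} (A : Matrix C'.E C.E R) (n : ℤ) : Prop := ∀ x y, A x y ≠ 0 → (C'.m x : ℤ) = C.m y + n

lemma mm_comp {C C' C'' : MC R} (A : Matrix C''.E C'.E R) (B : Matrix C'.E C.E R) {n : ℤ} (hB : IsDeg B n) (i j k : ℤ)
    (h : i + n = j) : mm A N j k ∘ₗ mm B N i j = mm (A * B) N i k := by
  refine LinearMap.ext fun v => funext fun x => ?_
  simp only [mm, LinearMap.comp_apply, LinearMap.coe_mk, AddHom.coe_mk]
  simp only [Finset.smul_sum, smul_smul]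
  rw [Finset.sum_comm]
  refine Finset.sum_congr rfl (fun z _ => ?_)
  rw [← Finset.sum_smul, Matrix.mul_apply]
  congr 1
  symm
  rw [← Finset.sum_filter_add_sum_filter_not Finset.univ (fun e => (C'.m e : ℤ) = j)]
  rw [Finset.sum_eq_zero (s := Finset.univ.filter (fun e => ¬ (C'.m e : ℤ) = j)), add_zero]
  · exact Finset.sum_subtype _ (by simp) (fun y => A x.1 y * B y z.1)
  · intro y hy
    have : B y z.1 = 0 := by
      by_contra h1
      have h2 := hB _ _ h1
      have h3 := z.2
      have h4 := (Finset.mem_filter.1 hy).2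
      omega
    rw [this, mul_zero]

lemma mm_zero {C C' : MC R} (A : Matrix C'.E C.E R) {n : ℤ} (hA : IsDeg A n) (i j : ℤ) (h : i + n ≠ j) :
    mm A N i j = 0 := by
  refine LinearMap.ext fun v => funext fun x => ?_
  simp only [mm, LinearMap.coe_mk, AddHom.coe_mk]
  refine Finset.sum_eq_zero (fun y _ => ?_)
  have : A x.1 y.1 = 0 := by
    by_contra h1
    have := hA _ _ h1
    have h2 := x.2
    have h3 := y.2
    omega
  rw [this, zero_smul]

lemma mm_smul {C C' : MC R} (A : Matrix C'.E C.E R) (i j : ℤ) (r : R) : mm (r • A) N i j = r • mm A N i j := by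
  refine LinearMap.ext fun v => funext fun x => ?_
  simp [mm, Finset.smul_sum, mul_smul]

lemma mm_add {C C' : MC R} (A B : Matrix C'.E C.E R) (i j : ℤ) : mm (A + B) N i j = mm A N i j + mm B N i j := by
  refine LinearMap.ext fun v => funext fun x => ?_
  simp [mm, add_smul, Finset.sum_add_distrib]

lemma mm_one (C : MC R) (i : ℤ) : mm (1 : Matrix C.E C.E R) N i i = LinearMap.id := by
  refine LinearMap.ext fun v => funext fun x => ?_
  simp only [mm, LinearMap.coe_mk, AddHom.coe_mk, LinearMap.id_apply]
  rw [Finset.sum_eq_single x]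
  · simp
  · intro y _ hy
    rw [Matrix.one_apply_ne (fun h => hy (Subtype.ext h.symm)), zero_smul]
  · simp

lemma mm_zeromat (C C' : MC R) (i j : ℤ) : mm (0 : Matrix C'.E C.E R) N i j = 0 := by
  refine LinearMap.ext fun v => funext fun x => ?_
  simp [mm]

lemma isDeg_d (C : MC R) : IsDeg C.d 1 := fun x y h => by have := C.hd x y h; omega

lemma d_mul_d (C : MC R) : C.d * C.d = 0 := by
  ext x y; exact C.hdd x y

/-- the complex -/
noncomputable def cx (C : MC R) (N : Type u) [AddCommGroup N] [Module R N] : CochainComplex (ModuleCat.{u} R) ℤ where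
  X i := ModuleCat.of R (C.deg i → N)
  d i j := ModuleCat.ofHom (mm C.d N i j)
  shape i j h := by
    rw [mm_zero N C.d C.isDeg_d i j h]; rfl
  d_comp_d' i j k h1 h2 := by
    rw [← ModuleCat.ofHom_comp, mm_comp N _ _ C.isDeg_d i j k h1, d_mul_d, mm_zeromat]; rfl

/-- chain map from matrix -/
noncomputable def map {C C' : MC R} (A : Matrix C'.E C.E R) (hA : IsDeg A 0) (h : A * C.d = C'.d * A) : C.cx N ⟶ C'.cx N where
  f i := ModuleCat.ofHom (mm A N i i)
  comm' i j hij := by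
    change ModuleCat.ofHom _ ≫ ModuleCat.ofHom (mm C'.d N i j) = ModuleCat.ofHom (mm C.d N i j) ≫ ModuleCat.ofHom _
    rw [← ModuleCat.ofHom_comp, ← ModuleCat.ofHom_comp, mm_comp N _ _ hA i i j (by simp),
      mm_comp N _ _ C.isDeg_d i j j hij, h]

lemma map_comp {C C' C'' : MC R} (A : Matrix C'.E C.E R) (hA : IsDeg A 0) (h : A * C.d = C'.d * A)
    (A' : Matrix C''.E C'.E R) (hA' : IsDeg A' 0) (h' : A' * C'.d = C''.d * A') (B : Matrix C''.E C.E R) (hB : IsDeg B 0)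
    (hBd : B * C.d = C''.d * B) (hAB : A' * A = B) : map N A hA h ≫ map N A' hA' h' = map N B hB hBd := by
  ext i : 1
  change ModuleCat.ofHom _ ≫ ModuleCat.ofHom _ = ModuleCat.ofHom _
  rw [← ModuleCat.ofHom_comp, mm_comp N _ _ hA i i i (by simp), hAB]

variable {N N'}
/-- coefficient map -/
noncomputable def coef (C : MC R) (f : N →ₗ[R] N') : C.cx N ⟶ C.cx N' where
  f i := ModuleCat.ofHom (LinearMap.compLeft f (C.deg i))
  comm' i j hij := by
    ext v
    refine funext fun x => ?_
    change ∑ y, _ • f (v y) = f (∑ y, _ • v y)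
    rw [map_sum]
    exact Finset.sum_congr rfl (fun y _ => (map_smul f _ _).symm)

end MC
end


section
variable {R : Type u} [CommRing R] [HasDerivedCategory.{w'} (ModuleCat.{u} R)]

/-- class of a cycle -/
noncomputable def cls (K : CochainComplex (ModuleCat.{u} R) ℤ) (n : ℤ) : K.cycles n ⟶ (HH R n).obj (DerivedCategory.Q.obj K) :=
  K.homologyπ n ≫ (DerivedCategory.homologyFunctorFactors (ModuleCat.{u} R) n).inv.app K

lemma cls_surj (K : CochainComplex (ModuleCat.{u} R) ℤ) (n : ℤ) : Function.Surjective (cls K n) := by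
  have h1 : Epi ((DerivedCategory.homologyFunctorFactors (ModuleCat.{u} R) n).inv.app K) := inferInstance
  have h2 : Epi (K.homologyπ n) := inferInstance
  haveI : Epi (cls K n) := @epi_comp _ _ _ _ _ _ h2 _ h1
  exact msurj (cls K n)

omit [HasDerivedCategory.{w'} (ModuleCat.{u} R)] in
lemma abs_nat {C : Type*} [Category C] {a b c a' b' c' : C} {p : a ⟶ b} {i : b ⟶ c} {s : c ⟶ c'} {t : b ⟶ b'} {i' : b' ⟶ c'}
    {k : a ⟶ a'} {p' : a' ⟶ b'} (h1 : t ≫ i' = i ≫ s) (h2 : p ≫ t = k ≫ p') : (p ≫ i) ≫ s = k ≫ (p' ≫ i') := by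
  rw [Category.assoc, ← h1, ← Category.assoc, h2, Category.assoc]

lemma cls_nat {K K' : CochainComplex (ModuleCat.{u} R) ℤ} (f : K ⟶ K') (n : ℤ) (x : K.cycles n) :
    (HH R n).map (DerivedCategory.Q.map f) (cls K n x) = cls K' n (HomologicalComplex.cyclesMap f n x) := by
  have h1 := (DerivedCategory.homologyFunctorFactors (ModuleCat.{u} R) n).inv.naturality f
  have h2 := HomologicalComplex.homologyπ_naturality f n
  have h3 : cls K n ≫ (HH R n).map (DerivedCategory.Q.map f) = HomologicalComplex.cyclesMap f n ≫ cls K' n := abs_nat h1 h2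
  exact congrArg (fun t => t.hom x) h3

lemma HZ_Q {K : CochainComplex (ModuleCat.{u} R) ℤ} {n : ℤ} (h : ∀ x : K.X n, x = 0) : HZ (DerivedCategory.Q.obj K) n := by
  intro z
  obtain ⟨x, rfl⟩ := cls_surj K n z
  have : x = 0 := minj (K.iCycles n) ((h _).trans (h _).symm)
  rw [this, map_zero]

lemma cls_congr {K K' : CochainComplex (ModuleCat.{u} R) ℤ} (f : K ⟶ K') {n : ℤ} (x : K.cycles n) (y : K'.cycles n)
    (h : f.f n (K.iCycles n x) = K'.iCycles n y) : (HH R n).map (DerivedCategory.Q.map f) (cls K n x) = cls K' n y := by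
  rw [cls_nat]
  congr 1
  apply minj (K'.iCycles n)
  rw [← h, ← ModuleCat.comp_apply, HomologicalComplex.cyclesMap_i, ModuleCat.comp_apply]

lemma HSpan_of_cx {ι : Type u} {X : ι → CochainComplex (ModuleCat.{u} R) ℤ} (Y : CochainComplex (ModuleCat.{u} R) ℤ)
    (i : ∀ j, X j ⟶ Y) (p : ∀ j, Y ⟶ X j) (h1 : ∀ j, i j ≫ p j = 𝟙 _) (h2 : ∀ j k, j ≠ k → i j ≫ p k = 0)
    (h3 : ∀ n (x : Y.X n), ∃ s : Finset ι, x = ∑ j ∈ s, (i j).f n ((p j).f n x)) :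
    HSpan (Cofan.mk (DerivedCategory.Q.obj Y) (fun j => DerivedCategory.Q.map (i j))) 
      (fun j => DerivedCategory.Q.map (p j)) where
  inj_pr j := by
    change DerivedCategory.Q.map (i j) ≫ _ = _
    rw [← Functor.map_comp, h1, CategoryTheory.Functor.map_id]
  inj_pr_ne j k h := by
    change DerivedCategory.Q.map (i j) ≫ _ = _
    rw [← Functor.map_comp, h2 _ _ h, Functor.map_zero]
  span n z := by
    obtain ⟨x, rfl⟩ := cls_surj Y n z
    obtain ⟨s, hs⟩ := h3 n (Y.iCycles n x)
    refine ⟨s, ?_⟩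
    have : x = ∑ j ∈ s, HomologicalComplex.cyclesMap (i j) n (HomologicalComplex.cyclesMap (p j) n x) := by
      apply minj (Y.iCycles n)
      rw [map_sum]
      refine hs.trans (Finset.sum_congr rfl fun j _ => ?_)
      rw [← ModuleCat.comp_apply, ← ModuleCat.comp_apply, ← ModuleCat.comp_apply, ← ModuleCat.comp_apply]
      congr 2
      simp
    conv_lhs => rw [this]
    rw [map_sum]
    refine Finset.sum_congr rfl fun j _ => ?_
    rw [cls_nat]
    exact (cls_nat _ _ _).symm

lemma Q_triangle {X Y Z : CochainComplex (ModuleCat.{u} R) ℤ} (f : X ⟶ Y) (g : Y ⟶ Z) 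
    (hf : ∀ n, Function.Injective (f.f n)) (hg : ∀ n, Function.Surjective (g.f n))
    (hfg : ∀ n, Function.Exact (f.f n) (g.f n)) : 
    ∃ h, Triangle.mk (DerivedCategory.Q.map f) (DerivedCategory.Q.map g) h ∈ distinguishedTriangles := by
  let S : ShortComplex (CochainComplex (ModuleCat.{u} R) ℤ) := ShortComplex.mk f g (by
    ext n x; exact (hfg n).apply_apply_eq_zero x)
  have hS : S.ShortExact := HomologicalComplex.shortExact_of_degreewise_shortExact S (fun n => 
    { exact := by
        rw [ShortComplex.moduleCat_exact_iff]
        exact fun x hx => (hfg n x).1 hx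
      mono_f := (ModuleCat.mono_iff_injective _).2 (hf n)
      epi_g := (ModuleCat.epi_iff_surjective _).2 (hg n) })
  exact ⟨_, DerivedCategory.triangleOfSES_distinguished hS⟩

namespace MC
variable (C : MC R)

/-- object in D(R) -/
noncomputable def DD (C : MC R) (N : Type u) [AddCommGroup N] [Module R N] : DerivedCategory (ModuleCat.{u} R) :=
  DerivedCategory.Q.obj (C.cx N)

lemma exists_bound : ∃ B : ℕ, ∀ e, C.m e < B := 
  ⟨(Finset.univ.sup C.m) + 1, fun e => Nat.lt_succ_of_le (Finset.le_sup (Finset.mem_univ e))⟩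

lemma DD_HZ {B : ℕ} (hB : ∀ e, C.m e < B) (N : Type u) [AddCommGroup N] [Module R N] (k : ℤ) (hk : k < 0 ∨ (B:ℤ) ≤ k) :
    HZ (C.DD N) k := by
  apply HZ_Q
  intro x
  refine funext fun e => ?_
  have := e.2
  have := hB e.1
  omega

lemma DD_triangle {N N' N'' : Type u} [AddCommGroup N] [Module R N] [AddCommGroup N'] [Module R N'] [AddCommGroup N''] [Module R N'']
    (f : N →ₗ[R] N') (g : N' →ₗ[R] N'') (hf : Function.Injective f) (hg : Function.Surjective g)
    (hfg : Function.Exact f g) : ∃ (a : C.DD N ⟶ C.DD N') (b : C.DD N' ⟶ C.DD N'') (h : _), Triangle.mk a b h ∈ distinguishedTriangles := by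
  refine ⟨_, _, Q_triangle (C.coef f) (C.coef g) ?_ ?_ ?_⟩
  · intro n v w h
    exact funext fun x => hf (congrFun h x)
  · intro n v
    choose s hs using hg
    exact ⟨fun x => s (v x), funext fun x => hs _⟩
  · intro n v
    constructor
    · intro h
      choose s hs using fun x => (hfg (v x)).1 (congrFun h x)
      exact ⟨s, funext hs⟩
    · rintro ⟨v, rfl⟩
      exact funext fun x => hfg.apply_apply_eq_zero _

variable {L : Set (DerivedCategory (ModuleCat.{u} R))} (hL : IsLocalizingSub.{u} L)
include hL

lemma DD_sum (h : C.DD R ∈ L) (ι : Type u) [DecidableEq ι] : C.DD (⨁ _ : ι, R) ∈ L := by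
  have := HSpan_of_cx (X := fun _ : ι => C.cx R) (C.cx (⨁ _ : ι, R)) (fun i => C.coef (DirectSum.lof R ι (fun _ => R) i))
    (fun i => C.coef (DirectSum.component R ι (fun _ => R) i)) ?_ ?_ ?_
  · exact this.mem hL (fun _ => h)
  · intro j
    ext n v
    refine funext fun x => ?_
    exact DirectSum.component.lof_self (R := R) (ι := ι) (M := fun _ => R) j (v x)
  · intro j k hjk
    ext n v
    refine funext fun x => ?_
    change DirectSum.component R ι _ k (DirectSum.lof R ι (fun _ => R) j (v x)) = 0
    rw [DirectSum.component.of, dif_neg hjk]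
  · intro n v
    classical
    change C.deg n → _ at v
    let F : ι → (C.deg n → ⨁ _ : ι, R) := fun j e => DirectSum.lof R ι (fun _ => R) j (DirectSum.component R ι (fun _ => R) j (v e))
    have key : (v : C.deg n → ⨁ _ : ι, R) = ∑ j ∈ Finset.univ.biUnion (fun e => DFinsupp.support (v e)), F j := ?_
    · exact ⟨_, key⟩
    refine funext fun e => ?_
    refine Eq.trans ?_ (Finset.sum_apply (M := fun _ : C.deg n => ⨁ _ : ι, R) e _ F).symm
    have h1 := DirectSum.sum_support_of (v e)
    refine h1.symm.trans (Finset.sum_subset (Finset.subset_biUnion_of_mem (fun e => DFinsupp.support (v e)) (Finset.mem_univ e)) ?_)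
    intro i _ hi
    have h2 : v e i = 0 := by simpa using hi
    rw [h2, map_zero]

lemma DD_all (h : C.DD R ∈ L) (N : Type u) [AddCommGroup N] [Module R N] : C.DD N ∈ L := by
  classical
  obtain ⟨B, hB⟩ := C.exists_bound
  refine bddClass hL {X | ∃ N : ModuleCat.{u} R, X = C.DD N} B ?_ ?_ ⟨ModuleCat.of R N, rfl⟩
  · rintro X ⟨N, rfl⟩ k hk
    exact C.DD_HZ hB N k (Or.inr (by omega))
  · rintro X ⟨N, rfl⟩
    let g : (⨁ _ : N, R) →ₗ[R] N := DirectSum.toModule R N N (fun m => LinearMap.toSpanSingleton R N m)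
    have hg : Function.Surjective g := by
      intro m
      refine ⟨DirectSum.lof R N (fun _ => R) m 1, ?_⟩
      simp [g, DirectSum.toModule_lof]
    obtain ⟨a, b, h', hT⟩ := C.DD_triangle (N := LinearMap.ker g) (N' := ⨁ _ : N, R) (N'' := N) (LinearMap.ker g).subtype g (Submodule.subtype_injective _) hg
      (LinearMap.exact_subtype_ker_map g)
    exact ⟨_, ⟨ModuleCat.of R (LinearMap.ker g), rfl⟩, _, C.DD_sum hL h N, _, _, h', hT⟩
end MC
end


section
variable {R : Type u} [CommRing R] [HasDerivedCategory.{w'} (ModuleCat.{u} R)]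

/-- shifted single -/
noncomputable def smod_shift_iso (M : ModuleCat.{u} R) (n : ℤ) :
    (DerivedCategory.Q.obj ((HomologicalComplex.single (ModuleCat.{u} R) (ComplexShape.up ℤ) n).obj M))⟦n⟧ ≅ smod R M :=
  (shiftFunctor _ n).mapIso ((DerivedCategory.singleFunctorIsoCompQ (ModuleCat.{u} R) n).symm.app M) ≪≫
    ((DerivedCategory.singleFunctors (ModuleCat.{u} R)).shiftIso n 0 n (by simp)).app M

namespace MC
variable (C : MC R)
/-- ideal of entries -/
def ent : Ideal R := Ideal.span (Set.range (fun p : C.E × C.E => C.d p.1 p.2))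

omit [HasDerivedCategory.{w'} (ModuleCat.{u} R)] in
lemma mm_ent (i j : ℤ) : mm C.d (R ⧸ C.ent) i j = 0 := by
  refine LinearMap.ext fun v => funext fun x => ?_
  simp only [mm, LinearMap.coe_mk, AddHom.coe_mk]
  refine Finset.sum_eq_zero fun y _ => ?_
  have h : C.d x.1 y.1 ∈ C.ent := Ideal.subset_span ⟨(x.1, y.1), rfl⟩
  obtain ⟨r, hr⟩ := Ideal.Quotient.mk_surjective (v y)
  rw [← hr, ← Ideal.Quotient.mk_eq_mk, ← Submodule.Quotient.mk_smul]
  exact (Submodule.Quotient.mk_eq_zero _).2 (Ideal.mul_mem_right _ _ h)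

variable {L : Set (DerivedCategory (ModuleCat.{u} R))} (hL : IsLocalizingSub.{u} L)
include hL

lemma ent_mem (h : C.DD R ∈ L) (e : C.E) : smod R (ModuleCat.of R (R ⧸ C.ent)) ∈ L := by
  have h1 := C.DD_all hL h (R ⧸ C.ent)
  let M := ModuleCat.of R (R ⧸ C.ent)
  let n : ℤ := C.m e
  have hd : ∀ i j, (C.cx (R ⧸ C.ent)).d i j = 0 := fun i j => by
    change ModuleCat.ofHom _ = _
    rw [mm_ent]; rfl
  let e' : C.deg n := ⟨e, rfl⟩
  let a : M ⟶ (C.cx (R ⧸ C.ent)).X n := ModuleCat.ofHom (LinearMap.single R (fun _ : C.deg n => R ⧸ C.ent) e')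
  let b : (C.cx (R ⧸ C.ent)).X n ⟶ M := ModuleCat.ofHom (LinearMap.proj (φ := fun _ : C.deg n => R ⧸ C.ent) e')
  have hab : a ≫ b = 𝟙 _ := by
    refine ModuleCat.hom_ext (LinearMap.ext fun x => ?_)
    exact Pi.single_eq_same (M := fun _ : C.deg n => R ⧸ C.ent) e' x
  let i := HomologicalComplex.mkHomFromSingle (K := C.cx (R ⧸ C.ent)) (j := n) a (fun k _ => by rw [hd]; simp)
  let p := HomologicalComplex.mkHomToSingle (K := C.cx (R ⧸ C.ent)) (j := n) b (fun k _ => by rw [hd]; simp)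
  have hip : i ≫ p = 𝟙 _ := by
    apply HomologicalComplex.from_single_hom_ext
    simp [i, p, HomologicalComplex.mkHomFromSingle_f, HomologicalComplex.mkHomToSingle_f, reassoc_of% hab]
  have h2 := hL.retract (DerivedCategory.Q.map i) (DerivedCategory.Q.map p) (by
    rw [← Functor.map_comp, hip, CategoryTheory.Functor.map_id]) h1
  exact hL.mem_of_iso (smod_shift_iso M n) (hL.shift_mem n h2)
end MC
end


section
variable {R : Type u} [CommRing R]
namespace Cancel
variable {E : Type} [Fintype E] [DecidableEq E] (a b : E)

abbrev E' (a b : E) := {x : E // x ≠ a ∧ x ≠ b}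

variable {a b}
lemma sumE' (hab : a ≠ b) (F : E → R) : ∑ z : E' a b, F z.1 = ∑ z, F z - F a - F b := by
  have h1 : ∑ z : E' a b, F z.1 = ∑ z ∈ (Finset.univ.erase a).erase b, F z := by
    symm
    refine Finset.sum_subtype _ (fun x => ?_) F
    simp [and_comm]
  rw [h1, ← Finset.sum_erase_add Finset.univ F (Finset.mem_univ a), 
    ← Finset.sum_erase_add (Finset.univ.erase a) F (a := b) (by simp [hab.symm])]
  ring

variable (d : Matrix E E R)
/-- reduced -/
def D (a b : E) (d : Matrix E E R) (x y : E) : R := d b a * d x y - d x a * d b y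

variable {d} (hdd : ∀ x y, ∑ z, d x z * d z y = 0) (hab : a ≠ b) (haa : d a a = 0) (hbb : d b b = 0)
  {U V : E → R} {W : R}

lemma Dxa (x : E) : D a b d x a = 0 := by unfold D; ring
lemma Dby (y : E) : D a b d b y = 0 := by unfold D; ring
include hbb in
lemma Dxb (x : E) : D a b d x b = d b a * d x b := by unfold D; rw [hbb]; ring
include haa in
lemma Day (y : E) : D a b d a y = d b a * d a y := by unfold D; rw [haa]; ring

include hdd in
lemma sumDd (x y : E) : ∑ z, D a b d x z * d z y = 0 := by
  have : ∑ z, D a b d x z * d z y = d b a * ∑ z, d x z * d z y - d x a * ∑ z, d b z * d z y := by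
    rw [Finset.mul_sum, Finset.mul_sum, ← Finset.sum_sub_distrib]
    exact Finset.sum_congr rfl fun z _ => by unfold D; ring
  rw [this, hdd, hdd]; ring

include hdd in
lemma sumdD (x y : E) : ∑ z, d x z * D a b d z y = 0 := by
  have : ∑ z, d x z * D a b d z y = d b a * ∑ z, d x z * d z y - d b y * ∑ z, d x z * d z a := by
    rw [Finset.mul_sum, Finset.mul_sum, ← Finset.sum_sub_distrib]
    exact Finset.sum_congr rfl fun z _ => by unfold D; ring
  rw [this, hdd, hdd]; ring

include hdd hab in
lemma DD' (x y : E' a b) : ∑ z : E' a b, D a b d x z * D a b d z y = 0 := by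
  rw [sumE' hab (fun z => D a b d x z * D a b d z y), Dxa, Dby]
  have : ∑ z, D a b d x z * D a b d z y = d b a * ∑ z, D a b d x z * d z y - d b y * ∑ z, D a b d x z * d z a := by
    rw [Finset.mul_sum, Finset.mul_sum, ← Finset.sum_sub_distrib]
    exact Finset.sum_congr rfl fun z _ => by conv_lhs => { arg 2; unfold D }
                                             ring
  rw [this, sumDd hdd, sumDd hdd]; ring

/-- phi -/
def phi (a b : E) (d : Matrix E E R) (U : E → R) : Matrix (E' a b) E R := 
  fun x e => (if x.1 = e then U e else 0) - (if e = b then U a * d x a else 0)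
/-- psi -/
def psi (a b : E) (d : Matrix E E R) (V : E → R) : Matrix E (E' a b) R := 
  fun e x => (if x.1 = e then d b a * V x.1 else 0) - (if e = a then V x.1 * d b x.1 else 0)

/-- reduced matrix -/
def D' (a b : E) (d : Matrix E E R) : Matrix (E' a b) (E' a b) R := fun x y => D a b d x y

include hdd hab haa hbb in
lemma phi_d (hU : ∀ x y, d x y * U x = d x y * (d b a * U y)) (hUb : ∀ y, d b y * U y = d b y * U a) :
    phi a b d U * d = D' a b d * phi a b d U := by
  ext x y
  simp only [Matrix.mul_apply, phi, D', sub_mul, mul_sub, Finset.sum_sub_distrib, ite_mul, zero_mul, mul_ite, mul_zero]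
  rw [sumE' hab (fun z => if z = y then D a b d x z * U y else 0)]
  rw [sumE' hab (fun z => if y = b then D a b d x z * (U a * d z a) else 0)]
  simp only [Finset.sum_ite_eq, Finset.sum_ite_eq', Finset.mem_univ, if_true]
  rw [Dxa, haa, Dxb hbb]
  have h0 : ∑ z, D a b d x z * (U a * d z a) = 0 := by
    rw [← mul_zero (U a), ← sumDd hdd x a, Finset.mul_sum]
    exact Finset.sum_congr rfl fun z _ => by ring
  by_cases hyb : y = b
  · subst hyb
    simp only [if_true, h0, hbb, if_neg hab, Dxb hbb]
    have h1 := hU x y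
    have h2 := hU y a
    linear_combination h1 + d x y * h2
  · simp only [if_neg hyb, if_neg (Ne.symm hyb)]
    by_cases hya : y = a
    · subst hya
      have h1 := hU x y
      simp [Dxa]
      linear_combination h1
    · simp only [if_neg (Ne.symm hya)]
      have h1 := hU x y
      have h2 := hUb y
      unfold D
      simp
      linear_combination h1 + d x a * h2

include hdd hab haa hbb in
lemma d_psi (hV : ∀ x y, d x y * V y = d x y * (d b a * V x)) (hVb : ∀ y, d b y * V y = d b y * V a)
    (hVD : ∀ x y, D a b d x y * V y = D a b d x y * (d b a * V x)) :
    psi a b d V * D' a b d = d * psi a b d V := by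
  ext x y
  simp only [Matrix.mul_apply, psi, D', sub_mul, mul_sub, Finset.sum_sub_distrib, ite_mul, zero_mul, mul_ite, mul_zero]
  rw [sumE' hab (fun z => if z = x then d b a * V z * D a b d z y else 0)]
  rw [sumE' hab (fun z => if x = a then V z * d b z * D a b d z y else 0)]
  simp only [Finset.sum_ite_eq, Finset.sum_ite_eq', Finset.mem_univ, if_true]
  rw [hbb, Dby, Day haa]
  have h0 : ∑ z, V z * d b z * D a b d z y = 0 := by
    rw [← mul_zero (V a), ← sumdD hdd b y, Finset.mul_sum]
    exact Finset.sum_congr rfl fun z _ => by have := hVb z; linear_combination (D a b d z y) * this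
  have h3 := hVD x y
  by_cases hxa : x = a
  · subst hxa
    simp only [if_true, h0, if_neg hab.symm]
    rw [Day haa]
    have h1 := hV x y
    by_cases hda : d x y = 0
    · simp [hda]
      by_cases hdb : d b y = 0
      · simp [hdb, haa]
      · simp [haa]
    · rw [haa]
      linear_combination (-d b x) * h1
  · simp only [if_neg hxa, if_neg (Ne.symm hxa)]
    by_cases hxb : x = b
    · subst hxb
      simp [Dby]
      ring
    · simp only [if_neg (Ne.symm hxb)]
      simp
      unfold D at h3 ⊢
      linear_combination -h3

lemma phi_psi (hab : a ≠ b) (hUV : ∀ x, U x * V x = W) : phi a b d U * psi a b d V = (d b a * W) • (1 : Matrix (E' a b) (E' a b) R) := by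
  ext x y
  simp only [Matrix.mul_apply, phi, psi, sub_mul, mul_sub, Finset.sum_sub_distrib, ite_mul, zero_mul, mul_ite, mul_zero]
  simp only [Finset.sum_ite_eq, Finset.sum_ite_eq', Finset.mem_univ, if_true, Matrix.smul_apply, Matrix.one_apply]
  simp only [if_neg y.2.2, if_neg x.2.1, if_neg hab, if_neg hab.symm]
  by_cases h : x = y
  · subst h
    have := hUV x.1
    simp
    linear_combination (d b a) * this
  · have : y.1 ≠ x.1 := fun h' => h (Subtype.ext h'.symm)
    simp [h, this, this.symm]

include hdd hab haa hbb in
lemma psi_phi (hUV : ∀ x, U x * V x = W) (hUb : ∀ y, d b y * U y = d b y * U a) 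
   (hU : ∀ x y, d x y * U x = d x y * (d b a * U y)) :
    psi a b d V * phi a b d U + W • (Matrix.single a b 1 * d + d * Matrix.single a b 1) = (d b a * W) • (1 : Matrix E E R) := by
  ext x y
  rw [Matrix.add_apply, Matrix.smul_apply, Matrix.add_apply, Matrix.smul_apply]
  have e1 : (Matrix.single a b (1:R) * d) x y = if x = a then d b y else 0 := by
    simp [Matrix.mul_apply, Matrix.single_apply, ite_and, eq_comm]
  have e2 : (d * Matrix.single a b (1:R)) x y = if y = b then d x a else 0 := by
    simp [Matrix.mul_apply, Matrix.single_apply, ite_and, eq_comm]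
  rw [e1, e2]
  rw [Matrix.mul_apply]
  have h0 : ∑ z, V z * d b z * (U a * d z a) = 0 := by
    rw [← mul_zero W, ← hdd b a, Finset.mul_sum]
    exact Finset.sum_congr rfl fun z _ => by linear_combination (-V z * d z a) * hUb z + d b z * d z a * hUV z
  let P : E → R := fun z => if z = x then d b a * V z else 0
  let P' : E → R := fun z => if x = a then V z * d b z else 0
  let Q : E → R := fun z => if z = y then U y else 0
  let Q' : E → R := fun z => if y = b then U a * d z a else 0
  have h1 := sumE' hab (fun z => (P z - P' z) * (Q z - Q' z))
  have h2 : ∑ z, (P z - P' z) * (Q z - Q' z) = ∑ z, P z * Q z - ∑ z, P z * Q' z - ∑ z, P' z * Q z + ∑ z, P' z * Q' z := by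
    rw [← Finset.sum_sub_distrib, ← Finset.sum_sub_distrib, ← Finset.sum_add_distrib]
    exact Finset.sum_congr rfl fun z _ => by ring
  have s1 : ∑ z, P z * Q z = P y * U y := by simp [Q]
  have s2 : ∑ z, P z * Q' z = d b a * V x * Q' x := by simp [P]
  have s3 : ∑ z, P' z * Q z = P' y * U y := by simp [Q]
  have s4 : ∑ z, P' z * Q' z = 0 := by 
    by_cases hxa : x = a <;> by_cases hyb : y = b <;> simp [P', Q', hxa, hyb, h0]
  refine (congrArg (· + _) (h1.trans (congrArg (fun t => t - _ - _) h2))).trans ?_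
  rw [s1, s2, s3, s4]
  simp only [P, P', Q, Q', haa, hbb, Matrix.one_apply, smul_eq_mul]
  have k1 := hUV x
  have k2 := hUV y
  have k3 := hUb y
  have k4 := hUV a
  have k5 := hUV b
  have k6 := hU b a
  have k7 := hU x a
  by_cases hya : y = a <;> by_cases hyb : y = b <;> by_cases hxa : x = a <;> by_cases hxb : x = b
  all_goals try (exact absurd (hya.symm.trans hyb) hab)
  all_goals try (exact absurd (hxa.symm.trans hxb) hab)
  all_goals try subst hya
  all_goals try subst hyb
  all_goals try subst hxa
  all_goals try subst hxb
  all_goals clear k1 k2 k3 k4 k5 k6 k7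
  all_goals (try simp [*, hab, Ne.symm hab, eq_comm])
  · ring
  · ring
  · linear_combination (V x) * hU x a - (d x a) * hUV x
  · simp only [if_neg (Ne.symm hya)]; linear_combination (d b y) * hUV y
  · simp only [if_neg (Ne.symm hyb)]; ring
  · simp only [if_neg (Ne.symm hxa), if_neg (Ne.symm hxb), if_neg (Ne.symm hya), if_neg (Ne.symm hyb)]
    by_cases h : x = y
    · subst h; simp; linear_combination (-d b a) * hUV x
    · simp only [if_neg h]; ring
end Cancel
end


section
variable {R : Type u} [CommRing R] [HasDerivedCategory.{w'} (ModuleCat.{u} R)]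

lemma cls_bd (K : CochainComplex (ModuleCat.{u} R) ℤ) (j n : ℤ) (w : K.X j) : cls K n (K.toCycles j n w) = 0 := by
  have h : K.toCycles j n ≫ K.homologyπ n = 0 := K.toCycles_comp_homologyπ j n
  have h2 : K.homologyπ n (K.toCycles j n w) = 0 := congrArg (fun t => t.hom w) h
  unfold cls
  change ((DerivedCategory.homologyFunctorFactors (ModuleCat.{u} R) n).inv.app K) (K.homologyπ n (K.toCycles j n w)) = 0
  rw [h2]
  exact map_zero _

lemma cls_congr2 {K K' : CochainComplex (ModuleCat.{u} R) ℤ} (f : K ⟶ K') {j n : ℤ} (x : K.cycles n) (y : K'.cycles n)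
    (w : K'.X j)
    (h : f.f n (K.iCycles n x) + K'.d j n w = K'.iCycles n y) : (HH R n).map (DerivedCategory.Q.map f) (cls K n x) = cls K' n y := by
  have h1 := cls_congr f x (y - K'.toCycles j n w) (by
    rw [map_sub, ← h, ← ModuleCat.comp_apply (K'.toCycles j n), HomologicalComplex.toCycles_i]; abel)
  rw [h1, map_sub, cls_bd, sub_zero]

namespace MC

lemma HH_of_mat {C : MC R} {C' : MC R} (A : Matrix C'.E C.E R) (hA : IsDeg A 0) (h : A * C.d = C'.d * A)
    (A' : Matrix C.E C'.E R) (hA' : IsDeg A' 0) (h' : A' * C'.d = C.d * A') (r s : R) (S : Matrix C.E C.E R) 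
    (hS : IsDeg S (-1)) (hr : A' * A + s • (S * C.d + C.d * S) = r • 1) (k : ℤ) (z : (HH R k).obj (C.DD R)) :
    (HH R k).map (X := C'.DD R) (Y := C.DD R) (DerivedCategory.Q.map (map R A' hA' h')) 
      ((HH R k).map (X := C.DD R) (Y := C'.DD R) (DerivedCategory.Q.map (map R A hA h)) z) = r • z := by
  obtain ⟨x, rfl⟩ := cls_surj (C.cx R) k z
  have e1 := cls_nat (map R A hA h) k x
  refine (congrArg _ e1).trans ?_
  refine Eq.trans ?_ (map_smul (cls (C.cx R) k).hom r x)
  let v : C.deg k → R := (C.cx R).iCycles k x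
  have hv : mm C.d R k (k+1) v = 0 := by
    have : (C.cx R).iCycles k ≫ (C.cx R).d k (k+1) = 0 := (C.cx R).iCycles_d k (k+1)
    exact congrArg (fun t => t.hom x) this
  refine cls_congr2 (j := k - 1) (map R A' hA' h') _ _ (s • (mm S R k (k-1) v) : C.deg (k-1) → R) ?_
  have e2 : (C'.cx R).iCycles k (HomologicalComplex.cyclesMap (map R A hA h) k x) = mm A R k k v := by
    rw [← ModuleCat.comp_apply, HomologicalComplex.cyclesMap_i]; rfl
  rw [e2, map_smul ((C.cx R).iCycles k).hom]
  change mm A' R k k (mm A R k k v) + mm C.d R (k-1) k (s • mm S R k (k-1) v) = r • v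
  have e3 := LinearMap.congr_fun (mm_comp R A' A hA k k k (by simp)) v
  have e4 := LinearMap.congr_fun (mm_comp R C.d S hS k (k-1) k (by ring)) v
  have e5 := LinearMap.congr_fun (mm_comp R S C.d C.isDeg_d k (k+1) k rfl) v
  have e6 := congrArg (fun t => mm t R k k v) hr
  simp only [mm_add, mm_smul, mm_one, LinearMap.add_apply, LinearMap.smul_apply, LinearMap.id_apply] at e6
  rw [LinearMap.comp_apply] at e3 e4 e5
  rw [← e3, ← e4, ← e5, hv, map_zero, zero_add] at e6
  rw [map_smul]
  exact e6

lemma cancel (C : MC R) (a b : C.E) (hg : C.d b a ≠ 0) : ∃ C' : MC R, Fintype.card C'.E < Fintype.card C.E ∧ 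
    ∃ (B : ℕ) (p : C.DD R ⟶ C'.DD R) (q : C'.DD R ⟶ C.DD R), 
      (∀ k z, (HH R k).map p ((HH R k).map q z) = (C.d b a)^B • z) ∧ 
      (∀ k z, (HH R k).map q ((HH R k).map p z) = (C.d b a)^B • z) := by
  have hm := C.hd b a hg
  have hab : a ≠ b := by rintro rfl; omega
  have haa : C.d a a = 0 := by by_contra h; have := C.hd _ _ h; omega
  have hbb : C.d b b = 0 := by by_contra h; have := C.hd _ _ h; omega
  have hD : ∀ x y, Cancel.D a b C.d x y ≠ 0 → C.m x = C.m y + 1 := by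
    intro x y h
    by_cases h1 : C.d x y = 0
    · have h2 : C.d x a ≠ 0 := fun h' => h (by simp [Cancel.D, h1, h'])
      have h3 : C.d b y ≠ 0 := fun h' => h (by simp [Cancel.D, h1, h'])
      have := C.hd _ _ h2
      have := C.hd _ _ h3
      omega
    · exact C.hd _ _ h1
  let C' : MC R := 
    { E := Cancel.E' a b
      fin := inferInstance
      dec := inferInstance
      m := fun x => C.m x.1
      d := Cancel.D' a b C.d
      hd := fun x y h => hD x.1 y.1 h
      hdd := fun x y => Cancel.DD' C.hdd hab x y }
  refine ⟨C', ?_, ?_⟩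
  · exact Fintype.card_subtype_lt (x := a) (by simp)
  obtain ⟨B, hB⟩ := C.exists_bound
  let U : C.E → R := fun e => (C.d b a) ^ (C.m e)
  let V : C.E → R := fun e => (C.d b a) ^ (B - 1 - C.m e)
  have hUV : ∀ x, U x * V x = (C.d b a) ^ (B-1) := fun x => by
    have := hB x
    simp only [U, V]; rw [← pow_add]; congr 1; omega
  have hU : ∀ x y, C.d x y * U x = C.d x y * (C.d b a * U y) := fun x y => by
    by_cases h : C.d x y = 0
    · simp [h]
    · simp only [U]; rw [C.hd _ _ h, pow_succ']
  have hVD : ∀ (t : R) x y, (t ≠ 0 → C.m x = C.m y + 1) → t * V y = t * (C.d b a * V x) := fun t x y h => by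
    by_cases h' : t = 0
    · simp [h']
    · have h1 := h h'
      have := hB x
      simp only [V]; rw [← pow_succ']; congr 2; omega
  have hUb : ∀ y, C.d b y * U y = C.d b y * U a := fun y => by
    by_cases h : C.d b y = 0
    · simp [h]
    · have := C.hd _ _ h
      simp only [U]; congr 2; omega
  have hVb : ∀ y, C.d b y * V y = C.d b y * V a := fun y => by
    by_cases h : C.d b y = 0
    · simp [h]
    · have := C.hd _ _ h
      simp only [V]; congr 2; omega
  have hφ : IsDeg (C := C) (C' := C') (Cancel.phi a b C.d U) 0 := by
    intro x e h
    by_cases h1 : x.1 = e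
    · subst h1; simp [C']
    · by_cases h2 : e = b
      · subst h2
        have h3 : C.d x.1 a ≠ 0 := fun h' => h (by simp [Cancel.phi, h1, h'])
        have := C.hd _ _ h3
        simp only [C']; omega
      · exact absurd (by simp [Cancel.phi, h1, h2]) h
  have hψ : IsDeg (C := C') (C' := C) (Cancel.psi a b C.d V) 0 := by
    intro e x h
    by_cases h1 : x.1 = e
    · subst h1; simp [C']
    · by_cases h2 : e = a
      · subst h2
        have h3 : C.d b x.1 ≠ 0 := fun h' => h (by simp [Cancel.psi, h1, h'])
        have := C.hd _ _ h3
        simp only [C']; omega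
      · exact absurd (by simp [Cancel.psi, h1, h2]) h
  have e1 : Cancel.phi a b C.d U * C.d = C'.d * Cancel.phi a b C.d U := Cancel.phi_d C.hdd hab haa hbb hU hUb
  have e2 : Cancel.psi a b C.d V * C'.d = C.d * Cancel.psi a b C.d V := 
    Cancel.d_psi C.hdd hab haa hbb (fun x y => hVD _ x y (C.hd x y)) hVb (fun x y => hVD _ x y (hD x y))
  have hBB : C.d b a * (C.d b a) ^ (B-1) = (C.d b a)^B := by
    have := hB a
    rw [← pow_succ']; congr 1; omega
  refine ⟨B, DerivedCategory.Q.map (map R (C := C) (C' := C') _ hφ e1), DerivedCategory.Q.map (map R (C := C') (C' := C) _ hψ e2), ?_, ?_⟩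
  · intro k z
    refine HH_of_mat (C := C') (C' := C) _ hψ e2 _ hφ e1 _ 0 0 ?_ ?_ k z
    · intro x y h; exact absurd rfl h
    · rw [zero_smul, add_zero, ← hBB]
      exact Cancel.phi_psi hab hUV
  · intro k z
    refine HH_of_mat (C := C) (C' := C') _ hφ e1 _ hψ e2 _ ((C.d b a) ^ (B-1)) (Matrix.single a b 1) ?_ ?_ k z
    · intro x y h
      have h' : a = x ∧ b = y := by
        by_contra h'
        exact h (by rw [Matrix.single_apply, if_neg h'])
      rw [← h'.1, ← h'.2]; omega
    · rw [← hBB]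
      exact Cancel.psi_phi C.hdd hab haa hbb hUV hUb hU
end MC
end


section
variable {R : Type u} [CommRing R] [HasDerivedCategory.{w'} (ModuleCat.{u} R)]

lemma smod_quot_kill (J : Ideal R) (r : R) (hr : r ∈ J) : r • 𝟙 (smod R (ModuleCat.of R (R ⧸ J))) = 0 := by
  rw [← sM_id, ← sM_smul, ← sM_zero]
  congr 1
  ext x
  exact (Submodule.Quotient.mk_eq_zero _).2 (Ideal.mul_mem_right _ _ hr)

lemma HH_kill {X : DerivedCategory (ModuleCat.{u} R)} {r : R} (h : r • 𝟙 X = 0) (k : ℤ) (z : (HH R k).obj X) : r • z = 0 := by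
  have h4 := HH_smul (𝟙 X) r k z
  rw [h, HH_zero, HH_id] at h4
  exact h4.symm

lemma Tors_quot {g : R} {J : Ideal R} (hg : g ∈ J) : Tors g (smod R (ModuleCat.of R (R ⧸ J))) :=
  fun k z => ⟨1, by rw [pow_one]; exact HH_kill (smod_quot_kill J g hg) k z⟩

lemma Tors_cone {x y z : DerivedCategory (ModuleCat.{u} R)} {p : x ⟶ y} {c : y ⟶ z} {h : z ⟶ x⟦(1:ℤ)⟧}
    (hT : Triangle.mk p c h ∈ distinguishedTriangles) (q : y ⟶ x) (g : R) (B : ℕ) 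
      (h1 : ∀ k z, (HH R k).map p ((HH R k).map q z) = g^B • z) 
      (h2 : ∀ k z, (HH R k).map q ((HH R k).map p z) = g^B • z) : Tors g z := by
  intro k w
  obtain ⟨δ, h3, h4, h5, h6⟩ := HH_ex hT k (k+1) rfl
  refine ⟨B + B, ?_⟩
  have e1 : δ (g^B • w) = 0 := by
    have e : δ (g^B • w) = g^B • δ w := map_smul δ.hom _ w
    rw [e, ← h2, h6, map_zero]
  obtain ⟨v, hv⟩ := h3 _ e1
  rw [pow_add, mul_smul, ← hv, ← HH_smul_elt, ← h1, ← HH_comp _ c, tz12 hT, HH_zero]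

variable {L : Set (DerivedCategory (ModuleCat.{u} R))} (hL : IsLocalizingSub.{u} L)
include hL

lemma descend [DecidableEq R] (S : Finset R) : ∀ (J : Ideal R) (_ : ∀ g ∈ S, ∀ J' ≥ J, smod R (ModuleCat.of R (R ⧸ J')) ∈ locG g L)
    (_ : smod R (ModuleCat.of R (R ⧸ (J ⊔ Ideal.span (S : Set R)))) ∈ L), smod R (ModuleCat.of R (R ⧸ J)) ∈ L := by
  induction S using Finset.induction_on with
  | empty => intro J _ h; exact smod_quot_le hL h (by simp)
  | insert g S hg ih =>
    intro J h1 h2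
    refine beta2 hL (g := g) ?_ (h1 g (by simp) J le_rfl)
    refine ih _ (fun g' hg' J' hJ' => h1 g' (by simp [hg']) J' (le_sup_left.trans hJ')) ?_
    refine smod_quot_le hL h2 ?_
    rw [Finset.coe_insert, Ideal.span_insert, sup_assoc]

namespace MC
lemma step (C : MC R) (h : C.DD R ∈ L) (ih : ∀ C' : MC R, Fintype.card C'.E < Fintype.card C.E → 
      ∀ L : Set (DerivedCategory (ModuleCat.{u} R)), IsLocalizingSub.{u} L → C'.DD R ∈ L → 
      ∃ J : Ideal R, J.FG ∧ smod R (ModuleCat.of R (R ⧸ J)) ∈ L ∧ ∀ r ∈ J, Tors r (C'.DD R)) (a b : C.E) : 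
      ∃ J : Ideal R, J.FG ∧ smod R (ModuleCat.of R (R ⧸ J)) ∈ locG (C.d b a) L ∧ ∀ r ∈ J, Tors (C.d b a * r) (C.DD R) := by
  by_cases hg : C.d b a = 0
  · refine ⟨⊤, ⟨{1}, by simp⟩, smod_quot_top (locG_isLoc hL _), fun r _ k z => ⟨1, by simp [hg]⟩⟩
  obtain ⟨C', hC', B, p, q, h1, h2⟩ := C.cancel a b hg
  obtain ⟨Z, c, e, hT⟩ := distinguished_cocone_triangle p
  have hZ := (Tors_cone hT q _ B h1 h2).mem_locG hL
  obtain ⟨J, hJ, hJL, hJT⟩ := ih C' hC' (locG (C.d b a) L) (locG_isLoc hL _) 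
    ((locG_isLoc hL _).mem₂ hT (le_locG hL _ h) hZ)
  refine ⟨J, hJ, hJL, fun r hr k z => ?_⟩
  obtain ⟨n, hn⟩ := hJT r hr k ((HH R k).map p z)
  refine ⟨n + B, ?_⟩
  have h3 : (r ^ n * (C.d b a)^B) • z = 0 := by
    rw [mul_smul, ← h2, ← HH_smul_elt, hn, map_zero]
  have : (C.d b a * r)^(n+B) = (C.d b a)^n * r^B * (r ^ n * (C.d b a)^B) := by ring
  rw [this, mul_smul, h3, smul_zero]

omit hL in
theorem main (n : ℕ) : ∀ C : MC R, Fintype.card C.E = n → ∀ L : Set (DerivedCategory (ModuleCat.{u} R)), 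
    IsLocalizingSub.{u} L → C.DD R ∈ L → 
      ∃ J : Ideal R, J.FG ∧ smod R (ModuleCat.of R (R ⧸ J)) ∈ L ∧ ∀ r ∈ J, Tors r (C.DD R) := by
  induction n using Nat.strong_induction_on with
  | _ n ih =>
  rintro C rfl L hL h
  rcases isEmpty_or_nonempty C.E with hE | ⟨⟨e⟩⟩
  · refine ⟨⊤, ⟨{1}, by simp⟩, smod_quot_top hL, fun r _ k z => ⟨1, ?_⟩⟩
    have : HZ (C.DD R) k := HZ_Q (K := C.cx R) (fun x => funext fun e => hE.elim e.1)
    rw [this z, smul_zero]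
  choose J hJ1 hJ2 hJ3 using C.step hL h (fun C' hC' => ih _ hC' C' rfl)
  classical
  let JJ : Ideal R := ⨆ p : C.E × C.E, Ideal.span {C.d p.2 p.1} * J p.1 p.2
  refine ⟨JJ, ?_, ?_, ?_⟩
  · exact Submodule.fg_iSup _ (fun p => Submodule.FG.mul ⟨{C.d p.2 p.1}, by simp⟩ (hJ1 _ _))
  · refine descend hL (Finset.univ.image (fun p : C.E × C.E => C.d p.1 p.2)) JJ ?_ ?_
    · intro g hg J' hJ'
      obtain ⟨p, -, rfl⟩ := Finset.mem_image.1 hg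
      have h1 := (Tors_quot (Ideal.mem_span_singleton_self (C.d p.1 p.2))).mem_locG hL
      refine smod_quot_le (locG_isLoc hL _) (smod_quot_mul (locG_isLoc hL _) h1 (hJ2 p.2 p.1)) (le_trans ?_ hJ')
      exact le_iSup (fun p : C.E × C.E => Ideal.span {C.d p.2 p.1} * J p.1 p.2) (p.2, p.1)
    · refine smod_quot_le hL (C.ent_mem hL h e) (le_trans ?_ le_sup_right)
      unfold ent
      simp
  · intro r hr k z
    have : JJ ≤ (Ideal.torsionOf R _ z).radical := by
      refine iSup_le fun p => ?_
      rw [Ideal.span_singleton_mul_le_iff]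
      intro s hs
      obtain ⟨n, hn⟩ := hJ3 p.1 p.2 s hs k z
      exact ⟨n, hn⟩
    exact this hr
end MC
end


section
variable (R : Type u) [CommRing R] [HasDerivedCategory.{w'} (ModuleCat.{u} R)]

/-- shifted R -/
noncomputable def Rcx (k : ℤ) : CochainComplex (ModuleCat.{u} R) ℤ := 
  (HomologicalComplex.single (ModuleCat.{u} R) (ComplexShape.up ℤ) k).obj (ModuleCat.of R R)
/-- shifted R in D -/
noncomputable def RR (k : ℤ) : DerivedCategory (ModuleCat.{u} R) := DerivedCategory.Q.obj (Rcx R k)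

/-- iso to R -/
noncomputable def Rcx_iso (k : ℤ) : (Rcx R k).X k ≅ ModuleCat.of R R := 
  HomologicalComplex.singleObjXSelf (ComplexShape.up ℤ) k (ModuleCat.of R R)

/-- cycle -/
noncomputable def Rlift (k : ℤ) : ModuleCat.of R R ⟶ (Rcx R k).cycles k :=
  (Rcx R k).liftCycles (Rcx_iso R k).inv (k+1) (by simp) (by
    have : (Rcx R k).d k (k+1) = 0 := HomologicalComplex.single_obj_d _ _ _ _ _
    rw [this, comp_zero])

lemma Rlift_i (k : ℤ) : Rlift R k ≫ (Rcx R k).iCycles k = (Rcx_iso R k).inv := by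
  simp [Rlift]

/-- generator -/
noncomputable def eps (k : ℤ) : (HH R k).obj (RR R k) := cls (Rcx R k) k (Rlift R k (1 : R))

lemma eps_gen (k : ℤ) (z : (HH R k).obj (RR R k)) : ∃ r : R, z = r • eps R k := by
  obtain ⟨x, rfl⟩ := cls_surj (Rcx R k) k z
  let r : R := (Rcx_iso R k).hom ((Rcx R k).iCycles k x)
  refine ⟨r, ?_⟩
  refine Eq.trans (congrArg _ ?_) (map_smul (cls (Rcx R k) k).hom r (Rlift R k (1 : R)))
  apply minj ((Rcx R k).iCycles k)
  rw [← map_smul (Rlift R k).hom]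
  have h1 : ∀ y : ModuleCat.of R R, (Rcx R k).iCycles k (Rlift R k y) = (Rcx_iso R k).inv y := fun y => 
    congrArg (fun t => t.hom y) (Rlift_i R k)
  refine Eq.trans ?_ (h1 _).symm
  have h2 : (r • (1:R) : R) = r := by simp
  have h3 : ∀ y, (Rcx_iso R k).inv ((Rcx_iso R k).hom y) = y := fun y => 
    congrArg (fun t => t.hom y) (Rcx_iso R k).hom_inv_id
  exact (h3 _).symm.trans (congrArg _ h2.symm)

lemma RR_HZ {k n : ℤ} (h : n ≠ k) : HZ (RR R k) n := by
  refine HZ_Q (K := Rcx R k) ?_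
  exact mzero_of_isZero (HomologicalComplex.isZero_single_obj_X _ _ _ _ h)

variable {R}
lemma RR_exQ (K : CochainComplex (ModuleCat.{u} R) ℤ) (k : ℤ) (x : K.cycles k) : 
    ∃ φ : Rcx R k ⟶ K, (HH R k).map (DerivedCategory.Q.map φ) (eps R k) = cls K k x := by
  let φ : Rcx R k ⟶ K := HomologicalComplex.mkHomFromSingle (K := K) (j := k) 
    (ModuleCat.ofHom (LinearMap.toSpanSingleton R _ (K.iCycles k x)) : ModuleCat.of R R ⟶ _) (by
      intro j _
      ext
      have h : (K.d k j).hom (K.iCycles k x) = 0 := congrArg (fun t => t.hom x) (K.iCycles_d k j)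
      simp only [ModuleCat.hom_comp, LinearMap.comp_apply, ModuleCat.hom_ofHom, LinearMap.toSpanSingleton_apply, one_smul, ModuleCat.hom_zero, LinearMap.zero_apply]
      exact h)
  refine ⟨φ, cls_congr φ _ _ ?_⟩
  have h1 : (Rcx R k).iCycles k (Rlift R k (1:R)) = (Rcx_iso R k).inv (1:R) := 
    congrArg (fun t => t.hom (1:R)) (Rlift_i R k)
  rw [h1]
  have h2 : (Rcx_iso R k).inv ≫ φ.f k = ModuleCat.ofHom (LinearMap.toSpanSingleton R _ (K.iCycles k x)) := by
    refine (congrArg ((Rcx_iso R k).inv ≫ ·) (HomologicalComplex.mkHomFromSingle_f _ _)).trans ?_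
    exact Iso.inv_hom_id_assoc (Rcx_iso R k) _
  have h3 := congrArg (fun t => t.hom (1:R)) h2
  refine Eq.trans h3 ?_
  simp

lemma RR_ex (X : DerivedCategory (ModuleCat.{u} R)) (k : ℤ) (z : (HH R k).obj X) : 
    ∃ a : RR R k ⟶ X, (HH R k).map a (eps R k) = z := by
  let e := DerivedCategory.Q.objObjPreimageIso X
  obtain ⟨x, hx⟩ := cls_surj (DerivedCategory.Q.objPreimage X) k ((HH R k).map e.inv z)
  obtain ⟨φ, hφ⟩ := RR_exQ _ k x
  let ψ : RR R k ⟶ DerivedCategory.Q.obj (DerivedCategory.Q.objPreimage X) := DerivedCategory.Q.map φ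
  refine ⟨ψ ≫ e.hom, ?_⟩
  refine (HH_comp ψ e.hom k _).trans ?_
  refine (congrArg _ (hφ.trans hx)).trans ?_
  rw [← HH_comp, e.inv_hom_id, HH_id]

lemma RR_zero {X : DerivedCategory (ModuleCat.{u} R)} {k : ℤ} (a : RR R k ⟶ X) (h : (HH R k).map a (eps R k) = 0) : a = 0 := by
  obtain ⟨F, f, δ, hT⟩ := distinguished_cocone_triangle₁ a
  obtain ⟨y, hy⟩ := HH_ex2 hT k _ h
  obtain ⟨b, hb⟩ := RR_ex F k y
  have hid : (HH R k).map (b ≫ f) (eps R k) = eps R k := by rw [HH_comp, hb, hy]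
  have hid' : ∀ z, (HH R k).map (b ≫ f) z = z := fun z => by
    obtain ⟨r, rfl⟩ := eps_gen R k z
    rw [HH_smul_elt, hid]
  have : IsIso (b ≫ f) := by
    apply isIso_of_HH
    intro n
    by_cases hn : n = k
    · subst hn
      have : ⇑((HH R n).map (b ≫ f)) = id := funext hid'
      rw [this]; exact Function.bijective_id
    · exact ⟨fun x y _ => (RR_HZ R hn x).trans (RR_HZ R hn y).symm, fun y => ⟨0, (RR_HZ R hn _).trans (RR_HZ R hn y).symm⟩⟩
  rw [← cancel_epi (b ≫ f), Category.assoc, tz12 hT]; simp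

/-- finitary compactness -/
def Cpt (x : DerivedCategory (ModuleCat.{u} R)) : Prop := 
  ∀ (ι : Type u) (f : ι → DerivedCategory (ModuleCat.{u} R)) (c : Cofan f) (hc : IsColimit c) (a : x ⟶ c.pt),
    ∃ s : Finset ι, a = ∑ i ∈ s, (a ≫ cproj hc i) ≫ c.inj i

lemma Cpt_of {x : DerivedCategory (ModuleCat.{u} R)} {ι : Type u} {f : ι → DerivedCategory (ModuleCat.{u} R)} {c : Cofan f} 
    (hc : IsColimit c) (a : x ⟶ c.pt) (s : Finset ι) (b : ∀ i, x ⟶ f i) (h : a = ∑ i ∈ s, b i ≫ c.inj i) : 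
    a = ∑ i ∈ s, (a ≫ cproj hc i) ≫ c.inj i := by
  classical
  conv_lhs => rw [h]
  refine Finset.sum_congr rfl fun i hi => ?_
  congr 1
  rw [h, Preadditive.sum_comp, Finset.sum_eq_single i]
  · rw [Category.assoc, inj_cproj, Category.comp_id]
  · intro j _ hj
    rw [Category.assoc, inj_cproj_ne hc hj, comp_zero]
  · exact fun h => absurd hi h

lemma Cpt_of_isCompact {x : DerivedCategory (ModuleCat.{u} R)} (h : IsCompactObj.{u} x) : Cpt x := by
  intro ι f c hc a
  classical
  obtain ⟨g, hg⟩ := (h f c hc).2 a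
  refine ⟨g.support, Cpt_of hc a g.support (fun i => g i) ?_⟩
  rw [← hg]
  unfold cofanHomComparison
  rw [DFinsupp.sumAddHom_apply, DFinsupp.sum]
  refine Finset.sum_congr ?_ (fun _ _ => rfl)
  congr!

lemma Cpt.isCompact {x : DerivedCategory (ModuleCat.{u} R)} (h : Cpt x) : IsCompactObj.{u} x := by
  intro ι f c hc
  classical
  have key : ∀ g i, cofanHomComparison x f c g ≫ cproj hc i = g i := by
    intro g i
    unfold cofanHomComparison
    rw [DFinsupp.sumAddHom_apply, DFinsupp.sum, Preadditive.sum_comp]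
    rw [Finset.sum_eq_single i]
    · change (g i ≫ c.inj i) ≫ _ = _
      rw [Category.assoc, inj_cproj, Category.comp_id]
    · intro j _ hj
      change (g j ≫ c.inj j) ≫ _ = _
      rw [Category.assoc, inj_cproj_ne hc hj, comp_zero]
    · intro hi
      have : g i = 0 := by simpa using hi
      change (g i ≫ c.inj i) ≫ _ = _
      rw [this]; simp
  constructor
  · intro g g' hgg
    ext i
    rw [← key g i, ← key g' i, hgg]
  · intro a
    obtain ⟨s, hs⟩ := h ι f c hc a
    refine ⟨∑ i ∈ s, DFinsupp.single i (a ≫ cproj hc i), ?_⟩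
    rw [map_sum]
    conv_rhs => rw [hs]
    refine Finset.sum_congr rfl fun i _ => ?_
    unfold cofanHomComparison
    convert DFinsupp.sumAddHom_single _ _ _
    rfl

lemma Cpt_RR (k : ℤ) : Cpt (RR R k) := by
  intro ι f c hc a
  obtain ⟨s, hs⟩ := (D_HSpan hc).span k ((HH R k).map a (eps R k))
  refine ⟨s, ?_⟩
  rw [← sub_eq_zero]
  apply RR_zero
  rw [CategoryTheory.Functor.map_sub]
  change (HH R k).map a (eps R k) - (HH R k).map (∑ i ∈ s, (a ≫ cproj hc i) ≫ c.inj i) (eps R k) = 0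
  rw [sub_eq_zero, HH_sum]
  refine hs.trans (Finset.sum_congr rfl fun i _ => ?_)
  rw [HH_comp, HH_comp]

lemma Cpt.cone {x y z : DerivedCategory (ModuleCat.{u} R)} {f : x ⟶ y} {g : y ⟶ z} {h : z ⟶ x⟦(1:ℤ)⟧}
    (hT : Triangle.mk f g h ∈ distinguishedTriangles) (hx : Cpt (x⟦(1:ℤ)⟧)) (hy : Cpt y) : Cpt z := by
  classical
  intro ι F c hc a
  obtain ⟨s, hs⟩ := hy ι F c hc (g ≫ a)
  have h0 : ∀ i, f ≫ ((g ≫ a) ≫ cproj hc i) = 0 := fun i => by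
    rw [Category.assoc, reassoc_of% (tz12 hT), zero_comp]
  choose b hb using fun i => yon2 hT _ (h0 i)
  have h1 : g ≫ (a - ∑ i ∈ s, b i ≫ c.inj i) = 0 := by
    rw [Preadditive.comp_sub, Preadditive.comp_sum, sub_eq_zero]
    refine hs.trans (Finset.sum_congr rfl fun i _ => ?_)
    rw [hb, Category.assoc]
  obtain ⟨e, he⟩ := yon3 hT _ h1
  obtain ⟨s', hs'⟩ := hx ι F c hc e
  refine ⟨s ∪ s', Cpt_of hc a _ (fun i => (if i ∈ s then b i else 0) + (if i ∈ s' then h ≫ (e ≫ cproj hc i) else 0)) ?_⟩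
  have h2 : a = ∑ i ∈ s, b i ≫ c.inj i + ∑ i ∈ s', (h ≫ (e ≫ cproj hc i)) ≫ c.inj i := by
    refine (sub_eq_iff_eq_add'.1 he).trans (congrArg _ ?_)
    refine (congrArg (h ≫ ·) hs').trans ?_
    rw [Preadditive.comp_sum]
    simp only [Category.assoc]
  rw [h2]
  simp only [Preadditive.add_comp, Finset.sum_add_distrib, ite_comp, zero_comp]
  congr 1
  · rw [Finset.sum_ite_mem, Finset.union_inter_cancel_left]
  · rw [Finset.sum_ite_mem, Finset.union_inter_cancel_right]

lemma Cpt.shift {x : DerivedCategory (ModuleCat.{u} R)} (hx : Cpt x) (n : ℤ) : Cpt (x⟦n⟧) := by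
  intro ι f c hc a
  let adj := (shiftEquiv (DerivedCategory (ModuleCat.{u} R)) n).toAdjunction
  let a' : x ⟶ (shiftCofan c (-n)).pt := adj.homEquiv x c.pt a
  obtain ⟨s, hs⟩ := hx ι _ _ (shiftCofanIsColimit hc (-n)) a'
  let b' : ∀ i, x ⟶ (f i)⟦-n⟧ := fun i => a' ≫ cproj (shiftCofanIsColimit hc (-n)) i
  refine ⟨s, Cpt_of hc a s (fun i => (adj.homEquiv x (f i)).symm (b' i)) ?_⟩
  have h1 : a = (adj.homEquiv x c.pt).symm a' := ((adj.homEquiv x c.pt).symm_apply_apply a).symm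
  have h2 : ∀ t : Finset ι, ∀ g : ι → (x ⟶ c.pt⟦-n⟧), (adj.homEquiv x c.pt).symm (∑ i ∈ t, g i) = ∑ i ∈ t, (adj.homEquiv x c.pt).symm (g i) := by
    intro t g
    simp only [Adjunction.homEquiv_counit]
    exact (congrArg (· ≫ _) (Functor.map_sum (shiftFunctor _ n) _ _)).trans (Preadditive.sum_comp _ _ _)
  refine h1.trans ((congrArg _ hs).trans ((h2 _ _).trans (Finset.sum_congr rfl fun i _ => ?_)))
  exact adj.homEquiv_naturality_right_symm (b' i) (c.inj i)
end


section
variable {R : Type u} [CommRing R] [HasDerivedCategory.{w'} (ModuleCat.{u} R)]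

omit [HasDerivedCategory.{w'} (ModuleCat.{u} R)] in
/-- free finite bounded complex -/
def FF (K : CochainComplex (ModuleCat.{u} R) ℤ) : Prop :=
  (∀ n, Module.Free R (K.X n)) ∧ (∀ n, Module.Finite R (K.X n)) ∧ 
    ∃ a b : ℤ, ∀ n, (n < a ∨ b < n) → IsZero (K.X n)

/-- perfect -/
def Perf (X : DerivedCategory (ModuleCat.{u} R)) : Prop :=
  ∃ K : CochainComplex (ModuleCat.{u} R) ℤ, FF K ∧ Nonempty (DerivedCategory.Q.obj K ≅ X)

omit [HasDerivedCategory.{w'} (ModuleCat.{u} R)] in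
lemma FF.kproj {K : CochainComplex (ModuleCat.{u} R) ℤ} (h : FF K) : K.IsKProjective := by
  obtain ⟨h1, h2, a, b, h3⟩ := h
  haveI : K.IsStrictlyLE b := by
    rw [CochainComplex.isStrictlyLE_iff]
    exact fun i hi => h3 i (Or.inr hi)
  haveI : ∀ n, Projective (K.X n) := fun n => by
    haveI := h1 n
    exact (IsProjective.iff_projective (K.X n)).1 inferInstance
  exact CochainComplex.isKProjective_of_projective K b

lemma FF.lift {K L : CochainComplex (ModuleCat.{u} R) ℤ} (h : FF K) 
    (f : DerivedCategory.Q.obj K ⟶ DerivedCategory.Q.obj L) : ∃ φ : K ⟶ L, DerivedCategory.Q.map φ = f := by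
  haveI := h.kproj
  obtain ⟨g, hg⟩ := (CochainComplex.IsKProjective.Qh_map_bijective K ((HomotopyCategory.quotient _ _).obj L)).surjective
    ((DerivedCategory.quotientCompQhIso _).hom.app K ≫ f ≫ (DerivedCategory.quotientCompQhIso _).inv.app L)
  obtain ⟨φ, rfl⟩ := (HomotopyCategory.quotient _ _).map_surjective g
  refine ⟨φ, ?_⟩
  have := (DerivedCategory.quotientCompQhIso (ModuleCat.{u} R)).hom.naturality φ
  have h2 : (DerivedCategory.quotientCompQhIso (ModuleCat.{u} R)).hom.app K ≫ f ≫ (DerivedCategory.quotientCompQhIso (ModuleCat.{u} R)).inv.app L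
    ≫ (DerivedCategory.quotientCompQhIso (ModuleCat.{u} R)).hom.app L = 
      (DerivedCategory.quotientCompQhIso (ModuleCat.{u} R)).hom.app K ≫ DerivedCategory.Q.map φ := by
    rw [← this]
    have := congrArg (· ≫ (DerivedCategory.quotientCompQhIso (ModuleCat.{u} R)).hom.app L) hg
    simp only [Category.assoc] at this
    exact this.symm
  rw [Iso.inv_hom_id_app] at h2
  have h3 := (cancel_epi _).1 h2
  rw [← h3]; exact Category.comp_id f

omit [HasDerivedCategory.{w'} (ModuleCat.{u} R)] in
lemma ff_cone {K L : CochainComplex (ModuleCat.{u} R) ℤ} (hK : FF K) (hL : FF L) (φ : K ⟶ L) : 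
    FF (CochainComplex.mappingCone φ) := by
  obtain ⟨h1, h2, a, b, h3⟩ := hK
  obtain ⟨k1, k2, a', b', k3⟩ := hL
  have e : ∀ n, ((CochainComplex.mappingCone φ).X n) ≅ (K.X (n+1)) ⊞ (L.X n) := fun n => 
    HomologicalComplex.homotopyCofiber.XIsoBiprod φ n (n+1) rfl
  have e' : ∀ n, (K.X (n+1) × L.X n) ≃ₗ[R] ((CochainComplex.mappingCone φ).X n) := fun n => 
    (e n ≪≫ ModuleCat.biprodIsoProd _ _).symm.toLinearEquiv
  refine ⟨fun n => ?_, fun n => ?_, min (a-1) a', max b b', fun n hn => ?_⟩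
  · haveI := h1 (n+1); haveI := k1 n
    exact Module.Free.of_equiv (e' n)
  · haveI := h2 (n+1); haveI := k2 n
    exact Module.Finite.equiv (e' n)
  · refine IsZero.of_iso ?_ (e n)
    rw [biprod_isZero_iff]
    exact ⟨h3 _ (by omega), k3 _ (by omega)⟩

lemma Perf.iso {X Y : DerivedCategory (ModuleCat.{u} R)} (h : Perf X) (e : X ≅ Y) : Perf Y := by
  obtain ⟨K, hK, ⟨f⟩⟩ := h
  exact ⟨K, hK, ⟨f ≪≫ e⟩⟩

omit [HasDerivedCategory.{w'} (ModuleCat.{u} R)] in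
lemma FF.shift {K : CochainComplex (ModuleCat.{u} R) ℤ} (hK : FF K) (n : ℤ) : FF (K⟦n⟧) := by
  obtain ⟨h1, h2, a, b, h3⟩ := hK
  exact ⟨fun i => h1 (i + n), fun i => h2 (i+n), a - n, b - n, fun i hi => h3 (i+n) (by omega)⟩

lemma Perf.shift {X : DerivedCategory (ModuleCat.{u} R)} (h : Perf X) (n : ℤ) : Perf (X⟦n⟧) := by
  obtain ⟨K, hK, ⟨e⟩⟩ := h
  exact ⟨K⟦n⟧, hK.shift n, ⟨(DerivedCategory.Q.commShiftIso n).app K ≪≫ (shiftFunctor _ n).mapIso e⟩⟩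

lemma Perf.cone {x y z : DerivedCategory (ModuleCat.{u} R)} {f : x ⟶ y} {g : y ⟶ z} {h : z ⟶ x⟦(1:ℤ)⟧}
    (hT : Triangle.mk f g h ∈ distinguishedTriangles) (hx : Perf x) (hy : Perf y) : Perf z := by
  obtain ⟨K, hK, ⟨e⟩⟩ := hx
  obtain ⟨L, hL, ⟨e'⟩⟩ := hy
  obtain ⟨φ, hφ⟩ := hK.lift (e.hom ≫ f ≫ e'.inv)
  have hT' := DerivedCategory.mappingCone_triangle_distinguished φ
  refine ⟨_, ff_cone hK hL φ, ⟨?_⟩⟩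
  have i := isoTriangleOfIso₁₂ _ _ hT' hT e e' (by
    change DerivedCategory.Q.map φ ≫ e'.hom = e.hom ≫ f
    rw [hφ]; simp)
  exact Triangle.π₃.mapIso i

lemma Perf.mem₂ {x y z : DerivedCategory (ModuleCat.{u} R)} {f : x ⟶ y} {g : y ⟶ z} {h : z ⟶ x⟦(1:ℤ)⟧}
    (hT : Triangle.mk f g h ∈ distinguishedTriangles) (hx : Perf x) (hz : Perf z) : Perf y := by
  have h1 := inv_rot_of_distTriang _ hT
  exact Perf.cone h1 (hz.shift (-1)) hx

lemma Perf.mem₁ {x y z : DerivedCategory (ModuleCat.{u} R)} {f : x ⟶ y} {g : y ⟶ z} {h : z ⟶ x⟦(1:ℤ)⟧}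
    (hT : Triangle.mk f g h ∈ distinguishedTriangles) (hy : Perf y) (hz : Perf z) : Perf x := by
  have h1 := inv_rot_of_distTriang _ (rot_of_distTriang _ hT)
  have := Perf.cone (rot_of_distTriang _ hT) hy hz
  exact (this.shift (-1)).iso (((shiftEquiv _ (1:ℤ)).unitIso.app x).symm)

lemma Perf_RR (k : ℤ) : Perf (RR R k) := by
  refine ⟨Rcx R k, ⟨fun n => ?_, fun n => ?_, k, k, fun n hn => ?_⟩, ⟨Iso.refl _⟩⟩
  · by_cases h : n = k
    · subst h; exact Module.Free.of_equiv (Rcx_iso R n).symm.toLinearEquiv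
    · haveI : Subsingleton ((Rcx R k).X n) := ModuleCat.subsingleton_of_isZero (HomologicalComplex.isZero_single_obj_X (ComplexShape.up ℤ) k (ModuleCat.of R R) n h)
      exact Module.Free.of_subsingleton R ((Rcx R k).X n)
  · by_cases h : n = k
    · subst h; exact Module.Finite.equiv (Rcx_iso R n).symm.toLinearEquiv
    · haveI : Subsingleton ((Rcx R k).X n) := ModuleCat.subsingleton_of_isZero (HomologicalComplex.isZero_single_obj_X (ComplexShape.up ℤ) k (ModuleCat.of R R) n h)
      infer_instance
  · exact HomologicalComplex.isZero_single_obj_X _ _ _ _ (by omega)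

lemma Perf_zero : Perf (0 : DerivedCategory (ModuleCat.{u} R)) := by
  exact Perf.cone (contractible_distinguished (RR R 0)) (Perf_RR 0) (Perf_RR 0)

lemma Perf.isZero {X : DerivedCategory (ModuleCat.{u} R)} (h : IsZero X) : Perf X := 
  Perf_zero.iso ((isZero_zero _).iso h)

end


section
variable {R : Type u} [CommRing R]

section
variable (K : CochainComplex (ModuleCat.{u} R) ℤ) (r : ℤ → ℕ) (bas : ∀ i, Module.Basis (Fin (r i)) R (K.X i)) (B : ℕ)

/-- MC from bases -/
noncomputable def mcOf : MC R where
  E := Σ i : Fin B, Fin (r (i : ℕ))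
  fin := inferInstance
  dec := inferInstance
  m e := e.1
  d x y := (bas (x.1:ℕ)).repr ((K.d (y.1:ℕ) (x.1:ℕ)).hom (bas (y.1 : ℕ) y.2)) x.2
  hd x y h := by
    by_contra h1
    apply h
    rw [K.shape _ _ (fun h2 : ((y.1:ℕ):ℤ) + 1 = ((x.1:ℕ):ℤ) => h1 (by omega))]
    simp
  hdd x y := by
    rw [Fintype.sum_sigma]
    refine Finset.sum_eq_zero fun i _ => ?_
    have h1 : (K.d (i:ℕ) (x.1:ℕ)).hom ((K.d (y.1:ℕ) (i:ℕ)).hom (bas (y.1 : ℕ) y.2)) = 0 := 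
      congrArg (fun t => t.hom (bas (y.1 : ℕ) y.2)) (K.d_comp_d (y.1:ℕ) (i:ℕ) (x.1:ℕ))
    rw [← (bas (i:ℕ)).sum_repr ((K.d (y.1:ℕ) (i:ℕ)).hom (bas (y.1 : ℕ) y.2)), map_sum] at h1
    have h2 := congrArg (fun t => (bas (x.1:ℕ)).repr t x.2) h1
    simp only [map_sum, map_smul, map_zero, Finsupp.coe_zero, Pi.zero_apply, Finsupp.coe_finset_sum, Finset.sum_apply, Finsupp.smul_apply, smul_eq_mul] at h2
    rw [← h2]
    exact Finset.sum_congr rfl fun j _ => mul_comm _ _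

/-- basis vector -/
noncomputable def bv (i : ℤ) (e : (mcOf K r bas B).deg i) : K.X i := 
  (K.XIsoOfEq e.2).hom (bas (e.1.1 : ℕ) e.1.2)

/-- comparison -/
noncomputable def psi (i : ℤ) : ((mcOf K r bas B).deg i → R) →ₗ[R] K.X i := 
  ∑ e, (LinearMap.toSpanSingleton R _ (bv K r bas B i e)).comp (LinearMap.proj e)

lemma psi_apply (i : ℤ) (v) : psi K r bas B i v = ∑ e, v e • bv K r bas B i e := by
  simp [psi]

/-- index equivalence -/
noncomputable def ieq (i : Fin B) : Fin (r (i:ℕ)) ≃ (mcOf K r bas B).deg ((i:ℕ):ℤ) where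
  toFun k := ⟨⟨i, k⟩, rfl⟩
  invFun e := Fin.cast (congrArg r e.2) e.1.2
  left_inv k := rfl
  right_inv e := by
    obtain ⟨⟨j, k⟩, h⟩ := e
    have h : ((j:ℕ):ℤ) = ((i:ℕ):ℤ) := h
    have : j = i := by omega
    subst this
    rfl

lemma bv_ieq (i : Fin B) (k) : bv K r bas B (i:ℕ) (ieq K r bas B i k) = bas (i:ℕ) k := by
  exact congrArg (fun t => t.hom (bas (i:ℕ) k)) (congrArg Iso.hom (HomologicalComplex.XIsoOfEq_rfl K ((i:ℕ):ℤ)))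

lemma psi_fin (i : Fin B) (v) : psi K r bas B (i:ℕ) v = ∑ k, v (ieq K r bas B i k) • bas (i:ℕ) k := by
  rw [psi_apply, ← (ieq K r bas B i).sum_comp]
  simp only [bv_ieq]

lemma psi_bij (hz : ∀ n : ℤ, n < 0 ∨ (B:ℤ) ≤ n → IsZero (K.X n)) (i : ℤ) : Function.Bijective (psi K r bas B i) := by
  by_cases hi : i < 0 ∨ (B:ℤ) ≤ i
  · haveI : Subsingleton (K.X i) := ModuleCat.subsingleton_of_isZero (hz i hi)
    haveI : IsEmpty ((mcOf K r bas B).deg i) := ⟨fun e => by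
      have h1 : (((e.1.1:ℕ) : ℤ)) = i := e.2
      have := e.1.1.2
      omega⟩
    exact ⟨fun _ _ _ => Subsingleton.elim _ _, fun x => ⟨0, Subsingleton.elim _ _⟩⟩
  · obtain ⟨n, rfl⟩ : ∃ n : ℕ, i = n := ⟨i.toNat, by omega⟩
    obtain ⟨n, rfl⟩ : ∃ m : Fin B, n = m := ⟨⟨n, by omega⟩, rfl⟩
    have : ⇑(psi K r bas B (n:ℕ)) = ⇑((LinearEquiv.funCongrLeft R R (ieq K r bas B n)).trans (bas (n:ℕ)).equivFun.symm) := by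
      funext v
      rw [psi_fin]
      simp [Module.Basis.equivFun_symm_apply, LinearEquiv.funCongrLeft_apply, LinearMap.funLeft_apply]
    rw [this]
    exact LinearEquiv.bijective _

lemma psi_single (i : ℤ) (e) : psi K r bas B i (Pi.single e 1) = bv K r bas B i e := by
  rw [psi_apply, Finset.sum_eq_single e]
  · simp
  · intro b _ hb
    simp [Pi.single_eq_of_ne hb]
  · simp

lemma psi_comm (hz : ∀ n : ℤ, n < 0 ∨ (B:ℤ) ≤ n → IsZero (K.X n)) (i j : ℤ) : 
    (K.d i j).hom ∘ₗ psi K r bas B i = psi K r bas B j ∘ₗ MC.mm (mcOf K r bas B).d R i j := by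
  refine LinearMap.pi_ext' fun e => LinearMap.ext_ring ?_
  change (K.d i j).hom (psi K r bas B i (Pi.single e 1)) = psi K r bas B j (MC.mm (mcOf K r bas B).d R i j (Pi.single e 1))
  rw [psi_single]
  by_cases hi : j < 0 ∨ (B:ℤ) ≤ j
  · haveI : Subsingleton (K.X j) := ModuleCat.subsingleton_of_isZero (hz j hi)
    exact Subsingleton.elim _ _
  · obtain ⟨n, rfl⟩ : ∃ n : ℕ, j = n := ⟨j.toNat, by omega⟩
    obtain ⟨n, rfl⟩ : ∃ m : Fin B, n = m := ⟨⟨n, by omega⟩, rfl⟩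
    rw [psi_fin]
    obtain ⟨e, rfl⟩ := e
    refine ((bas (n:ℕ)).sum_repr _).symm.trans (Finset.sum_congr rfl fun k _ => congrArg (· • _) ?_)
    have : ∀ x, MC.mm (mcOf K r bas B).d R _ ((n:ℕ):ℤ) (Pi.single ⟨e, rfl⟩ 1) x = (mcOf K r bas B).d x.1 e := by
      intro x
      change ∑ y, _ • _ = _
      rw [Finset.sum_eq_single ⟨e, rfl⟩]
      · simp
      · intro b _ hb
        simp [Pi.single_eq_of_ne hb]
      · simp
    rw [this]
    rfl

lemma mc_iso (hz : ∀ n : ℤ, n < 0 ∨ (B:ℤ) ≤ n → IsZero (K.X n)) : Nonempty ((mcOf K r bas B).cx R ≅ K) := by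
  refine ⟨HomologicalComplex.Hom.isoOfComponents (fun i => LinearEquiv.toModuleIso (X₁ := (((mcOf K r bas B).deg i) → R)) (X₂ := K.X i) (LinearEquiv.ofBijective _ (psi_bij K r bas B hz i))) ?_⟩
  intro i j _
  exact ModuleCat.hom_ext (psi_comm K r bas B hz i j)
end

variable [HasDerivedCategory.{w'} (ModuleCat.{u} R)]
lemma Perf.mc {X : DerivedCategory (ModuleCat.{u} R)} (h : Perf X) : ∃ (C : MC R) (n : ℤ), Nonempty (C.DD R ≅ X⟦n⟧) := by
  obtain ⟨K, hK, ⟨e⟩⟩ := h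
  obtain ⟨a, b, hab⟩ := hK.2.2
  have hK' := hK.shift a
  let K' := K⟦a⟧
  have hz : ∀ n : ℤ, n < 0 ∨ ((b-a+1).toNat:ℤ) ≤ n → IsZero (K'.X n) := fun n hn => hab (n+a) (by omega)
  have : ∀ i, ∃ n : ℕ, Nonempty (Module.Basis (Fin n) R (K'.X i)) := fun i => by
    haveI := hK'.1 i
    haveI := hK'.2.1 i
    have b := Module.Free.chooseBasis R (K'.X i)
    exact ⟨_, ⟨b.reindex (Fintype.equivFin _)⟩⟩
  choose r bas using this
  obtain ⟨f⟩ := mc_iso K' r (fun i => (bas i).some) _ hz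
  exact ⟨_, a, ⟨DerivedCategory.Q.mapIso f ≪≫ (DerivedCategory.Q.commShiftIso a).app K ≪≫ (shiftFunctor _ a).mapIso e⟩⟩

omit [HasDerivedCategory.{w'} (ModuleCat.{u} R)] in
lemma tors_mod {M N : ModuleCat.{u} R} (e : M ≅ N) (r : R) (h : ∀ z : M, ∃ n : ℕ, r ^ n • z = 0) (z : N) : ∃ n : ℕ, r ^ n • z = 0 := by
  obtain ⟨n, hn⟩ := h (e.inv z)
  refine ⟨n, miso_inj e.symm ?_⟩
  exact ((map_smul e.inv.hom _ z).trans hn).trans (map_zero e.inv.hom).symm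

lemma Tors.of_shift {X Y : DerivedCategory (ModuleCat.{u} R)} {r : R} {n : ℤ} (e : X ≅ Y⟦n⟧) (h : Tors r X) : Tors r Y := by
  intro k z
  obtain ⟨e'⟩ := HH_shift_iso Y n (k-n) k (by omega)
  exact tors_mod ((HH R (k-n)).mapIso e ≪≫ e') r (h (k-n)) z

lemma Perf.main {X : DerivedCategory (ModuleCat.{u} R)} (h : Perf X) {L : Set (DerivedCategory (ModuleCat.{u} R))} (hL : IsLocalizingSub.{u} L) (hX : X ∈ L) : 
    ∃ J : Ideal R, J.FG ∧ smod R (ModuleCat.of R (R⧸J)) ∈ L ∧ ∀ r ∈ J, Tors r X := by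
  obtain ⟨C, n, ⟨e⟩⟩ := h.mc
  obtain ⟨J, h1, h2, h3⟩ := MC.main _ C rfl L hL (hL.mem_of_iso e.symm (hL.shift_mem n hX))
  exact ⟨J, h1, h2, fun r hr => (h3 r hr).of_shift e⟩
end


section
variable {R : Type u} [CommRing R] [HasDerivedCategory.{w'} (ModuleCat.{u} R)]

/-- perfect cone -/
def PIn {x y : DerivedCategory (ModuleCat.{u} R)} (f : x ⟶ y) : Prop :=
  ∃ (z : DerivedCategory (ModuleCat.{u} R)) (g : y ⟶ z) (h : z ⟶ x⟦(1:ℤ)⟧), Triangle.mk f g h ∈ distinguishedTriangles ∧ Perf z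

lemma PIn_id (x : DerivedCategory (ModuleCat.{u} R)) : PIn (𝟙 x) := ⟨0, 0, 0, contractible_distinguished x, Perf_zero⟩

lemma PIn_comp {x y z : DerivedCategory (ModuleCat.{u} R)} {f : x ⟶ y} {g : y ⟶ z} (hf : PIn f) (hg : PIn g) :
    PIn (f ≫ g) := by
  obtain ⟨a, a1, a2, hA, ha⟩ := hf
  obtain ⟨b, b1, b2, hB, hb⟩ := hg
  obtain ⟨c, c1, c2, hC⟩ := distinguished_cocone_triangle (f ≫ g)
  exact ⟨c, c1, c2, hC, Perf.mem₂ (Triangulated.someOctahedron rfl hA hB hC).mem ha hb⟩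

lemma kill_one {y : DerivedCategory (ModuleCat.{u} R)} (hy : Cpt y) {k : ℤ} (a : y ⟶ RR R k) : 
    ∃ (y' : DerivedCategory (ModuleCat.{u} R)) (g : y' ⟶ y), Cpt y' ∧ PIn g ∧ g ≫ a = 0 := by
  obtain ⟨y', g, h, hT⟩ := distinguished_cocone_triangle₁ a
  refine ⟨y', g, ?_, ⟨_, _, _, hT, Perf_RR k⟩, tz12 hT⟩
  have h1 := inv_rot_of_distTriang _ hT
  exact Cpt.cone (inv_rot_of_distTriang _ h1) (((hy.shift (-1)).shift 1)) ((Cpt_RR k).shift (-1))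

lemma kill_fin {y : DerivedCategory (ModuleCat.{u} R)} (hy : Cpt y) {ι : Type u} (κ : ι → ℤ) (a : ∀ i, y ⟶ RR R (κ i)) (s : Finset ι) : 
    ∃ (y' : DerivedCategory (ModuleCat.{u} R)) (g : y' ⟶ y), Cpt y' ∧ PIn g ∧ ∀ i ∈ s, g ≫ a i = 0 := by
  classical
  induction s using Finset.induction_on with
  | empty => exact ⟨y, 𝟙 y, hy, PIn_id y, by simp⟩
  | insert i s _ ih =>
    obtain ⟨y', g, h1, h2, h3⟩ := ih
    obtain ⟨y'', g', k1, k2, k3⟩ := kill_one h1 (g ≫ a i)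
    refine ⟨y'', g' ≫ g, k1, PIn_comp k2 h2, fun j hj => ?_⟩
    rw [Category.assoc]
    rcases Finset.mem_insert.1 hj with rfl | hj
    · exact k3
    · rw [h3 j hj, comp_zero]

lemma step_ex (Y : DerivedCategory (ModuleCat.{u} R)) : ∃ (Y' : DerivedCategory (ModuleCat.{u} R)) (t : Y ⟶ Y'), 
    (∀ k (z : (HH R k).obj Y), (HH R k).map t z = 0) ∧ 
    ∀ (y : DerivedCategory (ModuleCat.{u} R)) (a : y ⟶ Y), Cpt y → a ≫ t = 0 → 
      ∃ (y' : DerivedCategory (ModuleCat.{u} R)) (g : y' ⟶ y), Cpt y' ∧ PIn g ∧ g ≫ a = 0 := by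
  let ι : Type u := Σ k : ULift.{u} ℤ, (HH R k.down).obj Y
  let F : ι → DerivedCategory (ModuleCat.{u} R) := fun i => RR R i.1.down
  let c : Cofan F := colimit.cocone _
  let hc : IsColimit c := colimit.isColimit _
  choose b hb using fun i : ι => RR_ex Y i.1.down i.2
  let p : c.pt ⟶ Y := Cofan.IsColimit.desc hc b
  have hp : ∀ i, c.inj i ≫ p = b i := fun i => Cofan.IsColimit.fac hc b i
  obtain ⟨Y', t, h, hT⟩ := distinguished_cocone_triangle p
  refine ⟨Y', t, fun k z => ?_, fun y a hy ha => ?_⟩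
  · have h1 : c.inj ⟨⟨k⟩, z⟩ ≫ p = b ⟨⟨k⟩, z⟩ := hp _
    have h2 : (HH R k).map (b ⟨⟨k⟩, z⟩) (eps R k) = z := hb ⟨⟨k⟩, z⟩
    have h3 : b ⟨⟨k⟩, z⟩ ≫ t = 0 := by rw [← h1, Category.assoc, tz12 hT, comp_zero]
    rw [← h2, ← HH_comp, h3, HH_zero]
  · obtain ⟨m, hm⟩ := coy2 hT a ha
    obtain ⟨s, hs⟩ := hy ι F c hc m
    obtain ⟨y', g, h1, h2, h3⟩ := kill_fin hy (fun i : ι => i.1.down) (fun i => m ≫ cproj hc i) s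
    refine ⟨y', g, h1, h2, ?_⟩
    rw [hm, hs, Preadditive.sum_comp, Preadditive.comp_sum]
    refine Finset.sum_eq_zero fun i hi => ?_
    rw [Category.assoc, ← Category.assoc g]
    exact (congrArg (· ≫ c.inj i ≫ p) (h3 i hi)).trans zero_comp

lemma tower_kill (X : ℕ → DerivedCategory (ModuleCat.{u} R)) (t : ∀ n, X n ⟶ X (n+1)) 
    (h : ∀ n, ∀ (y : DerivedCategory (ModuleCat.{u} R)) (a : y ⟶ X n), Cpt y → a ≫ t n = 0 → 
      ∃ (y' : DerivedCategory (ModuleCat.{u} R)) (g : y' ⟶ y), Cpt y' ∧ PIn g ∧ g ≫ a = 0) (n : ℕ) : 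
    ∀ (y : DerivedCategory (ModuleCat.{u} R)) (f : y ⟶ X 0), Cpt y → f ≫ tr0 X t n = 0 → 
      ∃ (y' : DerivedCategory (ModuleCat.{u} R)) (g : y' ⟶ y), PIn g ∧ g ≫ f = 0 := by
  induction n with
  | zero => 
    intro y f _ hf
    refine ⟨y, 𝟙 y, PIn_id y, ?_⟩
    have : f ≫ 𝟙 _ = 0 := hf
    rw [Category.comp_id] at this
    rw [this, comp_zero]
  | succ n ih =>
    intro y f hy hf
    have hf' : (f ≫ tr0 X t n) ≫ t n = 0 := (Category.assoc _ _ _).trans hf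
    obtain ⟨y', g, h1, h2, h3⟩ := h n y _ hy hf'
    obtain ⟨y'', g', k1, k2⟩ := ih y' (g ≫ f) h1 (by rw [Category.assoc, h3])
    exact ⟨y'', g' ≫ g, PIn_comp k1 h2, by rw [Category.assoc, k2]⟩

lemma tower_fin (X : ℕ → DerivedCategory (ModuleCat.{u} R)) (t : ∀ n, X n ⟶ X (n+1)) 
    (h : ∀ n k (z : (HH R k).obj (X n)), (HH R k).map (t n) z = 0) (hx : Cpt (X 0)) : ∃ n, tr0 X t n = 0 := by
  let F : ULift.{u} ℕ → DerivedCategory (ModuleCat.{u} R) := fun i => X i.down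
  let c : Cofan F := colimit.cocone _
  let hc : IsColimit c := colimit.isColimit _
  let s : c.pt ⟶ c.pt := Cofan.IsColimit.desc hc (fun i => t i.down ≫ c.inj ⟨i.down+1⟩)
  have hs : ∀ i, c.inj i ≫ s = t i.down ≫ c.inj ⟨i.down+1⟩ := fun i => Cofan.IsColimit.fac hc _ i
  haveI : IsIso (𝟙 _ - s) := tower_iso X t (fun n k z => ⟨1, by
    have : trn X t n 1 = t n := Category.id_comp _
    rw [this]; exact h n k z⟩) hc s hs
  have hs0 : s ≫ cproj hc ⟨0⟩ = 0 := by
    refine Cofan.IsColimit.hom_ext hc _ _ fun i => ?_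
    rw [reassoc_of% (hs i), inj_cproj_ne hc (by intro h; simpa using congrArg ULift.down h), comp_zero, comp_zero]
  have hs1 : ∀ n, s ≫ cproj hc ⟨n+1⟩ = cproj hc ⟨n⟩ ≫ t n := by
    intro n
    refine Cofan.IsColimit.hom_ext hc _ _ fun i => ?_
    rw [reassoc_of% (hs i)]
    by_cases hi : i = ⟨n⟩
    · subst hi
      refine (congrArg (t n ≫ ·) (inj_cproj hc _)).trans ?_
      refine Eq.trans ?_ (Category.assoc _ _ _)
      refine Eq.trans ?_ (congrArg (· ≫ t n) (inj_cproj hc _)).symm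
      exact (Category.comp_id _).trans (Category.id_comp _).symm
    · rw [inj_cproj_ne hc (fun h => hi (by cases i; simpa using congrArg ULift.down h)), ← Category.assoc, inj_cproj_ne hc hi, comp_zero, zero_comp]
  let b : X 0 ⟶ c.pt := c.inj ⟨0⟩ ≫ inv (𝟙 _ - s)
  have hb : b - b ≫ s = c.inj ⟨0⟩ := by
    have : b ≫ (𝟙 _ - s) = c.inj ⟨0⟩ := by 
      change (c.inj ⟨0⟩ ≫ inv (𝟙 _ - s)) ≫ (𝟙 _ - s) = _
      rw [Category.assoc, IsIso.inv_hom_id, Category.comp_id]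
    rw [← this, Preadditive.comp_sub, Category.comp_id]
  have hb' : b = c.inj ⟨0⟩ + b ≫ s := by rw [← hb]; abel
  have hn : ∀ n, b ≫ cproj hc ⟨n⟩ = tr0 X t n := by
    intro n
    induction n with
    | zero => 
      rw [hb', Preadditive.add_comp, Category.assoc, hs0, comp_zero, add_zero]
      exact inj_cproj hc ⟨0⟩
    | succ n ih =>
      rw [hb', Preadditive.add_comp, Category.assoc, hs1, inj_cproj_ne hc (by intro h; simpa using congrArg ULift.down h), zero_add]
      rw [reassoc_of% ih]; rfl
  obtain ⟨u, hu⟩ := hx _ F c hc b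
  obtain ⟨⟨n⟩, hnu⟩ := Infinite.exists_notMem_finset u
  refine ⟨n, ?_⟩
  rw [← hn, hu, Preadditive.sum_comp]
  refine Finset.sum_eq_zero fun i hi => ?_
  have hne : i ≠ ⟨n⟩ := fun h => hnu (by rw [← h]; exact hi)
  rw [Category.assoc, inj_cproj_ne hc hne, comp_zero]

lemma Cpt.summand {x : DerivedCategory (ModuleCat.{u} R)} (hx : Cpt x) : ∃ (c : DerivedCategory (ModuleCat.{u} R)) (i : x ⟶ c) (p : c ⟶ x), 
    Perf c ∧ i ≫ p = 𝟙 x := by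
  choose N T hN hK using fun Y : DerivedCategory (ModuleCat.{u} R) => step_ex Y
  let X : ℕ → DerivedCategory (ModuleCat.{u} R) := fun n => Nat.rec x (fun _ Y => N Y) n
  let t : ∀ n, X n ⟶ X (n+1) := fun n => T (X n)
  obtain ⟨n, hn⟩ := tower_fin X t (fun n => hN (X n)) hx
  obtain ⟨y, g, ⟨c, i, h, hT, hc⟩, hg⟩ := tower_kill X t (fun n => hK (X n)) n x (𝟙 x) hx ((congrArg (𝟙 x ≫ ·) hn).trans comp_zero)
  obtain ⟨p, hp⟩ := yon2 hT (𝟙 x) hg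
  exact ⟨c, i, p, hc, hp.symm⟩

lemma Cpt.perf {x : DerivedCategory (ModuleCat.{u} R)} (hx : Cpt x) : ∃ c' : DerivedCategory (ModuleCat.{u} R), 
    Perf c' ∧ ∀ L : Set (DerivedCategory (ModuleCat.{u} R)), IsLocalizingSub.{u} L → (c' ∈ L ↔ x ∈ L) := by
  obtain ⟨c, i, p, hc, hip⟩ := hx.summand
  obtain ⟨c', a, b, hT'⟩ := distinguished_cocone_triangle (𝟙 c - p ≫ i)
  refine ⟨c', Perf.cone hT' hc hc, fun L hL => ⟨fun h => ?_, fun h => ?_⟩⟩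
  · obtain ⟨p', hp'⟩ := yon2 hT' p (by rw [Preadditive.sub_comp, Category.assoc, hip]; simp)
    exact hL.retract (i ≫ a) p' (by rw [Category.assoc, ← hp', hip]) h
  · obtain ⟨y, q, h', hT⟩ := distinguished_cocone_triangle i
    have hi : i ≫ (𝟙 c - p ≫ i) = 0 := by rw [Preadditive.comp_sub, reassoc_of% hip]; simp
    obtain ⟨r, hr⟩ := yon2 hT _ hi
    have hh : h' = 0 := by
      have := tz31 hT
      have h2 : h' ≫ (i ≫ p)⟦(1:ℤ)⟧' = 0 := by rw [Functor.map_comp, reassoc_of% this, zero_comp]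
      rw [hip, CategoryTheory.Functor.map_id, Category.comp_id] at h2
      exact h2
    have hrq : r ≫ q = 𝟙 y := by
      have h1 : q ≫ (r ≫ q - 𝟙 y) = 0 := by
        rw [Preadditive.comp_sub, ← Category.assoc, ← hr, Preadditive.sub_comp, Category.assoc, tz12 hT]; simp
      obtain ⟨k, hk⟩ := yon3 hT _ h1
      rw [hh, zero_comp] at hk
      exact sub_eq_zero.1 hk
    have hq : CIn L q := ⟨_, _, _, rot_of_distTriang _ hT, hL.shift_mem 1 h⟩
    have hr' : CIn L r := hL.CIn_left (g := q) (by rw [hrq]; exact hL.CIn_id _) hq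
    have := hL.CIn_comp hq hr'
    rw [← hr] at this
    exact hL.cone_of_CIn this hT'
end


section
variable {R : Type u} [CommRing R] [HasDerivedCategory.{w'} (ModuleCat.{u} R)]

lemma kos_triangle (f : R) (l : List R) : ∃ (g : koszulD R l ⟶ koszulD R (f :: l)) (h : koszulD R (f :: l) ⟶ (koszulD R l)⟦(1:ℤ)⟧), 
    Triangle.mk (f • 𝟙 (koszulD R l)) g h ∈ distinguishedTriangles := by
  have h1 := DerivedCategory.mappingCone_triangle_distinguished (f • 𝟙 (koszulCx R l))
  have h2 : DerivedCategory.Q.map (f • 𝟙 (koszulCx R l)) = f • 𝟙 (koszulD R l) := by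
    rw [CategoryTheory.Functor.map_smul, CategoryTheory.Functor.map_id]; rfl
  rw [← h2]
  exact ⟨_, _, h1⟩

lemma kos_Perf (l : List R) : Perf (koszulD R l) := by
  induction l with
  | nil => exact Perf_RR 0
  | cons f l ih => 
    obtain ⟨g, h, hT⟩ := kos_triangle f l
    exact Perf.cone hT ih ih

lemma kos_Cpt (l : List R) : Cpt (koszulD R l) := by
  induction l with
  | nil => exact Cpt_RR 0
  | cons f l ih => 
    obtain ⟨g, h, hT⟩ := kos_triangle f l
    exact Cpt.cone hT (ih.shift 1) ih

lemma Tors.right {x y z : DerivedCategory (ModuleCat.{u} R)} {p : x ⟶ y} {c : y ⟶ z} {h : z ⟶ x⟦(1:ℤ)⟧}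
    (hT : Triangle.mk p c h ∈ distinguishedTriangles) {r : R} (hx : Tors r x) (hy : Tors r y) : Tors r z := by
  intro k w
  obtain ⟨δ, h3, h4, h5, h6⟩ := HH_ex hT k (k+1) rfl
  obtain ⟨n, hn⟩ := hx (k+1) (δ w)
  obtain ⟨v, hv⟩ := h3 (r^n • w) ((map_smul δ.hom _ w).trans hn)
  obtain ⟨m, hm⟩ := hy k v
  refine ⟨m + n, ?_⟩
  rw [pow_add, mul_smul, ← hv, ← HH_smul_elt, hm]
  exact map_zero ((HH R k).map c).hom

lemma kos_Tors (l : List R) (r : R) (hr : r ∈ l) : Tors r (koszulD R l) := by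
  induction l with
  | nil => simp at hr
  | cons f l ih => 
    obtain ⟨g, h, hT⟩ := kos_triangle f l
    rcases List.mem_cons.1 hr with rfl | hr
    · refine Tors_cone hT (𝟙 _) r 1 ?_ ?_
      · intro k z
        rw [HH_smul, HH_id, HH_id, pow_one]
      · intro k z
        rw [HH_smul, HH_id, HH_id, pow_one]
    · exact (ih hr).right hT (ih hr)

/-- radical of annihilator -/
noncomputable def annI {X : DerivedCategory (ModuleCat.{u} R)} {k : ℤ} (z : (HH R k).obj X) : Ideal R := LinearMap.ker (LinearMap.toSpanSingleton R _ z)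

lemma mem_annI {X : DerivedCategory (ModuleCat.{u} R)} {k : ℤ} (z : (HH R k).obj X) (r : R) : r ∈ annI z ↔ r • z = 0 := by
  unfold annI; rw [LinearMap.mem_ker, LinearMap.toSpanSingleton_apply]

lemma mem_rad_annI {X : DerivedCategory (ModuleCat.{u} R)} {r : R} (h : Tors r X) {k : ℤ} (z : (HH R k).obj X) : r ∈ (annI z).radical := by
  obtain ⟨n, hn⟩ := h k z
  exact ⟨n, (mem_annI z _).2 hn⟩

lemma kos_Tors' (l : List R) (r : R) (hr : r ∈ Ideal.span {r | r ∈ l}) : Tors r (koszulD R l) := by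
  intro k z
  have : Ideal.span {r | r ∈ l} ≤ (annI z).radical := Ideal.span_le.2 fun r hr => mem_rad_annI (kos_Tors l r hr) z
  obtain ⟨n, hn⟩ := this hr
  exact ⟨n, (mem_annI z _).1 hn⟩

lemma Perf.bdd {X : DerivedCategory (ModuleCat.{u} R)} (h : Perf X) : ∃ a b : ℤ, ∀ n, (n < a ∨ b < n) → HZ X n := by
  obtain ⟨K, ⟨-, -, a, b, hab⟩, ⟨e⟩⟩ := h
  exact ⟨a, b, fun n hn => (HZ_Q (mzero_of_isZero (hab n hn))).iso e⟩

lemma mem_of_tors {L : Set (DerivedCategory (ModuleCat.{u} R))} (hL : IsLocalizingSub.{u} L) {X : DerivedCategory (ModuleCat.{u} R)} (h : Perf X)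
    {J : Ideal R} (hfg : J.FG) (hJ : smod R (ModuleCat.of R (R ⧸ J)) ∈ L) (hT : ∀ r ∈ J, Tors r X) : X ∈ L := by
  obtain ⟨a, b, hab⟩ := h.bdd
  refine bdd_mem hL a b (fun k hk => hab k (Or.inl hk)) (fun k hk => hab k (Or.inr hk)) (fun k z => ?_)
  refine ⟨annI z, smod_quot_rad hL hJ hfg (fun r hr => mem_rad_annI (hT r hr) z), fun r hr => (mem_annI z r).1 hr⟩

lemma span_list_fg (l : List R) : (Ideal.span {r | r ∈ l}).FG := by
  classical
  exact ⟨l.toFinset, by congr 1; ext; simp⟩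

lemma fg_list {J : Ideal R} (h : J.FG) : ∃ l : List R, J = Ideal.span {r | r ∈ l} := by
  obtain ⟨s, rfl⟩ := h
  exact ⟨s.toList, by congr 1; ext; simp⟩

lemma kos_mem {L : Set (DerivedCategory (ModuleCat.{u} R))} (hL : IsLocalizingSub.{u} L) (l : List R) 
    (h : smod R (ModuleCat.of R (R ⧸ Ideal.span {r | r ∈ l})) ∈ L) : koszulD R l ∈ L := 
  mem_of_tors hL (kos_Perf l) (span_list_fg l) h (kos_Tors' l)

/-- local objects at p -/
def PL (p : Ideal R) (Y : DerivedCategory (ModuleCat.{u} R)) : Prop := ∀ r ∉ p, IsIso (r • 𝟙 Y)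

lemma PL.shift {p : Ideal R} {Y : DerivedCategory (ModuleCat.{u} R)} (h : PL p Y) (n : ℤ) : PL p (Y⟦n⟧) := by
  intro r hr
  haveI := h r hr
  have : r • 𝟙 (Y⟦n⟧) = (r • 𝟙 Y)⟦n⟧' := by
    rw [CategoryTheory.Functor.map_smul, CategoryTheory.Functor.map_id]
  rw [this]
  infer_instance

/-- orthogonal class -/
def orthP (p : Ideal R) : Set (DerivedCategory (ModuleCat.{u} R)) := {X | ∀ Y, PL p Y → ∀ v : X ⟶ Y, v = 0}

lemma orthP_loc (p : Ideal R) : IsLocalizingSub.{u} (orthP (R := R) p) := by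
  have hsh : ∀ (n : ℤ) {x : DerivedCategory (ModuleCat.{u} R)}, x ∈ orthP p → x⟦n⟧ ∈ orthP p := by
    intro n x hx Y hY v
    let adj := (shiftEquiv (DerivedCategory (ModuleCat.{u} R)) n).toAdjunction
    have h0 : adj.homEquiv x Y v = 0 := hx _ (hY.shift (-n)) _
    have h1 : v = (adj.homEquiv x Y).symm 0 := ((adj.homEquiv x Y).symm_apply_apply v).symm.trans (congrArg _ h0)
    rw [h1, Adjunction.homEquiv_counit]
    exact (congrArg (· ≫ _) (Functor.map_zero (shiftFunctor _ n) _ _)).trans zero_comp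
  refine ⟨fun Y _ v => (isZero_zero _).eq_of_src _ _, fun e hx Y hY v => ?_, hsh, fun T hT h1 h2 Y hY v => ?_, fun f c hc h Y hY v => ?_⟩
  · rw [← cancel_epi e.hom, hx Y hY (e.hom ≫ v), comp_zero]
  · obtain ⟨k, hk⟩ := yon3 (f := T.mor₁) (g := T.mor₂) (h := T.mor₃) hT v (h2 Y hY _)
    rw [hk, hsh 1 h1 Y hY k, comp_zero]
  · exact Cofan.IsColimit.hom_ext hc _ _ fun i => (h i Y hY (c.inj i ≫ v)).trans comp_zero.symm

lemma Tors.orthP {p : Ideal R} {X : DerivedCategory (ModuleCat.{u} R)} {r : R} (h : Tors r X) (hr : r ∉ p) : X ∈ orthP p := 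
  fun Y hY v => h.hom_zero (hY r hr) v

section
variable (p : Ideal R) [p.IsPrime]
/-- residue field object -/
noncomputable def kap : DerivedCategory (ModuleCat.{u} R) := smod R (ModuleCat.of R p.ResidueField)

lemma kap_PL : PL p (kap p) := by
  intro r hr
  have h0 : algebraMap R p.ResidueField r ≠ 0 := fun h => hr (Ideal.algebraMap_residueField_eq_zero.1 h)
  let g : p.ResidueField →ₗ[R] p.ResidueField := LinearMap.mulLeft R (algebraMap R p.ResidueField r)⁻¹
  have e : r • 𝟙 (kap p) = sM (r • (LinearMap.id : p.ResidueField →ₗ[R] p.ResidueField)) := by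
    rw [sM_smul, sM_id]; rfl
  have h1 : (r • (LinearMap.id : p.ResidueField →ₗ[R] p.ResidueField)) ∘ₗ g = LinearMap.id := by
    ext x; exact (Algebra.smul_def _ _).trans (mul_inv_cancel_left₀ h0 x)
  have h2 : g ∘ₗ (r • (LinearMap.id : p.ResidueField →ₗ[R] p.ResidueField)) = LinearMap.id := by
    ext x; exact (congrArg ((algebraMap R p.ResidueField r)⁻¹ * ·) (Algebra.smul_def r x)).trans (inv_mul_cancel_left₀ h0 x)
  rw [e]
  exact ⟨sM g, (sM_comp _ _).trans ((congrArg sM h2).trans sM_id), (sM_comp _ _).trans ((congrArg sM h1).trans sM_id)⟩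

lemma kap_kill {r : R} (hr : r ∈ p) : r • 𝟙 (kap p) = 0 := by
  have e : r • 𝟙 (kap p) = sM (r • (LinearMap.id : p.ResidueField →ₗ[R] p.ResidueField)) := by
    rw [sM_smul, sM_id]; rfl
  rw [e]
  refine Eq.trans (congrArg _ ?_) sM_zero
  ext x
  simp [Algebra.smul_def, Ideal.algebraMap_residueField_eq_zero.2 hr]

lemma kos_kap (l : List R) (hl : ∀ r ∈ l, r ∈ p) : ∃ v : koszulD R l ⟶ kap p, v ≠ 0 := by
  induction l with
  | nil =>
    let z : (HH R 0).obj (kap p) := (H0e R p.ResidueField).inv (1 : p.ResidueField)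
    have hz : (H0e R p.ResidueField).hom z = (1 : p.ResidueField) := 
      congrArg (fun t => t.hom (1 : p.ResidueField)) (H0e R p.ResidueField).inv_hom_id
    obtain ⟨a, ha⟩ := RR_ex (kap p) 0 z
    refine ⟨a, fun h => ?_⟩
    have ha' : a = 0 := h
    rw [ha', HH_zero] at ha
    rw [← ha] at hz
    have := (map_zero (H0e R p.ResidueField).hom.hom).symm.trans hz
    exact zero_ne_one this
  | cons f l ih =>
    obtain ⟨v, hv⟩ := ih fun r hr => hl r (List.mem_cons_of_mem _ hr)
    obtain ⟨g, h, hT⟩ := kos_triangle f l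
    have h0 : (f • 𝟙 (koszulD R l)) ≫ v = 0 := by
      rw [Linear.smul_comp, Category.id_comp, ← Category.comp_id v, ← Linear.comp_smul, kap_kill p (hl f (by simp)), comp_zero]
    obtain ⟨k, hk⟩ := yon2 hT v h0
    exact ⟨k, fun h => hv (by rw [hk, h, comp_zero])⟩

lemma quot_kap {I : Ideal R} (h : I ≤ p) : ∃ v : smod R (ModuleCat.of R (R ⧸ I)) ⟶ kap p, v ≠ 0 := by
  let f : (R ⧸ I) →ₗ[R] p.ResidueField := Submodule.liftQ I (Algebra.linearMap R p.ResidueField) (fun r hr => 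
    Ideal.algebraMap_residueField_eq_zero.2 (h hr))
  refine ⟨sM f, fun h0 => ?_⟩
  let z : (HH R 0).obj (smod R (ModuleCat.of R (R ⧸ I))) := (H0e R (R ⧸ I)).inv (Submodule.Quotient.mk 1 : R ⧸ I)
  have hz : (H0e R (R ⧸ I)).hom z = (Submodule.Quotient.mk 1 : R ⧸ I) := 
    congrArg (fun t => t.hom (Submodule.Quotient.mk 1 : R ⧸ I)) (H0e R (R ⧸ I)).inv_hom_id
  have h1 := H0e_nat f z
  have h0' : sM f = 0 := h0
  rw [h0', HH_zero, hz] at h1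
  have h2 : f (Submodule.Quotient.mk 1) = 1 := by
    change Algebra.linearMap R p.ResidueField 1 = 1
    simp
  rw [h2] at h1
  have := (map_zero (H0e R p.ResidueField).hom.hom).symm.trans h1
  exact zero_ne_one this
end

lemma kos_mem' {L : Set (DerivedCategory (ModuleCat.{u} R))} (hL : IsLocalizingSub.{u} L) (l : List R) 
    (h : koszulD R l ∈ L) : smod R (ModuleCat.of R (R ⧸ Ideal.span {r | r ∈ l})) ∈ L := by
  obtain ⟨J, h1, h2, h3⟩ := (kos_Perf l).main hL h
  refine smod_quot_rad hL h2 h1 (fun r hr => ?_)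
  rw [Ideal.radical_eq_sInf]
  refine Ideal.mem_sInf.2 ?_
  rintro p ⟨hp, hpp⟩
  by_contra hrp
  haveI : p.IsPrime := hpp
  obtain ⟨v, hv⟩ := kos_kap p l (fun r hr => hp (Ideal.subset_span hr))
  exact hv ((h3 r hr).orthP hrp _ (kap_PL p) v)
end


section
variable {R : Type u} [CommRing R] [HasDerivedCategory.{w'} (ModuleCat.{u} R)]

lemma quot_mem_of_cover {L : Set (DerivedCategory (ModuleCat.{u} R))} (hL : IsLocalizingSub.{u} L) (A : Ideal R)
    (hA : PrimeSpectrum.zeroLocus (A : Set R) ⊆ locToHochster R L) : smod R (ModuleCat.of R (R ⧸ A)) ∈ L := by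
  let P : Ideal R → Prop := fun B => A ≤ B → ∃ J : Ideal R, J.FG ∧ smod R (ModuleCat.of R (R ⧸ J)) ∈ L ∧ J ≤ B
  have hP : Ideal.IsOka P := by
    refine ⟨fun _ => ⟨⊤, Ideal.fg_top R, smod_quot_top hL, le_rfl⟩, ?_⟩
    intro I a h1 h2 hI
    obtain ⟨J1, f1, m1, l1⟩ := h1 (hI.trans le_sup_left)
    obtain ⟨J2, f2, m2, l2⟩ := h2 (hI.trans Ideal.le_colon)
    refine ⟨J1 * J2, f1.mul f2, smod_quot_mul hL m1 m2, ?_⟩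
    refine (Ideal.mul_mono l1 l2).trans ?_
    rw [Ideal.sup_mul, sup_le_iff]
    refine ⟨Ideal.mul_le_left, ?_⟩
    rw [Ideal.span_singleton_mul_le_iff]
    intro z hz
    have := Ideal.mem_colon_span_singleton.1 hz
    rwa [mul_comm] at this
  have hall : ∀ B, P B := by
    refine hP.forall_of_forall_prime' ?_ ?_
    · intro C hC hch I0 hI0 hs
      have hA0 : A ≤ I0 := by
        by_contra hn
        exact hC hI0 (fun h => absurd h hn)
      obtain ⟨J, f, m, l⟩ := hs (hA0.trans (le_sSup hI0))
      have hc := (Submodule.fg_iff_compact J).1 f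
      rw [CompleteLattice.isCompactElement_iff_le_of_directed_sSup_le] at hc
      obtain ⟨I, hI, hJI⟩ := hc C ⟨I0, hI0⟩ hch.directedOn l
      exact ⟨I, hI, fun _ => ⟨J, f, m, hJI⟩⟩
    · intro q hq hAq
      have h := hA (show (⟨q, hq⟩ : PrimeSpectrum R) ∈ PrimeSpectrum.zeroLocus (A : Set R) from hAq)
      simp only [locToHochster, Set.mem_iUnion] at h
      obtain ⟨I, ⟨hI1, hI2⟩, hI⟩ := h
      exact ⟨I, hI1, hI2, hI⟩
  obtain ⟨J, -, m, l⟩ := hall A le_rfl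
  exact smod_quot_le hL m l

lemma IsCGLoc.loc {L : Set (DerivedCategory (ModuleCat.{u} R))} (h : IsCGLoc R L) : IsLocalizingSub.{u} L := by
  obtain ⟨S, -, rfl⟩ := h
  exact isLocalizingSub_Loc S

lemma h2l_loc (U : Set (PrimeSpectrum R)) : IsLocalizingSub.{u} (hochsterToLoc R U) := isLocalizingSub_Loc _

lemma h2l_mem {U : Set (PrimeSpectrum R)} {l : List R} (h : PrimeSpectrum.zeroLocus ((Ideal.span {r | r ∈ l} : Ideal R) : Set R) ⊆ U) :
    koszulD R l ∈ hochsterToLoc R U := subset_Loc _ ⟨l, h, rfl⟩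

lemma h2l_mono {U U' : Set (PrimeSpectrum R)} (h : U ⊆ U') : hochsterToLoc R U ⊆ hochsterToLoc R U' := by
  refine Loc_mono ?_
  rintro x ⟨l, hl, rfl⟩
  exact ⟨l, hl.trans h, rfl⟩

lemma sub_l2h {L : Set (DerivedCategory (ModuleCat.{u} R))} {I : Ideal R} (hI : I.FG) (h : smod R (ModuleCat.of R (R ⧸ I)) ∈ L) :
    PrimeSpectrum.zeroLocus (I : Set R) ⊆ locToHochster R L := by
  intro q hq
  simp only [locToHochster, Set.mem_iUnion]
  exact ⟨I, ⟨hI, h⟩, hq⟩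

lemma l2h_mono {L L' : Set (DerivedCategory (ModuleCat.{u} R))} (h : L ⊆ L') : locToHochster R L ⊆ locToHochster R L' := by
  intro q hq
  simp only [locToHochster, Set.mem_iUnion] at hq
  obtain ⟨I, ⟨hI1, hI2⟩, hI⟩ := hq
  exact sub_l2h hI1 (h hI2) hI

lemma h2l_l2h {L : Set (DerivedCategory (ModuleCat.{u} R))} (h : IsCGLoc R L) : hochsterToLoc R (locToHochster R L) = L := by
  have hL := h.loc
  refine Set.Subset.antisymm (Loc_le hL ?_) ?_
  · rintro x ⟨l, hl, rfl⟩
    exact kos_mem hL l (quot_mem_of_cover hL _ hl)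
  · obtain ⟨S, hS, rfl⟩ := h
    refine Loc_le (h2l_loc _) fun x hx => ?_
    obtain ⟨c, hc, hcx⟩ := (Cpt_of_isCompact (hS x hx)).perf
    obtain ⟨J, f, m, t⟩ := hc.main hL ((hcx _ hL).2 (subset_Loc S hx))
    obtain ⟨l, rfl⟩ := fg_list f
    exact (hcx _ (h2l_loc _)).1 (mem_of_tors (h2l_loc _) hc f (kos_mem' (h2l_loc _) l (h2l_mem (sub_l2h f m))) t)

lemma l2h_h2l {U : Set (PrimeSpectrum R)} (h : IsHochsterOpen R U) : locToHochster R (hochsterToLoc R U) = U := by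
  refine Set.Subset.antisymm ?_ ?_
  · intro q hq
    simp only [locToHochster, Set.mem_iUnion] at hq
    obtain ⟨I, ⟨hI1, hI2⟩, hI⟩ := hq
    by_contra hqU
    have hsub : hochsterToLoc R U ⊆ orthP q.asIdeal := by
      refine Loc_le (orthP_loc _) ?_
      rintro x ⟨l, hl, rfl⟩
      have hn : ¬ (Ideal.span {r | r ∈ l} ≤ q.asIdeal) := fun hn => hqU (hl hn)
      obtain ⟨r, hr, hrq⟩ := SetLike.not_le_iff_exists.1 hn
      exact (kos_Tors' l r hr).orthP hrq
    obtain ⟨v, hv⟩ := quot_kap q.asIdeal (I := I) hI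
    exact hv (hsub hI2 _ (kap_PL q.asIdeal) v)
  · obtain ⟨𝒮, hS, rfl⟩ := h
    refine Set.iUnion₂_subset fun I hI => ?_
    obtain ⟨l, hl⟩ := fg_list (hS I hI)
    have hsub : PrimeSpectrum.zeroLocus (I : Set R) ⊆ ⋃ I ∈ 𝒮, PrimeSpectrum.zeroLocus (I : Set R) := 
      Set.subset_biUnion_of_mem (u := fun I : Ideal R => PrimeSpectrum.zeroLocus (I : Set R)) hI
    refine sub_l2h (hS I hI) ?_
    rw [hl] at hsub ⊢
    exact kos_mem' (h2l_loc _) l (h2l_mem hsub)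

lemma l2h_open (L : Set (DerivedCategory (ModuleCat.{u} R))) : IsHochsterOpen R (locToHochster R L) := 
  ⟨{I : Ideal R | I.FG ∧ smod R (ModuleCat.of R (R ⧸ I)) ∈ L}, fun _ h => h.1, rfl⟩

lemma h2l_cg (U : Set (PrimeSpectrum R)) : IsCGLoc R (hochsterToLoc R U) := by
  refine ⟨_, ?_, rfl⟩
  rintro x ⟨l, -, rfl⟩
  exact (kos_Cpt l).isCompact
end


end Helpers

section Statement0

variable (R : Type u) [CommRing R] [HasDerivedCategory.{w'} (ModuleCat.{u} R)]

/-- Theorem (affine Hopkins–Neeman–Thomason): the assignments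
`L ↦ ⋃ {V(I) : I f.g., R/I ∈ L}` and `U ↦ Loc{K(I) : I f.g., V(I) ⊆ U}` are
mutually inverse, inclusion-preserving bijections between the compactly
generated localizing subcategories of `D(R)` and the Hochster open subsets of
`Spec R`. -/
theorem cgLoc_hochster_bijection :
    (∀ L, IsCGLoc R L → IsHochsterOpen R (locToHochster R L)) ∧
    (∀ U, IsHochsterOpen R U → IsCGLoc R (hochsterToLoc R U)) ∧
    (∀ L, IsCGLoc R L → hochsterToLoc R (locToHochster R L) = L) ∧
    (∀ U, IsHochsterOpen R U → locToHochster R (hochsterToLoc R U) = U) ∧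
    (∀ L L', IsCGLoc R L → IsCGLoc R L' →
      (L ⊆ L' ↔ locToHochster R L ⊆ locToHochster R L')) ∧
    (∀ U U', IsHochsterOpen R U → IsHochsterOpen R U' →
      (U ⊆ U' ↔ hochsterToLoc R U ⊆ hochsterToLoc R U')) := by
  refine ⟨fun L _ => l2h_open L, fun U _ => h2l_cg U, fun L h => h2l_l2h h, fun U h => l2h_h2l h, 
    fun L L' h h' => ⟨l2h_mono, fun hh => ?_⟩, fun U U' h h' => ⟨h2l_mono, fun hh => ?_⟩⟩
  · have := h2l_mono hh
    rwa [h2l_l2h h, h2l_l2h h'] at this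
  · have := l2h_mono hh
    rwa [l2h_h2l h, l2h_h2l h'] at this

end Statement0
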